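/- Assume f satisfies (f_reg), (f_eq), (f_0), and in the case R1 = 0 assume additionally either (f_subl) or (f_subc). Suppose the limit C₁ = lim_{s→1} f(s)/(|s-1|^{p-2}(s-1)) exists in [0,+∞], and suppose that for some integer k ≥ 1 there exist λ ∈ [0,∞) with C₁ > λ and a not-identically-zero C¹ function w : [R1,R2] → ℝ with w'(R1) = w'(R2) = 0, such that r ↦ r^{N-1} φ_p(w'(r)) is continuous on [R1,R2], differentiable on (R1,R2], with derivative -λ r^{N-1} φ_p(w(r)) there, and such that w has exactly k zeros in (R1,R2). Then there exist 2k pairwise distinct non-constant radial solutions u_1, …, u_{2k} of the Neumann problem on [R1,R2] such that: (i) u_j(R1) > 1 for j = 1,…,k; (ii) u_j(R1) < 1 for j = k+1,…,2k; (iii) for each j = 1,…,k, both sets {r ∈ (R1,R2) : u_j(r) = 1} and {r ∈ (R1,R2) : u_{j+k}(r) = 1} have exactly j elements. -/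

import Mathlib

open Real Set Filter Topology

noncomputable def phip (p s : ℝ) : ℝ := |s| ^ (p - 2) * s

def Freg (f : ℝ → ℝ) : Prop :=
  ContinuousOn f (Ici 0) ∧ ContDiffOn ℝ 1 f (Ioi 0)

def Feq (f : ℝ → ℝ) : Prop :=
  f 0 = 0 ∧ f 1 = 0 ∧ (∀ s : ℝ, 0 < s → s < 1 → f s < 0) ∧ (∀ s : ℝ, 1 < s → 0 < f s)

def Fzero (p : ℝ) (f : ℝ → ℝ) : Prop :=
  ∃ c : ℝ, ∀ᶠ s in 𝓝[>] (0:ℝ), c ≤ f s / s ^ (p - 1)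

noncomputable def pstar (p : ℝ) (N : ℕ) : EReal :=
  if p < (N:ℝ) then (((N:ℝ) * p / ((N:ℝ) - p) : ℝ) : EReal) else ⊤

noncomputable def fstar (f : ℝ → ℝ) (s : ℝ) : ℝ := sSup (f '' Icc 1 s)

noncomputable def Fint (f : ℝ → ℝ) (s : ℝ) : ℝ := ∫ σ in (1:ℝ)..s, f σ

def Fsubl (p : ℝ) (f : ℝ → ℝ) : Prop :=
  ∃ M : ℝ, 0 < M ∧ ∀ ε > 0, ∀ᶠ s in atTop, f s / s ^ (p - 1) ≤ M + ε

def FsubcWith (p : ℝ) (N : ℕ) (f : ℝ → ℝ) (η : ℝ) : Prop :=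
  (∀ c : ℝ, ∃ᶠ s in atTop, c < f s / s ^ (p - 1)) ∧
  0 < η ∧ η < 1 ∧
  ∃ L : ℝ, (L : EReal) < pstar p N ∧
    ∀ᶠ s in atTop, fstar f s * s / Fint f (η * s) ≤ L

def Fsubc (p : ℝ) (N : ℕ) (f : ℝ → ℝ) : Prop := ∃ η : ℝ, FsubcWith p N f η

/-- A radial solution of the Neumann problem on `[R1,R2]`. -/
def NeumannSol (p : ℝ) (N : ℕ) (R1 R2 : ℝ) (f u : ℝ → ℝ) : Prop :=
  (∀ x ∈ Icc R1 R2, DifferentiableAt ℝ u x) ∧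
  ContinuousOn (deriv u) (Icc R1 R2) ∧
  (∀ x ∈ Icc R1 R2, 0 < u x) ∧
  deriv u R1 = 0 ∧ deriv u R2 = 0 ∧
  ContinuousOn (fun x => x ^ (N - 1) * phip p (deriv u x)) (Icc R1 R2) ∧
  ∀ x ∈ Ioc R1 R2,
    HasDerivAt (fun t => t ^ (N - 1) * phip p (deriv u t)) (-(x ^ (N - 1)) * f (u x)) x

noncomputable def fhat (f : ℝ → ℝ) (s : ℝ) : ℝ := if 0 ≤ s then f s else 0

noncomputable def Fhat (f : ℝ → ℝ) (s : ℝ) : ℝ := ∫ σ in (1:ℝ)..s, fhat f σ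

/-- A solution of the Cauchy problem with datum `d`, for the nonlinearity `g`. -/
def CauchySol (p : ℝ) (N : ℕ) (R1 R2 : ℝ) (g u : ℝ → ℝ) (d : ℝ) : Prop :=
  (∀ x ∈ Icc R1 R2, DifferentiableAt ℝ u x) ∧
  ContinuousOn (deriv u) (Icc R1 R2) ∧
  u R1 = d ∧ deriv u R1 = 0 ∧
  ContinuousOn (fun x => x ^ (N - 1) * phip p (deriv u x)) (Icc R1 R2) ∧
  ∀ x ∈ Ioc R1 R2,
    HasDerivAt (fun t => t ^ (N - 1) * phip p (deriv u t)) (-(x ^ (N - 1)) * g (u x)) x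

noncomputable def rOne (R1 R2 : ℝ) (u : ℝ → ℝ) : ℝ :=
  sSup {x | x ∈ Icc R1 R2 ∧ ∀ s ∈ Ico R1 x, 0 < u s}

noncomputable def rZero (R2 η d : ℝ) (u : ℝ → ℝ) : ℝ :=
  sSup {x | x ∈ Icc 0 R2 ∧ ∀ s ∈ Ico 0 x, η * d < u s}

noncomputable def energy (p : ℝ) (f u : ℝ → ℝ) (x : ℝ) : ℝ :=
  |deriv u x| ^ p / (p / (p - 1)) + Fhat f (u x)

def NonConstOn (R1 R2 : ℝ) (u : ℝ → ℝ) : Prop :=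
  ∃ x ∈ Icc R1 R2, ∃ x' ∈ Icc R1 R2, u x ≠ u x'

def DistinctOn (R1 R2 : ℝ) (u v : ℝ → ℝ) : Prop :=
  ∃ x ∈ Icc R1 R2, u x ≠ v x

noncomputable def nOverPstar (p : ℝ) (N : ℕ) : ℝ :=
  if p < (N:ℝ) then ((N:ℝ) - p) / p else 0

/-!
Shooting from `u(R1) = d`, `u'(R1) = 0`, with `f` frozen above a level `D` that the solutions of
interest do not reach. Near the equilibrium `u = 1` put `u - 1 = σ e^ℓ cos θ` and
`r^(N-1) φ_p(u') = -σ e^ℓ sin θ`, with `σ = ±1` the side on which `d` lies and `θ(R1) = 0`. The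
angle can only increase through the odd multiples of `π/2`, so if `θ(R2) = j π`, then `u` solves
the Neumann problem and crosses `1` exactly `j` times.

For `d` close to `1`, Picone's identity compares `u - 1` with the eigenfunction `w`: between
consecutive zeros of `w` the angle gains `π`, and the Neumann conditions give `θ(R2) > k π`. At the
other end `θ(R2) < π`: for `σ = -1` and `d = 0` the solution stays nonpositive, and for `σ = 1` and
`d` large `u` is decreasing on the whole interval, by an energy estimate if `R1 > 0` or `f` is
bounded by a multiple of `s^(p-1)`, and by a Pohozaev estimate if `R1 = 0` and `f` is subcritical.
Hence on each side of `1` every value `j π` with `1 ≤ j ≤ k` is attained.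

Cauchy problems for merely continuous `f` need not be uniquely solvable, so continuity in `d` is
not available. It is replaced by an intermediate value theorem for the set of all solutions, proved
by approximation with delayed equations, whose flow is continuous.
-/

section Monotonicity

variable {f f' : ℝ → ℝ} {a b : ℝ}

theorem le_of_hasDerivAt_nonneg (hab : a ≤ b) (hf : ContinuousOn f (Icc a b))
    (hf' : ∀ x ∈ Ioo a b, HasDerivAt f (f' x) x) (hf'₀ : ∀ x ∈ Ioo a b, 0 ≤ f' x) :
    f a ≤ f b := by
  refine monotoneOn_of_hasDerivWithinAt_nonneg (convex_Icc a b) hf (f' := f') ?_ ?_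
    (left_mem_Icc.2 hab) (right_mem_Icc.2 hab) hab <;> rw [interior_Icc]
  exacts [fun x hx => (hf' x hx).hasDerivWithinAt, hf'₀]

theorem le_of_hasDerivAt_nonpos (hab : a ≤ b) (hf : ContinuousOn f (Icc a b))
    (hf' : ∀ x ∈ Ioo a b, HasDerivAt f (f' x) x) (hf'₀ : ∀ x ∈ Ioo a b, f' x ≤ 0) :
    f b ≤ f a :=
  neg_le_neg_iff.1 <| le_of_hasDerivAt_nonneg (f := fun x => -f x) hab hf.neg
    (fun x hx => (hf' x hx).neg) fun x hx => neg_nonneg.2 (hf'₀ x hx)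

theorem lt_of_hasDerivAt_pos (hab : a < b) (hf : ContinuousOn f (Icc a b))
    (hf' : ∀ x ∈ Ioo a b, HasDerivAt f (f' x) x) (hf'₀ : ∀ x ∈ Ioo a b, 0 < f' x) :
    f a < f b := by
  refine strictMonoOn_of_hasDerivWithinAt_pos (convex_Icc a b) hf (f' := f') ?_ ?_
    (left_mem_Icc.2 hab.le) (right_mem_Icc.2 hab.le) hab <;> rw [interior_Icc]
  exacts [fun x hx => (hf' x hx).hasDerivWithinAt, hf'₀]

theorem lt_of_hasDerivAt_neg (hab : a < b) (hf : ContinuousOn f (Icc a b))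
    (hf' : ∀ x ∈ Ioo a b, HasDerivAt f (f' x) x) (hf'₀ : ∀ x ∈ Ioo a b, f' x < 0) :
    f b < f a :=
  neg_lt_neg_iff.1 <| lt_of_hasDerivAt_pos (f := fun x => -f x) hab hf.neg
    (fun x hx => (hf' x hx).neg) fun x hx => neg_pos.2 (hf'₀ x hx)

theorem sub_le_mul_sub_of_hasDerivAt_le (hab : a ≤ b) (hf : ContinuousOn f (Icc a b))
    (hf' : ∀ x ∈ Ioo a b, HasDerivAt f (f' x) x) {C : ℝ} (hC : ∀ x ∈ Ioo a b, f' x ≤ C) :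
    f b - f a ≤ C * (b - a) := by
  have hmono := le_of_hasDerivAt_nonpos (f := fun x => f x - C * x) hab (hf.sub (by fun_prop))
    (fun x hx => (hf' x hx).sub (hasDerivAt_const_mul C)) fun x hx => sub_nonpos.2 (hC x hx)
  linarith

end Monotonicity

section Phip

variable {p q : ℝ}

@[simp] theorem phip_zero (p : ℝ) : phip p 0 = 0 := by simp [phip]

theorem phip_neg (p s : ℝ) : phip p (-s) = -phip p s := by simp [phip]

theorem phip_mul (p a b : ℝ) : phip p (a * b) = phip p a * phip p b := by
  rw [phip, phip, phip, abs_mul, mul_rpow (abs_nonneg _) (abs_nonneg _)]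
  ring

theorem phip_of_pos {s : ℝ} (hs : 0 < s) : phip p s = s ^ (p - 1) := by
  rw [phip, abs_of_pos hs, ← rpow_add_one hs.ne']
  ring_nf

theorem phip_of_nonneg (hp : 1 < p) {s : ℝ} (hs : 0 ≤ s) : phip p s = s ^ (p - 1) := by
  rcases hs.eq_or_lt with rfl | h
  · rw [phip_zero, zero_rpow (by linarith)]
  · exact phip_of_pos h

theorem phip_pos {s : ℝ} (hs : 0 < s) : 0 < phip p s := by
  rw [phip_of_pos hs]
  positivity

theorem phip_neg_of_neg {s : ℝ} (hs : s < 0) : phip p s < 0 :=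
  neg_pos.1 (phip_neg p s ▸ phip_pos (neg_pos.2 hs))

theorem abs_phip (hp : 1 < p) (s : ℝ) : |phip p s| = |s| ^ (p - 1) := by
  rw [← phip_of_nonneg hp (abs_nonneg s), phip, phip, abs_mul, abs_abs,
    abs_of_nonneg (rpow_nonneg (abs_nonneg s) _)]

theorem phip_mul_self (hp : 1 < p) (s : ℝ) : phip p s * s = |s| ^ p := by
  have hsq : phip p s * s = phip p |s| * |s| := by
    rw [phip, phip, abs_abs, mul_assoc, mul_assoc, abs_mul_abs_self]
  rw [hsq, phip_of_nonneg hp (abs_nonneg s),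
    ← rpow_add_one' (abs_nonneg s) (by linarith), sub_add_cancel]

theorem hasDerivAt_abs_rpow_div (hp : 1 < p) (x : ℝ) :
    HasDerivAt (fun x : ℝ => |x| ^ p / p) (phip p x) x := by
  have hx : p * |x| ^ (p - 2) * x / p = phip p x := by
    unfold phip
    field_simp
  exact hx ▸ (hasDerivAt_abs_rpow x hp).div_const p

theorem continuous_phip (hp : 1 < p) : Continuous (phip p) := by
  have h : phip p = deriv (fun x : ℝ => ‖x‖ ^ p / p) := by
    ext x
    simpa only [Real.norm_eq_abs] using (hasDerivAt_abs_rpow_div hp x).deriv.symm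
  rw [h]
  exact ((contDiff_norm_rpow (E := ℝ) hp).div_const p).continuous_deriv le_rfl

theorem phip_mono (hp : 1 < p) : Monotone (phip p) := by
  intro x y hxy
  by_cases h : 0 ≤ x ∨ y ≤ 0
  · have key : ∀ {s t : ℝ}, 0 ≤ s → s ≤ t → phip p s ≤ phip p t := fun hs hst => by
      rw [phip_of_nonneg hp hs, phip_of_nonneg hp (hs.trans hst)]
      exact rpow_le_rpow hs hst (by linarith)
    rcases h with hx | hy
    · exact key hx hxy
    · have := key (neg_nonneg.2 hy) (neg_le_neg hxy)
      rwa [phip_neg, phip_neg, neg_le_neg_iff] at this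
  · rw [not_or, not_le, not_le] at h
    exact (phip_neg_of_neg h.1).le.trans (phip_pos h.2).le

theorem phip_phip (h : p.HolderConjugate q) (s : ℝ) : phip p (phip q s) = s := by
  have hexp : (q - 1) * (p - 1) = 1 := by linarith [h.mul_eq_add]
  have key : ∀ s : ℝ, 0 < s → phip p (phip q s) = s := fun s hs => by
    rw [phip_of_pos (phip_pos hs), phip_of_pos hs, ← rpow_mul hs.le, hexp, rpow_one]
  rcases lt_trichotomy s 0 with hs | rfl | hs
  · have := key (-s) (neg_pos.2 hs)
    rwa [phip_neg, phip_neg, neg_inj] at this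
  · simp only [phip_zero]
  · exact key s hs

theorem phip_mul_rpow (h : p.HolderConjugate q) {a M : ℝ} (ha : 0 ≤ a) (hM : 0 ≤ M) :
    phip q (a * M ^ (p - 1)) = a ^ (q - 1) * M := by
  rw [phip_mul, phip_of_nonneg h.symm.lt ha, ← phip_of_nonneg h.lt hM, phip_phip h.symm]

theorem mul_phip_le (hp : 1 < p) (a b : ℝ) :
    p * (a * phip p b) ≤ |a| ^ p + (p - 1) * |b| ^ p := by
  have hpq := Real.HolderConjugate.conjExponent hp
  have hpow : |phip p b| ^ p.conjExponent = |b| ^ p := by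
    rw [abs_phip hp, ← rpow_mul (abs_nonneg _), hpq.sub_one_mul_conj]
  calc p * (a * phip p b)
      ≤ p * (|a| ^ p / p + |phip p b| ^ p.conjExponent / p.conjExponent) :=
        mul_le_mul_of_nonneg_left (Real.young_inequality a (phip p b) hpq) hpq.nonneg
    _ = p * (|a| ^ p / p) + p / p.conjExponent * |b| ^ p := by rw [hpow]; ring
    _ = |a| ^ p + (p - 1) * |b| ^ p := by
        rw [mul_div_cancel₀ _ hpq.ne_zero, hpq.div_conj_eq_sub_one]

end Phip

theorem exists_subseq_tendsto_of_equicontinuous {α β : Type*} [TopologicalSpace α]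
    [CompactSpace α] [MetricSpace β] {F : ℕ → α → β} (hF : Equicontinuous F) {s : Set β}
    (hs : IsCompact s) (hFs : ∀ n x, F n x ∈ s) :
    ∃ Z : α → β, Continuous Z ∧ ∃ φ : ℕ → ℕ, StrictMono φ ∧
      ∀ x, Tendsto (fun n => F (φ n) x) atTop (𝓝 (Z x)) := by
  let G : ℕ → BoundedContinuousFunction α β := fun n =>
    BoundedContinuousFunction.mkOfCompact ⟨F n, hF.continuous n⟩
  have hequi : Equicontinuous ((↑) : range G → α → β) := by
    have hG : ((↑) : range G → α → β) = F ∘ rangeSplitting G := by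
      ext g x
      exact congr_arg (fun g : BoundedContinuousFunction α β => g x)
        (apply_rangeSplitting G g).symm
    exact hG ▸ hF.comp _
  have hcompact : IsCompact (closure (range G)) := by
    refine BoundedContinuousFunction.arzela_ascoli s hs _ ?_ hequi
    rintro - x ⟨n, rfl⟩
    exact hFs n x
  obtain ⟨Z, -, φ, hφ, hlim⟩ :=
    hcompact.tendsto_subseq fun n => subset_closure (mem_range_self n)
  refine ⟨Z, Z.continuous, φ, hφ, fun x => ?_⟩
  exact ((BoundedContinuousFunction.lipschitz_eval_const x).continuous.tendsto Z).comp hlim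

theorem exists_subseq_tendsto_of_lipschitzWith {E : Type*} [NormedAddCommGroup E]
    [ProperSpace E] {K : NNReal} {a T : ℝ} (haT : a ≤ T) {X : ℕ → ℝ → E}
    (hXL : ∀ n, LipschitzWith K (X n)) {x₀ : E} (hX : Tendsto (fun n => X n a) atTop (𝓝 x₀)) :
    ∃ Z : ℝ → E, Continuous Z ∧ ∃ φ : ℕ → ℕ, StrictMono φ ∧
      ∀ r ∈ Icc a T, Tendsto (fun n => X (φ n) r) atTop (𝓝 (Z r)) := by
  obtain ⟨B, hB⟩ := (Metric.isBounded_range_of_tendsto _ hX).exists_norm_le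
  have hbound : ∀ n (r : Icc a T), X n r ∈ Metric.closedBall (0 : E) (K * (T - a) + B) := by
    intro n r
    have hra : ‖X n r - X n a‖ ≤ K * (T - a) := by
      rw [← dist_eq_norm]
      refine ((hXL n).dist_le_mul r a).trans (mul_le_mul_of_nonneg_left ?_ K.coe_nonneg)
      rw [Real.dist_eq, abs_of_nonneg (by linarith [r.2.1])]
      linarith [r.2.2]
    rw [mem_closedBall_zero_iff]
    linarith [norm_le_norm_sub_add (X n r) (X n a), hB _ (mem_range_self n)]
  have hequi : Equicontinuous fun n (r : Icc a T) => X n r :=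
    (LipschitzWith.uniformEquicontinuous (fun n (r : Icc a T) => X n r) K fun n =>
      LipschitzWith.of_dist_le_mul fun r r' => (hXL n).dist_le_mul r r').equicontinuous
  obtain ⟨Z, hZ, φ, hφ, hlim⟩ :=
    exists_subseq_tendsto_of_equicontinuous hequi (isCompact_closedBall _ _) hbound
  refine ⟨IccExtend haT Z, hZ.Icc_extend', φ, hφ, fun r hr => ?_⟩
  rw [IccExtend_of_mem haT Z hr]
  exact hlim ⟨r, hr⟩

section CauchyProblem

variable {E : Type*} [NormedAddCommGroup E] [NormedSpace ℝ E]

/-- `X` solves the Cauchy problem `X' = H r X`, `X a = x` on `[a, T]`; the derivatives at the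
end points are two-sided. -/
def IsCauchySolution (H : ℝ → E → E) (a T : ℝ) (x : E) (X : ℝ → E) : Prop :=
  X a = x ∧ ∀ r ∈ Icc a T, HasDerivAt X (H r (X r)) r

/-- Iterates of the delayed integral equation `X r = x + ∫ s in a..r, H s (X (s - h))`, constant to
the left of `a`. They stabilise on `[a, a + m * h]` after `m` steps. -/
noncomputable def delayIter (H : ℝ → E → E) (a h : ℝ) : ℕ → E → ℝ → E
  | 0 => fun x _ => x
  | m + 1 => fun x r => x + ∫ s in a..max r a, H s (delayIter H a h m x (s - h))

variable {H : ℝ → E → E} {K : NNReal} {a T h : ℝ}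

theorem continuous_delayIter (hH : Continuous (Function.uncurry H)) (a h : ℝ) (m : ℕ) :
    Continuous (Function.uncurry (delayIter H a h m)) := by
  induction m with
  | zero => exact continuous_fst
  | succ m ih =>
    refine continuous_fst.add
      (intervalIntegral.continuous_parametric_intervalIntegral_of_continuous
        (f := fun (z : E × ℝ) s => H s (delayIter H a h m z.1 (s - h))) ?_
        (continuous_snd.max continuous_const))
    exact hH.comp (continuous_snd.prodMk (ih.comp
      ((continuous_fst.comp continuous_fst).prodMk (continuous_snd.sub continuous_const))))

theorem delayIter_succ_eq (hh : 0 ≤ h) (x : E) (m : ℕ) :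
    ∀ r ≤ a + m * h, delayIter H a h (m + 1) x r = delayIter H a h m x r := by
  induction m with
  | zero =>
    intro r hr
    have hra : max r a = a := max_eq_right (by simpa using hr)
    simp only [delayIter, hra, intervalIntegral.integral_same, add_zero]
  | succ m ih =>
    intro r hr
    refine congr_arg (x + ·) (intervalIntegral.integral_congr fun s hs => ?_)
    rw [uIcc_of_le (le_max_right _ _)] at hs
    have hmh : 0 ≤ (m : ℝ) * h := by positivity
    have hmax : max r a ≤ a + (m + 1) * h := max_le (by exact_mod_cast hr) (by linarith)
    exact congr_arg (H s) (ih _ (by linarith [hs.2]))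

theorem delayIter_succ_eq_add_integral (hh : 0 ≤ h) {m : ℕ} (hm : T ≤ a + m * h) (x : E) {r : ℝ}
    (hr : r ∈ Icc a T) : delayIter H a h (m + 1) x r =
      x + ∫ s in a..r, H s (delayIter H a h (m + 1) x (s - h)) := by
  have hra : max r a = r := max_eq_left hr.1
  change x + ∫ s in a..max r a, H s (delayIter H a h m x (s - h)) = _
  rw [hra]
  refine congr_arg (x + ·) (intervalIntegral.integral_congr fun s hs => ?_)
  rw [uIcc_of_le hr.1] at hs
  exact congr_arg (H s) (delayIter_succ_eq hh x m _ (by linarith [hs.2, hr.2])).symm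

theorem lipschitzWith_delayIter (hH : Continuous (Function.uncurry H)) (hK : ∀ r x, ‖H r x‖ ≤ K)
    (a h : ℝ) (m : ℕ) (x : E) : LipschitzWith K (delayIter H a h m x) := by
  refine LipschitzWith.of_dist_le_mul fun r r' => ?_
  rw [dist_eq_norm, Real.dist_eq]
  cases m with
  | zero =>
    rw [delayIter, sub_self, norm_zero]
    positivity
  | succ m =>
    have hint : Continuous fun s => H s (delayIter H a h m x (s - h)) :=
      hH.comp (continuous_id.prodMk ((continuous_delayIter hH a h m).comp
        (continuous_const.prodMk (continuous_id.sub continuous_const))))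
    rw [delayIter, add_sub_add_left_eq_sub, intervalIntegral.integral_interval_sub_left
      (hint.intervalIntegrable _ _) (hint.intervalIntegrable _ _)]
    calc ‖∫ s in max r' a..max r a, H s (delayIter H a h m x (s - h))‖
        ≤ K * |max r a - max r' a| :=
          intervalIntegral.norm_integral_le_of_norm_le_const fun s _ => hK _ _
      _ ≤ K * |r - r'| :=
          mul_le_mul_of_nonneg_left (abs_max_sub_max_le_abs r r' a) K.coe_nonneg

theorem exists_delayed_flow (hH : Continuous (Function.uncurry H)) (hK : ∀ r x, ‖H r x‖ ≤ K)
    (a T : ℝ) (hh : 0 < h) :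
    ∃ Φ : E → ℝ → E, Continuous (Function.uncurry Φ) ∧ (∀ x, LipschitzWith K (Φ x)) ∧
      ∀ x, ∀ r ∈ Icc a T, Φ x r = x + ∫ s in a..r, H s (Φ x (s - h)) := by
  obtain ⟨m, hm⟩ := exists_nat_ge ((T - a) / h)
  rw [div_le_iff₀ hh] at hm
  exact ⟨delayIter H a h (m + 1), continuous_delayIter hH a h _,
    lipschitzWith_delayIter hH hK a h _,
    fun x _ hr => delayIter_succ_eq_add_integral hh.le (by linarith) x hr⟩

theorem isCauchySolution_of_eq_add_integral [CompleteSpace E]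
    (hH : Continuous (Function.uncurry H)) {x : E} {Z : ℝ → E} (hZ : Continuous Z)
    (hZeq : ∀ r ∈ Icc a T, Z r = x + ∫ s in a..r, H s (Z s)) :
    ∃ Y, IsCauchySolution H a T x Y ∧ EqOn Y Z (Icc a T) := by
  have hHZ : Continuous fun s => H s (Z s) := hH.comp (continuous_id.prodMk hZ)
  let Y : ℝ → E := fun r => x + ∫ s in a..r, H s (Z s)
  have hYZ : EqOn Y Z (Icc a T) := fun r hr => (hZeq r hr).symm
  refine ⟨Y, ⟨by simp only [Y, intervalIntegral.integral_same, add_zero], fun r hr => ?_⟩, hYZ⟩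
  rw [hYZ hr]
  exact (hHZ.integral_hasStrictDerivAt a r).hasDerivAt.const_add x

theorem eq_add_integral_of_tendsto_delayed (hH : Continuous (Function.uncurry H))
    (hK : ∀ r x, ‖H r x‖ ≤ K) {x : ℕ → E} {x₀ : E} (hx : Tendsto x atTop (𝓝 x₀)) {h : ℕ → ℝ}
    (hh : Tendsto h atTop (𝓝 0)) {X : ℕ → ℝ → E} (hXL : ∀ n, LipschitzWith K (X n))
    (hX : ∀ n, ∀ r ∈ Icc a T, X n r = x n + ∫ s in a..r, H s (X n (s - h n))) {Z : ℝ → E}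
    (hZ : ∀ r ∈ Icc a T, Tendsto (fun n => X n r) atTop (𝓝 (Z r))) :
    ∀ r ∈ Icc a T, Z r = x₀ + ∫ s in a..r, H s (Z s) := by
  intro r hr
  have hdelay : ∀ s ∈ Icc a T, Tendsto (fun n => X n (s - h n)) atTop (𝓝 (Z s)) := fun s hs => by
    have hdiff : Tendsto (fun n => X n (s - h n) - X n s) atTop (𝓝 0) := by
      refine squeeze_zero_norm (a := fun n => K * |h n|) (fun n => ?_) ?_
      · simpa [dist_eq_norm] using (hXL n).dist_le_mul (s - h n) s
      · simpa using hh.abs.const_mul (K : ℝ)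
    simpa using hdiff.add (hZ s hs)
  refine tendsto_nhds_unique (hZ r hr) (Tendsto.congr (fun n => (hX n r hr).symm) ?_)
  refine hx.add (intervalIntegral.tendsto_integral_filter_of_dominated_convergence (fun _ => K)
    (Eventually.of_forall fun n => ?_)
    (Eventually.of_forall fun n => Eventually.of_forall fun s _ => hK _ _)
    intervalIntegrable_const (Eventually.of_forall fun s hs => ?_))
  · exact (hH.comp (continuous_id.prodMk ((hXL n).continuous.comp
      (continuous_id.sub continuous_const)))).aestronglyMeasurable
  · rw [uIoc_of_le hr.1] at hs
    exact (hH.tendsto (s, Z s)).comp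
      (tendsto_const_nhds.prodMk_nhds (hdelay s ⟨hs.1.le, hs.2.trans hr.2⟩))

variable [ProperSpace E]

theorem eventually_mem_of_forall_isCauchySolution (hH : Continuous (Function.uncurry H))
    (hK : ∀ r x, ‖H r x‖ ≤ K) {t : ℝ} (ht : t ∈ Icc a T) {x : ℕ → E} {x₀ : E}
    (hx : Tendsto x atTop (𝓝 x₀)) {h : ℕ → ℝ} (hh : Tendsto h atTop (𝓝 0)) {X : ℕ → ℝ → E}
    (hXL : ∀ n, LipschitzWith K (X n))
    (hX : ∀ n, ∀ r ∈ Icc a T, X n r = x n + ∫ s in a..r, H s (X n (s - h n))) {U : Set E}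
    (hU : IsOpen U) (hsol : ∀ Y, IsCauchySolution H a T x₀ Y → Y t ∈ U) :
    ∀ᶠ n in atTop, X n t ∈ U := by
  by_contra hcon
  obtain ⟨τ, hτ, hτU⟩ := extraction_of_frequently_atTop (not_eventually.1 hcon)
  have haT := ht.1.trans ht.2
  have hXa : ∀ n, X n a = x n := fun n => by
    rw [hX n a (left_mem_Icc.2 haT), intervalIntegral.integral_same, add_zero]
  obtain ⟨Z, hZ, φ, hφ, hlim⟩ := exists_subseq_tendsto_of_lipschitzWith (X := X ∘ τ) haT
    (fun n => hXL _) (x₀ := x₀) ((hx.comp hτ.tendsto_atTop).congr fun n => (hXa _).symm)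
  have hτφ : Tendsto (τ ∘ φ) atTop atTop := (hτ.comp hφ).tendsto_atTop
  obtain ⟨Y, hY, hYZ⟩ := isCauchySolution_of_eq_add_integral hH hZ
    (eq_add_integral_of_tendsto_delayed hH hK (hx.comp hτφ) (hh.comp hτφ)
      (X := X ∘ τ ∘ φ) (fun n => hXL _) (fun n => hX _) hlim)
  have hZt : Z t ∈ Uᶜ := hU.isClosed_compl.mem_of_tendsto (hlim t ht)
    (Eventually.of_forall fun n => hτU (φ n))
  exact hZt (hYZ ht ▸ hsol Y hY)

theorem exists_isCauchySolution_eq (hH : Continuous (Function.uncurry H))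
    (hK : ∀ r x, ‖H r x‖ ≤ K) {t : ℝ} (ht : t ∈ Icc a T) {S : Set E} (hS : IsCompact S)
    (hS' : IsPreconnected S) {ψ : E → ℝ} (hψ : Continuous ψ) {c : ℝ} {x y : E} (hx : x ∈ S)
    (hy : y ∈ S) (hcx : ∀ X, IsCauchySolution H a T x X → ψ (X t) < c)
    (hcy : ∀ X, IsCauchySolution H a T y X → c < ψ (X t)) :
    ∃ z ∈ S, ∃ X, IsCauchySolution H a T z X ∧ ψ (X t) = c := by
  let h : ℕ → ℝ := fun n => 1 / ((n : ℝ) + 1)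
  have hh : Tendsto h atTop (𝓝 0) := tendsto_one_div_add_atTop_nhds_zero_nat
  choose Φ hΦc hΦL hΦ using fun n : ℕ =>
    exists_delayed_flow hH hK a T (show 0 < h n from Nat.one_div_pos_of_nat)
  have hev : ∀ {z : ℕ → E} {z₀ : E} {τ : ℕ → ℕ}, Tendsto z atTop (𝓝 z₀) →
      Tendsto τ atTop atTop → ∀ {U : Set E}, IsOpen U →
      (∀ Y, IsCauchySolution H a T z₀ Y → Y t ∈ U) → ∀ᶠ n in atTop, Φ (τ n) (z n) t ∈ U :=
    fun hz hτ _ hU => eventually_mem_of_forall_isCauchySolution hH hK ht hz (hh.comp hτ)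
      (X := fun n => Φ _ _) (fun n => hΦL _ _) (fun n => hΦ _ _) hU
  obtain ⟨n₀, hn₀⟩ := ((hev tendsto_const_nhds tendsto_id (isOpen_Iio.preimage hψ) hcx).and
    (hev tendsto_const_nhds tendsto_id (isOpen_Ioi.preimage hψ) hcy)).exists_forall_of_atTop
  have hlevel : ∀ n, ∃ z ∈ S, ψ (Φ (n₀ + n) z t) = c := fun n => by
    have hcont : Continuous fun z => ψ (Φ (n₀ + n) z t) :=
      hψ.comp ((hΦc _).comp (continuous_id.prodMk continuous_const))
    obtain ⟨hlt, hgt⟩ := hn₀ (n₀ + n) (Nat.le_add_right _ _)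
    exact hS'.intermediate_value hx hy hcont.continuousOn ⟨hlt.le, hgt.le⟩
  choose z hzS hz using hlevel
  obtain ⟨z₀, hz₀, φ, hφ, hlim⟩ := hS.tendsto_subseq hzS
  refine ⟨z₀, hz₀, by_contra fun hcon => ?_⟩
  obtain ⟨n, hn⟩ := (hev hlim (tendsto_atTop_mono (fun n => Nat.le_add_left (φ n) n₀)
    hφ.tendsto_atTop) (isOpen_compl_singleton.preimage hψ)
    fun Y hY hYc => hcon ⟨Y, hY, hYc⟩).exists
  exact hn (hz (φ n))

end CauchyProblem

/-- Bounded continuous nonlinearities with the sign structure of the problem, extended by zero to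
the negative half-line. -/
structure AdmissibleNonlin (p : ℝ) (g : ℝ → ℝ) : Prop where
  cont : Continuous g
  eq_zero_of_nonpos : ∀ s ≤ 0, g s = 0
  apply_one : g 1 = 0
  neg : ∀ s, 0 < s → s < 1 → g s < 0
  pos : ∀ s, 1 < s → 0 < g s
  bounded : ∃ C, 0 < C ∧ ∀ s, |g s| ≤ C
  lower_bound : ∃ c, 0 < c ∧ ∀ s, 0 ≤ s → -(c * s ^ (p - 1)) ≤ g s

section Primitive

variable {g : ℝ → ℝ}

theorem hasDerivAt_Fint (hg : Continuous g) (s : ℝ) : HasDerivAt (Fint g) (g s) s :=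
  (hg.integral_hasStrictDerivAt 1 s).hasDerivAt

theorem continuous_Fint (hg : Continuous g) : Continuous (Fint g) :=
  continuous_iff_continuousAt.2 fun s => (hasDerivAt_Fint hg s).continuousAt

@[simp] theorem Fint_one (g : ℝ → ℝ) : Fint g 1 = 0 := by simp [Fint]

end Primitive

namespace AdmissibleNonlin

variable {p : ℝ} {g : ℝ → ℝ} {s t : ℝ}

theorem nonpos (h : AdmissibleNonlin p g) (hs : s ≤ 1) : g s ≤ 0 := by
  rcases le_or_gt s 0 with hs0 | hs0
  · exact (h.eq_zero_of_nonpos s hs0).le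
  · rcases hs.eq_or_lt with rfl | hs1
    · exact h.apply_one.le
    · exact (h.neg s hs0 hs1).le

theorem nonneg (h : AdmissibleNonlin p g) (hs : 1 ≤ s) : 0 ≤ g s := by
  rcases hs.eq_or_lt with rfl | hs1
  · exact h.apply_one.ge
  · exact (h.pos s hs1).le

theorem Fint_mono (h : AdmissibleNonlin p g) (hs : 1 ≤ s) (hst : s ≤ t) :
    Fint g s ≤ Fint g t :=
  le_of_hasDerivAt_nonneg hst (continuous_Fint h.cont).continuousOn
    (fun x _ => hasDerivAt_Fint h.cont x) fun _ hx => h.nonneg (hs.trans hx.1.le)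

theorem Fint_anti (h : AdmissibleNonlin p g) (ht : t ≤ 1) (hst : s ≤ t) :
    Fint g t ≤ Fint g s :=
  le_of_hasDerivAt_nonpos hst (continuous_Fint h.cont).continuousOn
    (fun x _ => hasDerivAt_Fint h.cont x) fun _ hx => h.nonpos (hx.2.le.trans ht)

theorem Fint_strictMono (h : AdmissibleNonlin p g) (hs : 1 ≤ s) (hst : s < t) :
    Fint g s < Fint g t :=
  lt_of_hasDerivAt_pos hst (continuous_Fint h.cont).continuousOn
    (fun x _ => hasDerivAt_Fint h.cont x) fun _ hx => h.pos _ (hs.trans_lt hx.1)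

theorem Fint_pos_of_lt_one (h : AdmissibleNonlin p g) (hs : s < 1) : 0 < Fint g s := by
  have hmax : max s 0 < 1 := max_lt hs one_pos
  refine lt_of_lt_of_le ?_ (h.Fint_anti hmax.le (le_max_left s 0))
  refine (Fint_one g).symm.trans_lt ?_
  exact lt_of_hasDerivAt_neg hmax (continuous_Fint h.cont).continuousOn
    (fun x _ => hasDerivAt_Fint h.cont x)
    fun x hx => h.neg _ ((le_max_right _ _).trans_lt hx.1) hx.2

theorem Fint_pos (h : AdmissibleNonlin p g) (hs : s ≠ 1) : 0 < Fint g s := by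
  rcases lt_or_gt_of_ne hs with hs1 | hs1
  · exact h.Fint_pos_of_lt_one hs1
  · exact Fint_one g ▸ h.Fint_strictMono le_rfl hs1

theorem Fint_nonneg (h : AdmissibleNonlin p g) (s : ℝ) : 0 ≤ Fint g s := by
  rcases eq_or_ne s 1 with rfl | hs
  · exact (Fint_one g).ge
  · exact (h.Fint_pos hs).le

theorem Fint_le_Fint_zero (h : AdmissibleNonlin p g) (hs : s ≤ 1) : Fint g s ≤ Fint g 0 := by
  rcases le_or_gt 0 s with hs0 | hs0
  · exact h.Fint_anti hs hs0
  · exact le_of_hasDerivAt_nonneg hs0.le (continuous_Fint h.cont).continuousOn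
      (fun x _ => hasDerivAt_Fint h.cont x) fun x hx => (h.eq_zero_of_nonpos x hx.2.le).ge

end AdmissibleNonlin

section Flux

variable {n : ℕ} {R1 r C : ℝ} {b v : ℝ → ℝ}

theorem neg_mul_pow_le_flux (hR1 : 0 ≤ R1) (hC : 0 ≤ C) (hv : v R1 = 0) (hr : R1 ≤ r)
    (hv' : ∀ s ∈ Icc R1 r, HasDerivAt v (-(s ^ n * b s)) s) (hb : ∀ s ∈ Icc R1 r, b s ≤ C) :
    -(C * r ^ (n + 1)) ≤ v r := by
  have hmono : v R1 + C * R1 ^ (n + 1) ≤ v r + C * r ^ (n + 1) := by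
    refine le_of_hasDerivAt_nonneg (f := fun s => v s + C * s ^ (n + 1)) hr
      (ContinuousOn.add (fun s hs => (hv' s hs).continuousAt.continuousWithinAt) (by fun_prop))
      (fun s hs => (hv' s (Ioo_subset_Icc_self hs)).add ((hasDerivAt_pow (n + 1) s).const_mul C))
      fun s hs => ?_
    have hsn : 0 ≤ s ^ n := pow_nonneg (hR1.trans hs.1.le) n
    have hbs : s ^ n * b s ≤ s ^ n * C :=
      mul_le_mul_of_nonneg_left (hb s (Ioo_subset_Icc_self hs)) hsn
    have hn : 0 ≤ n * (C * s ^ n) := by positivity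
    rw [Nat.add_sub_cancel]
    push_cast
    linarith
  have hR1n : 0 ≤ C * R1 ^ (n + 1) := by positivity
  linarith

theorem abs_flux_le (hR1 : 0 ≤ R1) (hC : 0 ≤ C) (hv : v R1 = 0) (hr : R1 ≤ r)
    (hv' : ∀ s ∈ Icc R1 r, HasDerivAt v (-(s ^ n * b s)) s) (hb : ∀ s ∈ Icc R1 r, |b s| ≤ C) :
    |v r| ≤ C * r ^ (n + 1) := by
  have hlow := neg_mul_pow_le_flux hR1 hC hv hr hv' fun s hs => (abs_le.1 (hb s hs)).2
  have hupp := neg_mul_pow_le_flux (b := fun s => -b s) (v := fun s => -v s) hR1 hC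
    (by rw [hv, neg_zero]) hr (fun s hs => (hv' s hs).fun_neg.congr_deriv (by ring))
    fun s hs => neg_le.1 (abs_le.1 (hb s hs)).1
  exact abs_le.2 ⟨hlow, by linarith⟩

end Flux

/-- The first order system equivalent to the radial Cauchy problem on `[R1, T]`, `0 ≤ R1`, with
datum `d`: here `v = r ^ n * φ_p(u')`, the dimension is `n + 1`, and `q` is conjugate to `p`. -/
structure RadialSystem (q : ℝ) (n : ℕ) (g : ℝ → ℝ) (R1 T d : ℝ) (u v : ℝ → ℝ) : Prop where
  left_nonneg : 0 ≤ R1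
  u_left : u R1 = d
  v_left : v R1 = 0
  hasDerivAt_u : ∀ r ∈ Icc R1 T, HasDerivAt u (phip q (v r / r ^ n)) r
  hasDerivAt_v : ∀ r ∈ Icc R1 T, HasDerivAt v (-(r ^ n * g (u r))) r

namespace RadialSystem

variable {p q : ℝ} {n : ℕ} {g : ℝ → ℝ} {R1 T d r s : ℝ} {u v : ℝ → ℝ}

theorem mono_right (h : RadialSystem q n g R1 T d u v) {T' : ℝ} (hT : T' ≤ T) :
    RadialSystem q n g R1 T' d u v :=
  ⟨h.left_nonneg, h.u_left, h.v_left, fun r hr => h.hasDerivAt_u r ⟨hr.1, hr.2.trans hT⟩,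
    fun r hr => h.hasDerivAt_v r ⟨hr.1, hr.2.trans hT⟩⟩

theorem continuousOn_u (h : RadialSystem q n g R1 T d u v) : ContinuousOn u (Icc R1 T) :=
  HasDerivAt.continuousOn h.hasDerivAt_u

theorem continuousOn_v (h : RadialSystem q n g R1 T d u v) : ContinuousOn v (Icc R1 T) :=
  HasDerivAt.continuousOn h.hasDerivAt_v

theorem neg_mul_pow_le_v (h : RadialSystem q n g R1 T d u v) {C : ℝ} (hC : 0 ≤ C)
    (hr : r ∈ Icc R1 T) (hg : ∀ s ∈ Icc R1 r, g (u s) ≤ C) : -(C * r ^ (n + 1)) ≤ v r :=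
  neg_mul_pow_le_flux h.left_nonneg hC h.v_left hr.1
    (fun s hs => h.hasDerivAt_v s ⟨hs.1, hs.2.trans hr.2⟩) hg

theorem abs_v_div_pow_le (h : RadialSystem q n g R1 T d u v) {C : ℝ} (hC : 0 ≤ C)
    (hg : ∀ s, |g s| ≤ C) (hr : r ∈ Icc R1 T) : |v r / r ^ n| ≤ C * r := by
  have hr0 : 0 ≤ r := h.left_nonneg.trans hr.1
  have hv : |v r| ≤ C * r ^ (n + 1) := abs_flux_le h.left_nonneg hC h.v_left hr.1
    (fun s hs => h.hasDerivAt_v s ⟨hs.1, hs.2.trans hr.2⟩) fun _ _ => hg _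
  rw [abs_div, abs_of_nonneg (pow_nonneg hr0 n)]
  refine div_le_of_le_mul₀ (by positivity) (by positivity) ?_
  rwa [mul_assoc, ← pow_succ']

theorem continuousOn_v_div_pow (h : RadialSystem q n g R1 T d u v)
    (hg : ∃ C, 0 < C ∧ ∀ s, |g s| ≤ C) : ContinuousOn (fun r => v r / r ^ n) (Icc R1 T) := by
  obtain ⟨C, hC, hg⟩ := hg
  intro r hr
  rcases (h.left_nonneg.trans hr.1).eq_or_lt with rfl | hr0
  · have hv : v 0 = 0 := le_antisymm hr.1 h.left_nonneg ▸ h.v_left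
    have hlim : Tendsto (fun s => v s / s ^ n) (𝓝[Icc R1 T] 0) (𝓝 0) := by
      refine squeeze_zero_norm' (a := fun s => C * s)
        (eventually_mem_nhdsWithin.mono fun s hs => h.abs_v_div_pow_le hC.le hg hs) ?_
      exact ((continuous_const_mul C).tendsto' 0 0 (mul_zero C)).mono_left nhdsWithin_le_nhds
    simpa only [ContinuousWithinAt, hv, zero_div] using hlim
  · exact (h.continuousOn_v r hr).div (by fun_prop) (pow_pos hr0 n).ne'

theorem hasDerivAt_v_div_pow (h : RadialSystem q n g R1 T d u v) (hr : r ∈ Ioc R1 T) :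
    HasDerivAt (fun r => v r / r ^ n) (-g (u r) - n * (v r / r ^ n) / r) r := by
  have hr0 : 0 < r := h.left_nonneg.trans_lt hr.1
  refine ((h.hasDerivAt_v r (Ioc_subset_Icc_self hr)).div (hasDerivAt_pow n r)
    (pow_pos hr0 n).ne').congr_deriv ?_
  have hpow : (n : ℝ) * r ^ (n - 1) * r = n * r ^ n := by
    cases n with
    | zero => simp only [Nat.cast_zero, zero_mul]
    | succ n => rw [Nat.add_sub_cancel, pow_succ, mul_assoc]
  rw [← eq_div_iff hr0.ne'] at hpow
  rw [hpow]
  field_simp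

/-- The energy `|u'| ^ p / q + F(u)` along a solution, in terms of the flux `v`. -/
noncomputable def energy (q : ℝ) (n : ℕ) (g u v : ℝ → ℝ) (r : ℝ) : ℝ :=
  |v r / r ^ n| ^ q / q + Fint g (u r)

theorem continuousOn_energy (h : RadialSystem q n g R1 T d u v) (hg : AdmissibleNonlin p g)
    (hq : 1 < q) : ContinuousOn (energy q n g u v) (Icc R1 T) := by
  have hpow : Continuous fun x : ℝ => |x| ^ q / q :=
    continuous_iff_continuousAt.2 fun x => (hasDerivAt_abs_rpow_div hq x).continuousAt
  exact (hpow.comp_continuousOn (h.continuousOn_v_div_pow hg.bounded)).add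
    ((continuous_Fint hg.cont).comp_continuousOn h.continuousOn_u)

theorem hasDerivAt_energy (h : RadialSystem q n g R1 T d u v) (hg : Continuous g) (hq : 1 < q)
    (hr : r ∈ Ioc R1 T) :
    HasDerivAt (energy q n g u v) (-(n * |v r / r ^ n| ^ q / r)) r := by
  have hflux := (hasDerivAt_abs_rpow_div hq (v r / r ^ n)).comp r (h.hasDerivAt_v_div_pow hr)
  have hprim := (hasDerivAt_Fint hg (u r)).comp r (h.hasDerivAt_u r (Ioc_subset_Icc_self hr))
  refine (hflux.add hprim).congr_deriv ?_
  rw [← phip_mul_self hq]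
  ring

theorem energy_anti (h : RadialSystem q n g R1 T d u v) (hg : AdmissibleNonlin p g) (hq : 1 < q)
    (hr : R1 ≤ r) (hrs : r ≤ s) (hs : s ≤ T) : energy q n g u v s ≤ energy q n g u v r := by
  refine le_of_hasDerivAt_nonpos hrs ((h.continuousOn_energy hg hq).mono (Icc_subset_Icc hr hs))
    (fun x hx => h.hasDerivAt_energy hg.cont hq ⟨hr.trans_lt hx.1, hx.2.le.trans hs⟩)
    fun x hx => ?_
  have hx0 : 0 < x := (h.left_nonneg.trans hr).trans_lt hx.1
  rw [neg_nonpos]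
  positivity

theorem pow_mul_energy_mono (h : RadialSystem q n g R1 T d u v) (hg : AdmissibleNonlin p g)
    (hq : 1 < q) {m : ℕ} (hm : n * q ≤ m) (hr : R1 ≤ r) (hrs : r ≤ s) (hs : s ≤ T) :
    r ^ (m + 1) * energy q n g u v r ≤ s ^ (m + 1) * energy q n g u v s := by
  refine le_of_hasDerivAt_nonneg (f := fun r => r ^ (m + 1) * energy q n g u v r) hrs
    (((continuous_pow (m + 1)).continuousOn).mul
      ((h.continuousOn_energy hg hq).mono (Icc_subset_Icc hr hs)))
    (fun x hx => (hasDerivAt_pow (m + 1) x).mul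
      (h.hasDerivAt_energy hg.cont hq ⟨hr.trans_lt hx.1, hx.2.le.trans hs⟩)) fun x hx => ?_
  have hx0 : 0 < x := (h.left_nonneg.trans hr).trans_lt hx.1
  have hF := hg.Fint_nonneg (u x)
  have hflux : 0 ≤ |v x / x ^ n| ^ q := by positivity
  have hderiv : ((m + 1 : ℕ) : ℝ) * x ^ (m + 1 - 1) * energy q n g u v x +
      x ^ (m + 1) * -(n * |v x / x ^ n| ^ q / x) =
      x ^ m * ((m + 1) * Fint g (u x) + (m + 1 - n * q) * |v x / x ^ n| ^ q / q) := by
    rw [energy, Nat.add_sub_cancel, pow_succ]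
    push_cast
    field_simp
    ring
  rw [hderiv]
  have hcoef : 0 ≤ (m + 1 - n * q) * |v x / x ^ n| ^ q / q :=
    div_nonneg (mul_nonneg (by linarith) hflux) (by linarith)
  positivity

theorem energy_left (h : RadialSystem q n g R1 T d u v) (hq : 1 < q) :
    energy q n g u v R1 = Fint g d := by
  rw [energy, h.u_left, h.v_left, zero_div, abs_zero, zero_rpow (by linarith), zero_div, zero_add]

theorem Fint_le_energy (hq : 1 < q) (r : ℝ) : Fint g (u r) ≤ energy q n g u v r :=
  le_add_of_nonneg_left (by positivity)

theorem Fint_le_Fint_left (h : RadialSystem q n g R1 T d u v) (hg : AdmissibleNonlin p g)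
    (hq : 1 < q) (hr : r ∈ Icc R1 T) : Fint g (u r) ≤ Fint g d :=
  calc Fint g (u r) ≤ energy q n g u v r := Fint_le_energy hq r
    _ ≤ energy q n g u v R1 := h.energy_anti hg hq le_rfl hr.1 hr.2
    _ = Fint g d := h.energy_left hq

theorem abs_phip_v_div_pow_le (h : RadialSystem q n g R1 T d u v) (hg : AdmissibleNonlin p g)
    (hpq : p.HolderConjugate q) (hr : r ∈ Icc R1 T) :
    |phip q (v r / r ^ n)| ≤ (q * Fint g d) ^ (1 / p) := by
  have hq : 1 < q := hpq.symm.lt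
  have hflux : |v r / r ^ n| ^ q ≤ q * Fint g d := by
    have hE := h.energy_anti hg hq le_rfl hr.1 hr.2
    rw [h.energy_left hq, energy] at hE
    rw [← div_le_iff₀' (by linarith)]
    linarith [hg.Fint_nonneg (u r)]
  have hexp : q - 1 = q * (1 / p) := by
    rw [mul_one_div, hpq.symm.div_conj_eq_sub_one]
  rw [abs_phip hq, hexp, rpow_mul (abs_nonneg _)]
  exact rpow_le_rpow (by positivity) hflux hpq.one_div_nonneg

theorem abs_u_sub_le (h : RadialSystem q n g R1 T d u v) {K : ℝ}
    (hK : ∀ r ∈ Icc R1 T, |phip q (v r / r ^ n)| ≤ K) (hr : r ∈ Icc R1 T) (hs : s ∈ Icc R1 T) :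
    |u r - u s| ≤ K * |r - s| :=
  (convex_Icc R1 T).norm_image_sub_le_of_norm_hasDerivWithin_le (𝕜 := ℝ)
    (fun x hx => (h.hasDerivAt_u x hx).hasDerivWithinAt) hK hs hr

end RadialSystem

theorem exists_first_zero {f : ℝ → ℝ} {a b : ℝ} (hab : a ≤ b) (hf : ContinuousOn f (Icc a b))
    (ha : f a < 0) (hb : 0 ≤ f b) : ∃ t ∈ Ioc a b, f t = 0 ∧ ∀ s ∈ Ico a t, f s < 0 := by
  have hcomp : IsCompact (Icc a b ∩ f ⁻¹' {0}) := isCompact_Icc.of_isClosed_subset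
    (hf.preimage_isClosed_of_isClosed isClosed_Icc isClosed_singleton) inter_subset_left
  obtain ⟨t, ⟨ht, hft⟩, hmin⟩ := hcomp.exists_isLeast (intermediate_value_Icc hab hf ⟨ha.le, hb⟩)
  refine ⟨t, ⟨ht.1.lt_of_ne ?_, ht.2⟩, hft, fun s hs => ?_⟩
  · rintro rfl
    exact ha.ne hft
  · by_contra! hfs
    obtain ⟨z, hz, hfz⟩ := intermediate_value_Icc hs.1
      (hf.mono (Icc_subset_Icc_right (hs.2.le.trans ht.2))) ⟨ha.le, hfs⟩
    have htz : t ≤ z := hmin ⟨⟨hz.1, hz.2.trans (hs.2.le.trans ht.2)⟩, hfz⟩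
    exact absurd (htz.trans hz.2) (not_le.2 hs.2)

theorem AdmissibleNonlin.exists_neg_mul_rpow_le {p : ℝ} {g : ℝ → ℝ} (h : AdmissibleNonlin p g)
    (hp : 1 < p) : ∃ c, 0 < c ∧ ∀ M, 0 ≤ M → ∀ s ≤ M, -(c * M ^ (p - 1)) ≤ g s := by
  obtain ⟨c, hc, hlow⟩ := h.lower_bound
  refine ⟨c, hc, fun M hM s hs => ?_⟩
  rcases le_or_gt s 0 with hs0 | hs0
  · rw [h.eq_zero_of_nonpos s hs0, neg_nonpos]
    positivity
  · refine le_trans (neg_le_neg ?_) (hlow s hs0.le)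
    exact mul_le_mul_of_nonneg_left (rpow_le_rpow hs0.le hs (by linarith)) hc.le

theorem phip_div_pow_le {p q : ℝ} (hpq : p.HolderConjugate q) {n : ℕ} {r M w : ℝ} (hr : 0 < r)
    (hM : 0 ≤ M) (hw : w ≤ r ^ n * M ^ (p - 1)) : phip q (w / r ^ n) ≤ M :=
  calc phip q (w / r ^ n) ≤ phip q (phip p M) :=
        phip_mono hpq.symm.lt ((phip_of_nonneg hpq.lt hM).symm ▸ (div_le_iff₀' (pow_pos hr n)).2 hw)
    _ = M := phip_phip hpq.symm M

namespace RadialSystem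

variable {p q : ℝ} {n : ℕ} {g : ℝ → ℝ} {R1 T d c M r s x y : ℝ} {u v : ℝ → ℝ}

theorem v_le_of_nonpos_left (h : RadialSystem q n g R1 T d u v) (hc : 0 ≤ c) (hM : 0 ≤ M)
    (hx : R1 ≤ x) (hxs : x ≤ s) (hs : s ≤ T) (hvx : v x ≤ 0)
    (hg : ∀ r ∈ Icc x s, -(c * M ^ (p - 1)) ≤ g (u r)) :
    v s ≤ s ^ n * (c * (s - x) * M ^ (p - 1)) := by
  have hv := sub_le_mul_sub_of_hasDerivAt_le hxs (h.continuousOn_v.mono (Icc_subset_Icc hx hs))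
    (fun r hr => h.hasDerivAt_v r ⟨hx.trans hr.1.le, hr.2.le.trans hs⟩)
    (C := s ^ n * (c * M ^ (p - 1))) fun r hr => by
      have hr0 : 0 ≤ r := (h.left_nonneg.trans hx).trans hr.1.le
      rw [← mul_neg]
      calc r ^ n * -g (u r) ≤ r ^ n * (c * M ^ (p - 1)) :=
            mul_le_mul_of_nonneg_left (neg_le.1 (hg r (Ioo_subset_Icc_self hr))) (by positivity)
        _ ≤ s ^ n * (c * M ^ (p - 1)) :=
            mul_le_mul_of_nonneg_right (pow_le_pow_left₀ hr0 hr.2.le n) (by positivity)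
  linarith

theorem neg_v_le_of_nonneg_right (h : RadialSystem q n g R1 T d u v) (hc : 0 ≤ c) (hM : 0 ≤ M)
    (hs : R1 ≤ s) (hsx : s ≤ x) (hx : x ≤ T) (hxs : x ≤ 2 * s) (hvx : 0 ≤ v x)
    (hg : ∀ r ∈ Icc s x, -(c * M ^ (p - 1)) ≤ g (u r)) :
    -v s ≤ s ^ n * (c * 2 ^ n * (x - s) * M ^ (p - 1)) := by
  have hv := sub_le_mul_sub_of_hasDerivAt_le hsx (h.continuousOn_v.mono (Icc_subset_Icc hs hx))
    (fun r hr => h.hasDerivAt_v r ⟨hs.trans hr.1.le, hr.2.le.trans hx⟩)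
    (C := (2 * s) ^ n * (c * M ^ (p - 1))) fun r hr => by
      have hr0 : 0 ≤ r := (h.left_nonneg.trans hs).trans hr.1.le
      rw [← mul_neg]
      calc r ^ n * -g (u r) ≤ r ^ n * (c * M ^ (p - 1)) :=
            mul_le_mul_of_nonneg_left (neg_le.1 (hg r (Ioo_subset_Icc_self hr))) (by positivity)
        _ ≤ (2 * s) ^ n * (c * M ^ (p - 1)) :=
            mul_le_mul_of_nonneg_right (pow_le_pow_left₀ hr0 (hr.2.le.trans hxs) n) (by positivity)
  calc -v s ≤ (2 * s) ^ n * (c * M ^ (p - 1)) * (x - s) := by linarith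
    _ = s ^ n * (c * 2 ^ n * (x - s) * M ^ (p - 1)) := by rw [mul_pow]; ring

theorem u_nonpos_of_nonpos_left (h : RadialSystem q n g R1 T d u v) (hpq : p.HolderConjugate q)
    (hc : 0 ≤ c) (hlow : ∀ M, 0 ≤ M → ∀ s ≤ M, -(c * M ^ (p - 1)) ≤ g s) (hx : R1 ≤ x)
    (hxy : x ≤ y) (hy : y ≤ T) (hyx : y - x ≤ 1 / 2) (hcyx : c * (y - x) ≤ 1) (hux : u x ≤ 0)
    (hvx : v x ≤ 0) : u y ≤ 0 := by
  by_contra! huy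
  obtain ⟨m, hm, hmax⟩ := isCompact_Icc.exists_isMaxOn (nonempty_Icc.2 hxy)
    (h.continuousOn_u.mono (Icc_subset_Icc hx hy))
  have hM : 0 < u m := huy.trans_le (hmax (right_mem_Icc.2 hxy))
  have hmT : m ≤ T := hm.2.trans hy
  have hum : u m - u x ≤ u m * (m - x) := by
    refine sub_le_mul_sub_of_hasDerivAt_le hm.1
      (h.continuousOn_u.mono (Icc_subset_Icc hx hmT))
      (fun r hr => h.hasDerivAt_u r ⟨hx.trans hr.1.le, hr.2.le.trans hmT⟩) fun r hr => ?_
    have hr0 : 0 < r := (h.left_nonneg.trans hx).trans_lt hr.1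
    refine phip_div_pow_le hpq hr0 hM.le ((h.v_le_of_nonpos_left hc hM.le hx hr.1.le
      (hr.2.le.trans hmT) hvx fun t ht => hlow _ hM.le _
      (hmax ⟨ht.1, ht.2.trans (hr.2.le.trans hm.2)⟩)).trans ?_)
    have hcr : c * (r - x) ≤ 1 :=
      (mul_le_mul_of_nonneg_left (by linarith [hr.2, hm.2]) hc).trans hcyx
    exact mul_le_mul_of_nonneg_left (mul_le_of_le_one_left (by positivity) hcr) (by positivity)
  have hhalf : u m * (m - x) ≤ u m * (1 / 2) :=
    mul_le_mul_of_nonneg_left (by linarith [hm.2]) hM.le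
  linarith

theorem exists_left_u_nonpos (h : RadialSystem q n g R1 T d u v) (hg : AdmissibleNonlin p g)
    (hpq : p.HolderConjugate q) (hx : x ∈ Ioc R1 T) (hux : u x ≤ 0) (hvx : 0 ≤ v x) :
    ∃ y ∈ Ico R1 x, u y ≤ 0 := by
  obtain ⟨c, hc, hlow⟩ := hg.exists_neg_mul_rpow_le hpq.lt
  have hx0 : 0 < x := h.left_nonneg.trans_lt hx.1
  have hδ : 0 < 1 / (c * 2 ^ n) := by positivity
  obtain ⟨y, hy, hyx⟩ : ∃ y, max (max R1 (x / 2)) (max (x - 1 / 2) (x - 1 / (c * 2 ^ n))) < y ∧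
      y < x :=
    exists_between (max_lt (max_lt hx.1 (by linarith)) (max_lt (by linarith) (by linarith)))
  rw [max_lt_iff, max_lt_iff, max_lt_iff] at hy
  obtain ⟨⟨hyR, hyhalf⟩, hyx1, hyc⟩ := hy
  by_contra! hpos
  obtain ⟨m, hm, hmax⟩ := isCompact_Icc.exists_isMaxOn (nonempty_Icc.2 hyx.le)
    (h.continuousOn_u.mono (Icc_subset_Icc hyR.le hx.2))
  have hM : 0 < u m := (hpos y ⟨hyR.le, hyx⟩).trans_le (hmax (left_mem_Icc.2 hyx.le))
  have hmR : R1 ≤ m := hyR.le.trans hm.1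
  have hum : -u x - -u m ≤ u m * (x - m) := by
    refine sub_le_mul_sub_of_hasDerivAt_le (f := fun r => -u r) hm.2
      (h.continuousOn_u.mono (Icc_subset_Icc hmR hx.2)).neg
      (fun r hr => (h.hasDerivAt_u r ⟨hmR.trans hr.1.le, hr.2.le.trans hx.2⟩).neg) fun r hr => ?_
    have hr0 : 0 < r := (h.left_nonneg.trans hmR).trans_lt hr.1
    rw [← phip_neg, ← neg_div]
    refine phip_div_pow_le hpq hr0 hM.le ((h.neg_v_le_of_nonneg_right hc.le hM.le
      (hmR.trans hr.1.le) hr.2.le hx.2 (by linarith [hr.1, hm.1]) hvx fun t ht => hlow _ hM.le _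
      (hmax ⟨(hm.1.trans hr.1.le).trans ht.1, ht.2⟩)).trans ?_)
    have hcr : c * 2 ^ n * (x - r) ≤ 1 :=
      (le_div_iff₀' (by positivity)).1 (by linarith [hr.1, hm.1])
    exact mul_le_mul_of_nonneg_left (mul_le_of_le_one_left (by positivity) hcr) (by positivity)
  have hhalf : u m * (x - m) ≤ u m * (1 / 2) :=
    mul_le_mul_of_nonneg_left (by linarith [hm.1]) hM.le
  linarith

theorem v_le_of_u_nonpos (h : RadialSystem q n g R1 T d u v) (hg : AdmissibleNonlin p g)
    (hx : R1 ≤ x) (hxy : x ≤ y) (hy : y ≤ T) (hu : ∀ r ∈ Icc x y, u r ≤ 0) : v y ≤ v x :=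
  le_of_hasDerivAt_nonpos hxy (h.continuousOn_v.mono (Icc_subset_Icc hx hy))
    (fun r hr => h.hasDerivAt_v r ⟨hx.trans hr.1.le, hr.2.le.trans hy⟩) fun r hr => by
      rw [hg.eq_zero_of_nonpos _ (hu r (Ioo_subset_Icc_self hr)), mul_zero, neg_zero]

theorem u_nonpos (h : RadialSystem q n g R1 T d u v) (hg : AdmissibleNonlin p g)
    (hpq : p.HolderConjugate q) (hd : d ≤ 0) (hr : r ∈ Icc R1 T) : u r ≤ 0 := by
  obtain ⟨c, hc, hlow⟩ := hg.exists_neg_mul_rpow_le hpq.lt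
  have hclosed : IsClosed ({r | u r ≤ 0 ∧ v r ≤ 0} ∩ Icc R1 T) := by
    have hpre := (h.continuousOn_u.prodMk h.continuousOn_v).preimage_isClosed_of_isClosed
      isClosed_Icc (isClosed_Iic.prod isClosed_Iic (s₁ := Iic (0 : ℝ)) (s₂ := Iic (0 : ℝ)))
    rwa [inter_comm] at hpre
  refine (hclosed.Icc_subset_of_forall_mem_nhdsWithin ⟨h.u_left.trans_le hd, h.v_left.le⟩
    (fun x hx => ?_) hr).1
  obtain ⟨⟨hux, hvx⟩, hxR, hxT⟩ := hx
  have hδ : 0 < min (1 / 2) (1 / c) := by positivity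
  filter_upwards [Ioc_mem_nhdsGT (lt_min hxT (lt_add_of_pos_right x hδ))] with y hy
  have hyT : y ≤ T := hy.2.trans (min_le_left _ _)
  have hyx : y - x ≤ min (1 / 2) (1 / c) := sub_le_iff_le_add'.2 (hy.2.trans (min_le_right _ _))
  have hcyx : c * (y - x) ≤ 1 := (le_div_iff₀' hc).1 (hyx.trans (min_le_right _ _))
  have hu : ∀ s ∈ Icc x y, u s ≤ 0 := fun s hs =>
    h.u_nonpos_of_nonpos_left hpq hc.le hlow hxR hs.1 (hs.2.trans hyT)
      (by linarith [hs.2, min_le_left (1 / 2) (1 / c)])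
      ((mul_le_mul_of_nonneg_left (by linarith [hs.2]) hc.le).trans hcyx) hux hvx
  exact ⟨hu y (right_mem_Icc.2 hy.1.le), (h.v_le_of_u_nonpos hg hxR hy.1.le hyT hu).trans hvx⟩

theorem u_pos_of_v_right_eq_zero (h : RadialSystem q n g R1 T d u v) (hg : AdmissibleNonlin p g)
    (hpq : p.HolderConjugate q) (hd : 0 < d) (hvT : v T = 0) (hr : r ∈ Icc R1 T) : 0 < u r := by
  by_contra! hur
  obtain ⟨x, hx, hux, hupos⟩ := exists_first_zero (f := fun r => -u r) hr.1
    (h.continuousOn_u.mono (Icc_subset_Icc_right hr.2)).neg (by linarith [h.u_left])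
    (by linarith)
  have hxT : x ≤ T := hx.2.trans hr.2
  rcases le_or_gt 0 (v x) with hvx | hvx
  · obtain ⟨y, hy, huy⟩ := h.exists_left_u_nonpos hg hpq ⟨hx.1, hxT⟩ (by linarith) hvx
    linarith [hupos y hy]
  · obtain ⟨t, ht, hvt, hvneg⟩ := exists_first_zero hxT
      (h.continuousOn_v.mono (Icc_subset_Icc_left hx.1.le)) hvx hvT.ge
    have hu : ∀ s ∈ Icc x t, u s ≤ 0 := fun s hs => by
      have husx : u s ≤ u x := le_of_hasDerivAt_nonpos hs.1
        (h.continuousOn_u.mono (Icc_subset_Icc hx.1.le (hs.2.trans ht.2)))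
        (fun y hy => h.hasDerivAt_u y ⟨hx.1.le.trans hy.1.le, hy.2.le.trans (hs.2.trans ht.2)⟩)
        fun y hy => (phip_neg_of_neg (div_neg_of_neg_of_pos (hvneg y ⟨hy.1.le, hy.2.trans_le hs.2⟩)
          (pow_pos (h.left_nonneg.trans_lt (hx.1.trans hy.1)) n))).le
      linarith
    linarith [h.v_le_of_u_nonpos hg hx.1.le ht.1.le ht.2 hu]

end RadialSystem

section Truncation

variable {f : ℝ → ℝ} {D s t : ℝ}

/-- The nonlinearity `f` frozen outside `[0, D]`. It is bounded, and agrees with `f` along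
solutions with values in `[0, D]`. -/
noncomputable def trunc (f : ℝ → ℝ) (D s : ℝ) : ℝ := f (max 0 (min s D))

theorem trunc_of_mem (hs : 0 ≤ s) (hsD : s ≤ D) : trunc f D s = f s := by
  rw [trunc, min_eq_left hsD, max_eq_right hs]

theorem Feq.nonneg (h : Feq f) (hs : 1 ≤ s) : 0 ≤ f s := by
  rcases hs.eq_or_lt with rfl | hs1
  · exact h.2.1.ge
  · exact (h.2.2.2 s hs1).le

theorem continuous_trunc (hf : ContinuousOn f (Ici 0)) (D : ℝ) : Continuous (trunc f D) :=
  hf.comp_continuous (by fun_prop) fun _ => mem_Ici.2 (le_max_left _ _)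

theorem exists_abs_trunc_le (hf : ContinuousOn f (Ici 0)) (hD : 0 ≤ D) :
    ∃ C, 0 < C ∧ ∀ s, |trunc f D s| ≤ C := by
  obtain ⟨C, hC⟩ := isCompact_Icc.exists_bound_of_continuousOn
    (hf.mono (Icc_subset_Ici_self : Icc 0 D ⊆ Ici 0))
  exact ⟨max C 1, by positivity, fun s =>
    (hC _ ⟨le_max_left _ _, max_le hD (min_le_right _ _)⟩).trans (le_max_left _ _)⟩

theorem exists_neg_mul_rpow_le_trunc {p : ℝ} (hp : 1 < p) (hf : ContinuousOn f (Ici 0))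
    (hf0 : f 0 = 0) (hfzero : Fzero p f) (hD : 1 < D) :
    ∃ c, 0 < c ∧ ∀ s, 0 ≤ s → -(c * s ^ (p - 1)) ≤ trunc f D s := by
  obtain ⟨C, hC, hbound⟩ := exists_abs_trunc_le hf (zero_le_one.trans hD.le)
  obtain ⟨c, hc⟩ := hfzero
  obtain ⟨δ, hδ, hnear⟩ := mem_nhdsGT_iff_exists_Ioo_subset.1 hc
  have hδ1 : 0 < min δ 1 := lt_min hδ one_pos
  refine ⟨|c| + C / min δ 1 ^ (p - 1), by positivity, fun s hs => ?_⟩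
  have hpow : 0 ≤ s ^ (p - 1) := rpow_nonneg hs _
  have hfar : 0 ≤ C / min δ 1 ^ (p - 1) * s ^ (p - 1) := by positivity
  rw [add_mul]
  rcases hs.eq_or_lt with rfl | hs0
  · rw [trunc_of_mem le_rfl (zero_le_one.trans hD.le), hf0, zero_rpow (by linarith)]
    simp only [mul_zero, add_zero, neg_zero, le_refl]
  rcases lt_or_ge s (min δ 1) with hsδ | hsδ
  · have hcs : c ≤ f s / s ^ (p - 1) := hnear ⟨hs0, hsδ.trans_le (min_le_left _ _)⟩
    rw [le_div_iff₀ (by positivity)] at hcs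
    rw [trunc_of_mem hs ((hsδ.le.trans (min_le_right _ _)).trans hD.le)]
    have habs : -(|c| * s ^ (p - 1)) ≤ c * s ^ (p - 1) := by
      rw [← neg_mul]
      exact mul_le_mul_of_nonneg_right (neg_abs_le c) hpow
    linarith
  · have hCs : C ≤ C / min δ 1 ^ (p - 1) * s ^ (p - 1) := by
      rw [div_mul_eq_mul_div, le_div_iff₀ (by positivity)]
      exact mul_le_mul_of_nonneg_left (rpow_le_rpow hδ1.le hsδ (by linarith)) hC.le
    linarith [(abs_le.1 (hbound s)).1, mul_nonneg (abs_nonneg c) hpow]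

theorem admissibleNonlin_trunc {p : ℝ} (hp : 1 < p) (hf : ContinuousOn f (Ici 0)) (hfeq : Feq f)
    (hfzero : Fzero p f) (hD : 1 < D) : AdmissibleNonlin p (trunc f D) where
  cont := continuous_trunc hf D
  eq_zero_of_nonpos s hs := by rw [trunc, max_eq_left ((min_le_left _ _).trans hs), hfeq.1]
  apply_one := by rw [trunc_of_mem zero_le_one hD.le, hfeq.2.1]
  neg s hs hs1 := by
    rw [trunc_of_mem hs.le (hs1.trans hD).le]
    exact hfeq.2.2.1 s hs hs1
  pos s hs := hfeq.2.2.2 _ (lt_max_of_lt_right (lt_min hs hD))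
  bounded := exists_abs_trunc_le hf (zero_le_one.trans hD.le)
  lower_bound := exists_neg_mul_rpow_le_trunc hp hf hfeq.1 hfzero hD

theorem Fint_trunc (hD : 1 ≤ D) (hs : 0 ≤ s) (hsD : s ≤ D) : Fint (trunc f D) s = Fint f s :=
  intervalIntegral.integral_congr fun _ hx =>
    trunc_of_mem ((le_min zero_le_one hs).trans hx.1) (hx.2.trans (max_le hD hsD))

theorem continuousOn_Fint (hf : ContinuousOn f (Ici 0)) : ContinuousOn (Fint f) (Ici 0) := by
  intro s hs
  rw [mem_Ici] at hs
  refine (continuous_Fint (continuous_trunc hf (s + 2))).continuousWithinAt.congr_of_eventuallyEq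
    ?_ (Fint_trunc (by linarith) hs (by linarith)).symm
  filter_upwards [self_mem_nhdsWithin,
    mem_nhdsWithin_of_mem_nhds (Iic_mem_nhds (show s < s + 2 by linarith))] with x hx hxs
  exact (Fint_trunc (by linarith) hx hxs).symm

theorem hasDerivAt_Fint_of_pos (hf : ContinuousOn f (Ici 0)) (hs : 0 < s) :
    HasDerivAt (Fint f) (f s) s := by
  have hderiv := hasDerivAt_Fint (continuous_trunc hf (s + 2)) s
  rw [trunc_of_mem hs.le (by linarith)] at hderiv
  refine hderiv.congr_of_eventuallyEq ?_
  filter_upwards [Ioo_mem_nhds hs (show s < s + 2 by linarith)] with x hx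
  exact (Fint_trunc (by linarith) hx.1.le hx.2.le).symm

theorem Fint_mono_of_one_le (hf : ContinuousOn f (Ici 0)) (hfeq : Feq f) (hs : 1 ≤ s)
    (hst : s ≤ t) : Fint f s ≤ Fint f t :=
  le_of_hasDerivAt_nonneg hst
    ((continuousOn_Fint hf).mono fun x hx => zero_le_one.trans (hs.trans hx.1))
    (fun x hx => hasDerivAt_Fint_of_pos hf (by linarith [hx.1]))
    fun x hx => hfeq.nonneg (by linarith [hx.1])

theorem Fint_nonneg_of_one_le (hf : ContinuousOn f (Ici 0)) (hfeq : Feq f) (hs : 1 ≤ s) :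
    0 ≤ Fint f s :=
  Fint_one f ▸ Fint_mono_of_one_le hf hfeq le_rfl hs

theorem le_fstar (hf : ContinuousOn f (Ici 0)) (ht : t ∈ Icc 1 s) : f t ≤ fstar f s :=
  le_csSup (isCompact_Icc.image_of_continuousOn
    (hf.mono fun _ hx => zero_le_one.trans hx.1)).bddAbove (mem_image_of_mem f ht)

end Truncation

namespace RadialSystem

variable {p q : ℝ} {n : ℕ} {g : ℝ → ℝ} {R1 T d r t x : ℝ} {u v : ℝ → ℝ}

theorem antitoneOn_u (h : RadialSystem q n g R1 T d u v) (ht : t ≤ T)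
    (hv : ∀ s ∈ Ioo R1 t, v s ≤ 0) : AntitoneOn u (Icc R1 t) := by
  intro x hx y hy hxy
  refine le_of_hasDerivAt_nonpos hxy
    (h.continuousOn_u.mono (Icc_subset_Icc hx.1 (hy.2.trans ht)))
    (fun r hr => h.hasDerivAt_u r ⟨hx.1.trans hr.1.le, hr.2.le.trans (hy.2.trans ht)⟩)
    fun r hr => ?_
  have hr : r ∈ Ioo R1 t := ⟨hx.1.trans_lt hr.1, hr.2.trans_le hy.2⟩
  rcases (div_nonpos_of_nonpos_of_nonneg (hv r hr)
    (pow_nonneg (h.left_nonneg.trans hr.1.le) n)).eq_or_lt with h0 | hneg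
  · rw [h0, phip_zero]
  · exact (phip_neg_of_neg hneg).le

theorem v_neg_of_one_lt (h : RadialSystem q n g R1 T d u v) (hg : AdmissibleNonlin p g)
    (hx : x ∈ Ioc R1 T) (hu : ∀ s ∈ Ioo R1 x, 1 < u s) : v x < 0 := by
  rw [← h.v_left]
  refine lt_of_hasDerivAt_neg hx.1 (h.continuousOn_v.mono (Icc_subset_Icc_right hx.2))
    (fun s hs => h.hasDerivAt_v s ⟨hs.1.le, hs.2.le.trans hx.2⟩) fun s hs => neg_neg_of_pos ?_
  exact mul_pos (pow_pos (h.left_nonneg.trans_lt hs.1) n) (hg.pos _ (hu s hs))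

theorem exists_forall_v_neg (h : RadialSystem q n g R1 T d u v) (hg : AdmissibleNonlin p g)
    (hd : 1 < d) (hr : r ∈ Ioc R1 T) : ∃ e ∈ Ioo R1 r, ∀ s ∈ Ioc R1 e, v s < 0 := by
  have hu : ∀ᶠ s in 𝓝[>] R1, 1 < u s := nhdsWithin_le_nhds <|
    (h.hasDerivAt_u R1 ⟨le_rfl, (hr.1.trans_le hr.2).le⟩).continuousAt.eventually
      (lt_mem_nhds (h.u_left ▸ hd))
  obtain ⟨δ, hδ, hu⟩ := mem_nhdsGT_iff_exists_Ioo_subset.1 hu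
  obtain ⟨e, he, heδ⟩ := exists_between (lt_min (mem_Ioi.1 hδ) hr.1)
  rw [lt_min_iff] at heδ
  exact ⟨e, ⟨he, heδ.2⟩, fun s hs => h.v_neg_of_one_lt hg
    ⟨hs.1, hs.2.trans (heδ.2.le.trans hr.2)⟩
    fun x hx => hu ⟨hx.1, hx.2.trans (hs.2.trans_lt heδ.1)⟩⟩

theorem u_lt_one_of_v_eq_zero (h : RadialSystem q n g R1 T d u v) (hg : AdmissibleNonlin p g)
    (ht : t ≤ T) (hv : ∀ s ∈ Ioo R1 t, v s ≤ 0) (hvt : v t = 0) {e : ℝ} (he : e ∈ Ioo R1 t)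
    (hve : v e < 0) : u t < 1 := by
  by_contra! hut
  have hR1t := (he.1.trans he.2).le
  have hvle : v t ≤ v e := le_of_hasDerivAt_nonpos he.2.le
    (h.continuousOn_v.mono (Icc_subset_Icc he.1.le ht))
    (fun s hs => h.hasDerivAt_v s ⟨he.1.le.trans hs.1.le, hs.2.le.trans ht⟩) fun s hs => by
      have hR1s := he.1.trans hs.1
      have hus : u t ≤ u s :=
        h.antitoneOn_u ht hv ⟨hR1s.le, hs.2.le⟩ ⟨hR1t, le_rfl⟩ hs.2.le
      exact neg_nonpos.2 (mul_nonneg (pow_nonneg (h.left_nonneg.trans hR1s.le) n)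
        (hg.nonneg (hut.trans hus)))
  linarith

theorem exists_first_turn (h : RadialSystem q n g R1 T d u v) (hg : AdmissibleNonlin p g)
    (hd : 1 < d) (hr : r ∈ Ioc R1 T) (hv : 0 ≤ v r) :
    ∃ t ∈ Ioc R1 T, v t = 0 ∧ u t < 1 ∧ ∀ s ∈ Ioo R1 t, v s ≤ 0 := by
  obtain ⟨e, he, hneg⟩ := h.exists_forall_v_neg hg hd hr
  have hve := hneg e ⟨he.1, le_rfl⟩
  obtain ⟨t, ht, hvt, hlt⟩ := exists_first_zero he.2.le
    (h.continuousOn_v.mono (Icc_subset_Icc he.1.le hr.2)) hve hv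
  have htT : t ≤ T := ht.2.trans hr.2
  have hvs : ∀ s ∈ Ioo R1 t, v s ≤ 0 := fun s hs => by
    rcases le_or_gt s e with hse | hse
    · exact (hneg s ⟨hs.1, hse⟩).le
    · exact (hlt s ⟨hse.le, hs.2⟩).le
  exact ⟨t, ⟨he.1.trans ht.1, htT⟩, hvt,
    h.u_lt_one_of_v_eq_zero hg htT hvs hvt ⟨he.1, ht.1⟩ hve, hvs⟩

theorem energy_of_v_eq_zero (hq : 1 < q) (ht : v t = 0) : energy q n g u v t = Fint g (u t) := by
  rw [energy, ht, zero_div, abs_zero, zero_rpow (by linarith), zero_div, zero_add]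

theorem sub_u_le (h : RadialSystem q n g 0 T d u v) (hpq : p.HolderConjugate q) {C : ℝ}
    (hC : 0 ≤ C) (hr : r ∈ Icc 0 T) (hg : ∀ s ∈ Icc 0 r, g (u s) ≤ C) :
    d - u r ≤ C ^ (q - 1) * r ^ q := by
  have hq := hpq.symm.lt
  have hu := sub_le_mul_sub_of_hasDerivAt_le (f := fun x => -u x) hr.1
    (h.continuousOn_u.mono (Icc_subset_Icc_right hr.2)).neg
    (fun x hx => (h.hasDerivAt_u x ⟨hx.1.le, hx.2.le.trans hr.2⟩).neg)
    (C := (C * r) ^ (q - 1)) fun x hx => by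
      have hv := h.neg_mul_pow_le_v hC ⟨hx.1.le, hx.2.le.trans hr.2⟩
        fun s hs => hg s ⟨hs.1, hs.2.trans hx.2.le⟩
      have hquot : -(v x / x ^ n) ≤ C * r := by
        rw [← neg_div, div_le_iff₀ (pow_pos hx.1 n)]
        calc -v x ≤ C * x * x ^ n := by rw [mul_assoc, ← pow_succ']; linarith
          _ ≤ C * r * x ^ n := mul_le_mul_of_nonneg_right
              (mul_le_mul_of_nonneg_left hx.2.le hC) (pow_nonneg hx.1.le n)
      rw [← phip_neg, ← phip_of_nonneg hq (mul_nonneg hC hr.1)]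
      exact phip_mono hq hquot
  have hpow : (C * r) ^ (q - 1) * (r - 0) = C ^ (q - 1) * r ^ q := by
    rw [sub_zero, mul_rpow hC hr.1, mul_assoc, ← rpow_add_one' hr.1 (by linarith), sub_add_cancel]
  rw [hpow, h.u_left] at hu
  linarith

/-- The Pohozaev functional, in terms of the flux `v` and in dimension `n + 1`. -/
noncomputable def pohozaev (p q : ℝ) (n : ℕ) (g u v : ℝ → ℝ) (r : ℝ) : ℝ :=
  r ^ (n + 1) * energy q n g u v r + (n + 1 - p) / p * (v r * u r)

theorem pohozaev_zero (h : RadialSystem q n g 0 T d u v) : pohozaev p q n g u v 0 = 0 := by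
  rw [pohozaev, h.v_left, zero_pow n.succ_ne_zero, zero_mul, zero_mul, mul_zero, add_zero]

theorem pohozaev_of_v_eq_zero (hq : 1 < q) (ht : v t = 0) :
    pohozaev p q n g u v t = t ^ (n + 1) * Fint g (u t) := by
  rw [pohozaev, energy_of_v_eq_zero hq ht, ht, zero_mul, mul_zero, add_zero]

theorem hasDerivAt_pohozaev (h : RadialSystem q n g R1 T d u v) (hg : Continuous g)
    (hpq : p.HolderConjugate q) (hr : r ∈ Ioc R1 T) :
    HasDerivAt (pohozaev p q n g u v)
      (r ^ n * ((n + 1) * Fint g (u r) - (n + 1 - p) / p * (g (u r) * u r))) r := by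
  have hr0 : 0 < r := h.left_nonneg.trans_lt hr.1
  have hr' : r ∈ Icc R1 T := Ioc_subset_Icc_self hr
  refine (((hasDerivAt_pow (n + 1) r).mul (h.hasDerivAt_energy hg hpq.symm.lt hr)).add
    (((h.hasDerivAt_v r hr').mul (h.hasDerivAt_u r hr')).const_mul
      (((n : ℝ) + 1 - p) / p))).congr_deriv ?_
  have hflux : v r * phip q (v r / r ^ n) = r ^ n * |v r / r ^ n| ^ q := by
    rw [← phip_mul_self hpq.symm.lt]
    field_simp
  have hinv : q⁻¹ = 1 - p⁻¹ := eq_sub_of_add_eq' hpq.inv_add_inv_eq_one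
  have hp0 := hpq.ne_zero
  rw [hflux, energy, div_eq_mul_inv _ q, hinv, Nat.add_sub_cancel]
  push_cast
  field_simp
  ring

theorem pohozaev_add_le (h : RadialSystem q n g R1 T d u v) (hg : AdmissibleNonlin p g)
    (hpq : p.HolderConjugate q) {c : ℝ} (hr : R1 ≤ r) (hrt : r ≤ t) (ht : t ≤ T)
    (hc : ∀ x ∈ Ioo r t, c ≤ (n + 1) * Fint g (u x) - (n + 1 - p) / p * (g (u x) * u x)) :
    pohozaev p q n g u v r + (t ^ (n + 1) - r ^ (n + 1)) * (c / (n + 1)) ≤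
      pohozaev p q n g u v t := by
  have hcont : ContinuousOn (pohozaev p q n g u v) (Icc R1 T) :=
    ((continuous_pow (n + 1)).continuousOn.mul (h.continuousOn_energy hg hpq.symm.lt)).add
      (continuousOn_const.mul (h.continuousOn_v.mul h.continuousOn_u))
  have hmono := le_of_hasDerivAt_nonneg
    (f := fun x => pohozaev p q n g u v x - x ^ (n + 1) * (c / (n + 1))) hrt
    ((hcont.mono (Icc_subset_Icc hr ht)).sub (by fun_prop))
    (fun x hx => (h.hasDerivAt_pohozaev hg.cont hpq ⟨hr.trans_lt hx.1, hx.2.le.trans ht⟩).sub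
      ((hasDerivAt_pow (n + 1) x).mul_const _)) fun x hx => by
      have hweight : ((n + 1 : ℕ) : ℝ) * x ^ (n + 1 - 1) * (c / (n + 1)) = x ^ n * c := by
        rw [Nat.add_sub_cancel]
        push_cast
        field_simp
      rw [hweight, ← mul_sub]
      exact mul_nonneg (pow_nonneg (h.left_nonneg.trans (hr.trans hx.1.le)) n)
        (sub_nonneg.2 (hc x hx))
  linarith

theorem exists_level (h : RadialSystem q n g R1 T d u v) (ht : t ∈ Ioc R1 T)
    (hanti : AntitoneOn u (Icc R1 t)) {c : ℝ} (hc : c ≤ d) (hut : u t ≤ c) :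
    ∃ r ∈ Icc R1 t, u r = c ∧ ∀ s ∈ Icc R1 r, u s ∈ Icc c d := by
  obtain ⟨r, hr, rfl⟩ := intermediate_value_Icc' ht.1.le
    (h.continuousOn_u.mono (Icc_subset_Icc_right ht.2)) ⟨hut, h.u_left.symm ▸ hc⟩
  refine ⟨r, hr, rfl, fun s hs => ?_⟩
  have hst : s ∈ Icc R1 t := ⟨hs.1, hs.2.trans hr.2⟩
  exact ⟨hanti hst hr hs.2, h.u_left ▸ hanti ⟨le_rfl, ht.1.le⟩ hst hs.1⟩

theorem rpow_sub_div_le (h : RadialSystem q n g 0 T d u v) (hpq : p.HolderConjugate q) {C : ℝ}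
    (hC : 0 < C) (hr : r ∈ Icc 0 T) (hur : u r ≤ d) (hg : ∀ s ∈ Icc 0 r, g (u s) ≤ C) :
    ((d - u r) / C ^ (q - 1)) ^ (1 / q) ≤ r := by
  have hle : (d - u r) / C ^ (q - 1) ≤ r ^ q := by
    rw [div_le_iff₀' (by positivity)]
    exact h.sub_u_le hpq hC.le hr hg
  have hq := hpq.symm.pos
  calc ((d - u r) / C ^ (q - 1)) ^ (1 / q) ≤ (r ^ q) ^ (1 / q) :=
        rpow_le_rpow (div_nonneg (sub_nonneg.2 hur) (by positivity)) hle (by positivity)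
    _ = r := by rw [← rpow_mul hr.1, mul_one_div_cancel hq.ne', rpow_one]

end RadialSystem

/-- For large initial data the flux of solutions of the truncated problems stays negative. -/
def LargeDataDecay (q : ℝ) (n : ℕ) (R1 R2 : ℝ) (f : ℝ → ℝ) : Prop :=
  ∀ᶠ d in atTop, ∀ D ≥ d, ∀ u v : ℝ → ℝ, RadialSystem q n (trunc f D) R1 R2 d u v →
    ∀ r ∈ Ioc R1 R2, v r < 0

section LargeData

variable {p q : ℝ} {n : ℕ} {R1 R2 D d t : ℝ} {f u v : ℝ → ℝ}

theorem largeDataDecay_of_turn (hp : 1 < p) (hf : ContinuousOn f (Ici 0)) (hfeq : Feq f)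
    (hfzero : Fzero p f)
    (hturn : ∀ᶠ d in atTop, ∀ D ≥ d, ∀ u v : ℝ → ℝ, RadialSystem q n (trunc f D) R1 R2 d u v →
      ∀ t ∈ Ioc R1 R2, v t = 0 → u t < 1 → AntitoneOn u (Icc R1 t) → False) :
    LargeDataDecay q n R1 R2 f := by
  filter_upwards [hturn, eventually_gt_atTop 1] with d hd hd1 D hD u v h r hr
  by_contra! hv
  obtain ⟨t, ht, hvt, hut, hvs⟩ := h.exists_first_turn
    (admissibleNonlin_trunc hp hf hfeq hfzero (hd1.trans_le hD)) hd1 hr hv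
  exact hd D hD u v h t ht hvt hut (h.antitoneOn_u ht.2 hvs)

theorem RadialSystem.pow_mul_Fint_le (h : RadialSystem q n (trunc f D) R1 R2 d u v) (hp : 1 < p)
    (hf : ContinuousOn f (Ici 0)) (hfeq : Feq f) (hfzero : Fzero p f) (hD : 1 < D) (hdD : d ≤ D)
    (hq : 1 < q) {m : ℕ} (hm : n * q ≤ m) (ht : t ∈ Ioc R1 R2) (hvt : v t = 0) (hut : u t < 1)
    {r : ℝ} (hr : r ∈ Icc R1 t) (hur : u r ∈ Icc 0 d) :
    r ^ (m + 1) * Fint f (u r) ≤ R2 ^ (m + 1) * Fint f 0 := by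
  have hg := admissibleNonlin_trunc hp hf hfeq hfzero hD
  have ht0 : 0 ≤ t := h.left_nonneg.trans ht.1.le
  rw [← Fint_trunc hD.le hur.1 (hur.2.trans hdD), ← Fint_trunc hD.le le_rfl (by linarith)]
  calc r ^ (m + 1) * Fint (trunc f D) (u r)
      ≤ r ^ (m + 1) * energy q n (trunc f D) u v r :=
        mul_le_mul_of_nonneg_left (Fint_le_energy hq r)
          (pow_nonneg (h.left_nonneg.trans hr.1) _)
    _ ≤ t ^ (m + 1) * energy q n (trunc f D) u v t :=
        h.pow_mul_energy_mono hg hq hm hr.1 hr.2 ht.2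
    _ = t ^ (m + 1) * Fint (trunc f D) (u t) := by rw [energy_of_v_eq_zero hq hvt]
    _ ≤ R2 ^ (m + 1) * Fint (trunc f D) 0 :=
        mul_le_mul (pow_le_pow_left₀ ht0 ht.2 _) (hg.Fint_le_Fint_zero hut.le)
          (hg.Fint_nonneg _) (pow_nonneg (ht0.trans ht.2) _)

theorem largeDataDecay_of_Fint_le (hpq : p.HolderConjugate q) (hf : ContinuousOn f (Ici 0))
    (hfeq : Feq f) (hfzero : Fzero p f) {B : ℝ} (hB : ∀ s, 1 ≤ s → Fint f s ≤ B) :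
    LargeDataDecay q n R1 R2 f := by
  refine largeDataDecay_of_turn hpq.lt hf hfeq hfzero ?_
  have hq := hpq.symm.pos
  filter_upwards [eventually_gt_atTop 1, eventually_gt_atTop (1 + (q * B) ^ (1 / p) * (R2 - R1))]
    with d hd1 hd D hD u v h t ht _ hut _
  have hg := admissibleNonlin_trunc hpq.lt hf hfeq hfzero (hd1.trans_le hD)
  have hspeed : ∀ r ∈ Icc R1 R2, |phip q (v r / r ^ n)| ≤ (q * B) ^ (1 / p) := fun r hr => by
    refine (h.abs_phip_v_div_pow_le hg hpq hr).trans
      (rpow_le_rpow (mul_nonneg hq.le (hg.Fint_nonneg d)) ?_ (one_div_nonneg.2 hpq.nonneg))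
    rw [Fint_trunc (by linarith) (by linarith) hD]
    exact mul_le_mul_of_nonneg_left (hB d hd1.le) hq.le
  have hfall := h.abs_u_sub_le hspeed (r := R1) (s := t) ⟨le_rfl, ht.1.le.trans ht.2⟩
    ⟨ht.1.le, ht.2⟩
  rw [h.u_left, abs_sub_comm R1 t, abs_of_pos (sub_pos.2 ht.1)] at hfall
  have hlength : (q * B) ^ (1 / p) * (t - R1) ≤ (q * B) ^ (1 / p) * (R2 - R1) :=
    mul_le_mul_of_nonneg_left (by linarith [ht.2])
      ((abs_nonneg _).trans (hspeed t ⟨ht.1.le, ht.2⟩))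
  linarith [le_abs_self (d - u t)]

theorem tendsto_Fint_atTop (hf : ContinuousOn f (Ici 0)) (hfeq : Feq f)
    (hB : ¬ ∃ B, ∀ s, 1 ≤ s → Fint f s ≤ B) : Tendsto (Fint f) atTop atTop := by
  refine tendsto_atTop.2 fun b => ?_
  push Not at hB
  obtain ⟨s, hs, hb⟩ := hB b
  filter_upwards [eventually_ge_atTop s] with x hx
  exact hb.le.trans (Fint_mono_of_one_le hf hfeq hs hx)

theorem largeDataDecay_of_left_pos (hpq : p.HolderConjugate q) (hR1 : 0 < R1)
    (hf : ContinuousOn f (Ici 0)) (hfeq : Feq f) (hfzero : Fzero p f)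
    (hF : Tendsto (Fint f) atTop atTop) : LargeDataDecay q n R1 R2 f := by
  refine largeDataDecay_of_turn hpq.lt hf hfeq hfzero ?_
  obtain ⟨m, hm⟩ := exists_nat_ge (n * q)
  filter_upwards [eventually_gt_atTop 1,
    hF.eventually_gt_atTop (R2 ^ (m + 1) * Fint f 0 / R1 ^ (m + 1))]
    with d hd1 hd D hD u v h t ht hvt hut _
  have hle := h.pow_mul_Fint_le hpq.lt hf hfeq hfzero (hd1.trans_le hD) hD hpq.symm.lt hm ht hvt
    hut ⟨le_rfl, ht.1.le⟩ (h.u_left.symm ▸ ⟨by linarith, le_rfl⟩)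
  rw [h.u_left] at hle
  rw [div_lt_iff₀' (by positivity)] at hd
  exact hle.not_gt hd

theorem Fsubl.exists_le_mul_rpow (h : Fsubl p f) (hp : 1 < p) (hf : ContinuousOn f (Ici 0)) :
    ∃ M, 0 < M ∧ ∀ s, 1 ≤ s → f s ≤ M * s ^ (p - 1) := by
  obtain ⟨M, hM, h⟩ := h
  obtain ⟨S, hS⟩ := eventually_atTop.1 (h 1 one_pos)
  obtain ⟨C, hC⟩ := isCompact_Icc.exists_bound_of_continuousOn
    (hf.mono fun x (hx : x ∈ Icc 1 S) => zero_le_one.trans hx.1)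
  refine ⟨max (M + 1) C, by positivity, fun s hs => ?_⟩
  rcases le_total S s with hSs | hsS
  · have hle := hS s hSs
    rw [div_le_iff₀ (by positivity)] at hle
    exact hle.trans (mul_le_mul_of_nonneg_right (le_max_left _ _) (by positivity))
  · calc f s ≤ C := (le_abs_self _).trans (hC s ⟨hs, hsS⟩)
      _ ≤ max (M + 1) C := le_max_right _ _
      _ ≤ max (M + 1) C * s ^ (p - 1) :=
        le_mul_of_one_le_right (by positivity) (one_le_rpow hs (by linarith))

theorem RadialSystem.rpow_le_of_eq_half (h : RadialSystem q n (trunc f D) 0 R2 d u v)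
    (hpq : p.HolderConjugate q) {M : ℝ} (hM : 0 < M) (hd : 2 ≤ d)
    (hfM : ∀ s, 1 ≤ s → f s ≤ M * s ^ (p - 1)) (hdD : d ≤ D) {r : ℝ} (hr : r ∈ Icc 0 R2)
    (hur : u r = d / 2) (hus : ∀ s ∈ Icc 0 r, u s ∈ Icc (d / 2) d) :
    (1 / (2 * M ^ (q - 1))) ^ (1 / q) ≤ r := by
  have hd0 : 0 < d := by linarith
  have hp := hpq.lt
  refine le_of_eq_of_le ?_ (h.rpow_sub_div_le hpq (C := M * d ^ (p - 1)) (by positivity) hr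
    (by linarith) fun s hs => ?_)
  · have hpow : (M * d ^ (p - 1)) ^ (q - 1) = M ^ (q - 1) * d := by
      rw [← phip_mul_rpow hpq hM.le hd0.le, phip_of_nonneg hpq.symm.lt (by positivity)]
    rw [hpow, hur]
    congr 1
    field_simp
    ring
  · obtain ⟨hlow, hupp⟩ := hus s hs
    rw [trunc_of_mem (by linarith) (hupp.trans hdD)]
    exact (hfM _ (by linarith)).trans (mul_le_mul_of_nonneg_left
      (rpow_le_rpow (by linarith) hupp (by linarith)) hM.le)

theorem largeDataDecay_of_subl (hpq : p.HolderConjugate q) (hf : ContinuousOn f (Ici 0))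
    (hfeq : Feq f) (hfzero : Fzero p f) (hF : Tendsto (Fint f) atTop atTop) (hs : Fsubl p f) :
    LargeDataDecay q n 0 R2 f := by
  refine largeDataDecay_of_turn hpq.lt hf hfeq hfzero ?_
  obtain ⟨m, hm⟩ := exists_nat_ge (n * q)
  obtain ⟨M, hM, hfM⟩ := hs.exists_le_mul_rpow hpq.lt hf
  have hq := hpq.symm.lt
  set δ := (1 / (2 * M ^ (q - 1))) ^ (1 / q)
  have hδ0 : 0 < δ := by positivity
  have hF' : Tendsto (fun d : ℝ => Fint f (d / 2)) atTop atTop :=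
    hF.comp (tendsto_id.atTop_div_const two_pos)
  filter_upwards [eventually_gt_atTop 2,
    hF'.eventually_gt_atTop (R2 ^ (m + 1) * Fint f 0 / δ ^ (m + 1))]
    with d hd2 hd D hD u v h t ht hvt hut hanti
  obtain ⟨r, hr, hur, hus⟩ := h.exists_level ht hanti (show d / 2 ≤ d by linarith) (by linarith)
  have hδr : δ ≤ r := h.rpow_le_of_eq_half hpq hM hd2.le hfM hD
    ⟨hr.1, hr.2.trans ht.2⟩ hur hus
  have hle := h.pow_mul_Fint_le hpq.lt hf hfeq hfzero (show 1 < D by linarith) hD hq hm ht hvt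
    hut hr (hur ▸ ⟨by linarith, by linarith⟩)
  rw [hur] at hle
  rw [div_lt_iff₀' (by positivity)] at hd
  have hmono : δ ^ (m + 1) * Fint f (d / 2) ≤ r ^ (m + 1) * Fint f (d / 2) :=
    mul_le_mul_of_nonneg_right (pow_le_pow_left₀ hδ0.le hδr _)
      (Fint_nonneg_of_one_le hf hfeq (by linarith))
  linarith

end LargeData

/-- The pointwise content of the subcritical growth condition, valid from the level `S` on. -/
structure SubcriticalBound (f : ℝ → ℝ) (η L S : ℝ) : Prop where
  eta_lt_one : η < 1
  one_le : 1 ≤ S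
  const_pos : 0 < L
  one_le_mul : ∀ s, S ≤ s → 1 ≤ η * s
  fstar_pos : ∀ s, S ≤ s → 0 < fstar f s
  fstar_mul_le : ∀ s, S ≤ s → fstar f s * s ≤ L * Fint f (η * s)

theorem sub_div_mul_lt_of_lt_pstar {p L : ℝ} {N : ℕ} (hp : 0 < p) (hN : 0 < N) (hL : 0 < L)
    (h : (L : EReal) < pstar p N) : (N - p) / p * L < N := by
  rcases lt_or_ge p N with hpN | hpN
  · rw [pstar, if_pos hpN, EReal.coe_lt_coe_iff, lt_div_iff₀ (by linarith)] at h
    rw [div_mul_eq_mul_div, div_lt_iff₀ hp]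
    linarith
  · calc ((N : ℝ) - p) / p * L ≤ 0 := mul_nonpos_of_nonpos_of_nonneg
          (div_nonpos_of_nonpos_of_nonneg (by linarith) hp.le) hL.le
      _ < N := by exact_mod_cast hN

theorem FsubcWith.exists_subcriticalBound {p η : ℝ} {N : ℕ} {f : ℝ → ℝ} (h : FsubcWith p N f η)
    (hp : 0 < p) (hN : 0 < N) (hf : ContinuousOn f (Ici 0)) (hfeq : Feq f) :
    ∃ L S, SubcriticalBound f η L S ∧ (N - p) / p * L < N := by
  obtain ⟨-, hη, hη1, L, hL, hev⟩ := h
  obtain ⟨S, hS⟩ := eventually_atTop.1 hev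
  set S' := max S (max 1 (2 / η))
  have hone : 1 ≤ S' := le_max_of_le_right (le_max_left _ _)
  have htwo : ∀ s, S' ≤ s → 2 ≤ η * s := fun s hs =>
    (div_le_iff₀' hη).1 ((le_max_of_le_right (le_max_right _ _)).trans hs)
  have hstar : ∀ s, S' ≤ s → 0 < fstar f s := fun s hs =>
    (hfeq.2.2.2 2 one_lt_two).trans_le (le_fstar hf ⟨one_le_two, by nlinarith [htwo s hs]⟩)
  have hFpos : ∀ s, S' ≤ s → 0 < Fint f (η * s) := fun s hs => by
    have hlt := lt_of_hasDerivAt_pos (show 1 < η * s by linarith [htwo s hs])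
      ((continuousOn_Fint hf).mono fun x hx => zero_le_one.trans hx.1)
      (fun x hx => hasDerivAt_Fint_of_pos hf (by linarith [hx.1])) (fun x hx => hfeq.2.2.2 x hx.1)
    rwa [Fint_one] at hlt
  have hle : ∀ s, S' ≤ s → fstar f s * s ≤ L * Fint f (η * s) := fun s hs =>
    (div_le_iff₀ (hFpos s hs)).1 (hS s ((le_max_left _ _).trans hs))
  have hL0 : 0 < L := pos_of_mul_pos_left
    ((mul_pos (hstar S' le_rfl) (by linarith)).trans_le (hle S' le_rfl)) (hFpos S' le_rfl).le
  exact ⟨L, S', ⟨hη1, hone, hL0, fun s hs => by linarith [htwo s hs], hstar, hle⟩,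
    sub_div_mul_lt_of_lt_pstar hp hN hL0 hL⟩

theorem fstar_mono {f : ℝ → ℝ} {s t : ℝ} (hf : ContinuousOn f (Ici 0)) (hs : 1 ≤ s)
    (hst : s ≤ t) : fstar f s ≤ fstar f t :=
  csSup_le_csSup (isCompact_Icc.image_of_continuousOn
    (hf.mono fun _ hy => zero_le_one.trans hy.1)).bddAbove ((nonempty_Icc.2 hs).image f)
    (image_mono (Icc_subset_Icc_right hst))

namespace SubcriticalBound

variable {f : ℝ → ℝ} {η L S s d ν a : ℝ}

theorem fstar_mul_le_mul_Fint (h : SubcriticalBound f η L S) (hf : ContinuousOn f (Ici 0))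
    (hfeq : Feq f) (hs : S ≤ s) : fstar f s * s ≤ L * Fint f s := by
  have hs0 : 0 ≤ s := by linarith [h.one_le]
  exact (h.fstar_mul_le s hs).trans (mul_le_mul_of_nonneg_left (Fint_mono_of_one_le hf hfeq
    (h.one_le_mul s hs) (mul_le_of_le_one_left hs0 h.eta_lt_one.le)) h.const_pos.le)

theorem mul_le_mul_Fint (h : SubcriticalBound f η L S) (hf : ContinuousOn f (Ici 0))
    (hfeq : Feq f) (hs : S ≤ s) : f s * s ≤ L * Fint f s :=
  (mul_le_mul_of_nonneg_right (le_fstar hf ⟨h.one_le.trans hs, le_rfl⟩)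
    (by linarith [h.one_le])).trans (h.fstar_mul_le_mul_Fint hf hfeq hs)

theorem exists_neg_le_pohozaev (h : SubcriticalBound f η L S) (hf : ContinuousOn f (Ici 0))
    (hfeq : Feq f) (ha : 0 ≤ a) (hνL : ν * L ≤ a) :
    ∃ B, 0 ≤ B ∧ ∀ s, 0 ≤ s → -B ≤ a * Fint f s - ν * (f s * s) := by
  have hcont : ContinuousOn (fun s => a * Fint f s - ν * (f s * s)) (Icc 0 S) := by
    have hF := (continuousOn_Fint hf).mono (Icc_subset_Ici_self : Icc 0 S ⊆ Ici 0)
    have hf' := hf.mono (Icc_subset_Ici_self : Icc 0 S ⊆ Ici 0)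
    fun_prop
  obtain ⟨C, hC⟩ := isCompact_Icc.exists_bound_of_continuousOn hcont
  refine ⟨max C 0, le_max_right _ _, fun s hs => ?_⟩
  rcases le_total s S with hsS | hSs
  · linarith [(abs_le.1 (hC s ⟨hs, hsS⟩)).1, le_max_left C 0]
  have hs1 := h.one_le.trans hSs
  have hFs := Fint_nonneg_of_one_le hf hfeq hs1
  suffices hmain : 0 ≤ a * Fint f s - ν * (f s * s) by linarith [le_max_right C 0]
  rcases le_total ν 0 with hν | hν
  · linarith [mul_nonneg ha hFs,
      mul_nonneg (neg_nonneg.2 hν) (mul_nonneg (hfeq.nonneg hs1) hs)]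
  · calc (0 : ℝ) ≤ (a - ν * L) * Fint f s := mul_nonneg (sub_nonneg.2 hνL) hFs
      _ = a * Fint f s - ν * (L * Fint f s) := by ring
      _ ≤ a * Fint f s - ν * (f s * s) :=
        sub_le_sub_left (mul_le_mul_of_nonneg_left (h.mul_le_mul_Fint hf hfeq hSs) hν) _

theorem mul_Fint_le_pohozaev (h : SubcriticalBound f η L S) (hf : ContinuousOn f (Ici 0))
    (hfeq : Feq f) (ha : 0 ≤ a) (hd : S ≤ d) (hs : s ∈ Icc (η * d) d) :
    (a - max ν 0 * L) * Fint f (η * d) ≤ a * Fint f s - ν * (f s * s) := by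
  have hηd := h.one_le_mul d hd
  have hs1 : 1 ≤ s := hηd.trans hs.1
  have hfs : f s * s ≤ L * Fint f (η * d) :=
    (mul_le_mul (le_fstar hf ⟨hs1, hs.2⟩) hs.2 (by linarith) (h.fstar_pos d hd).le).trans
      (h.fstar_mul_le d hd)
  have hνfs : ν * (f s * s) ≤ max ν 0 * (L * Fint f (η * d)) :=
    (mul_le_mul_of_nonneg_right (le_max_left ν 0)
      (mul_nonneg (hfeq.nonneg hs1) (by linarith))).trans
      (mul_le_mul_of_nonneg_left hfs (le_max_right ν 0))
  have hF : a * Fint f (η * d) ≤ a * Fint f s :=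
    mul_le_mul_of_nonneg_left (Fint_mono_of_one_le hf hfeq hηd hs.1) ha
  linarith

theorem Fint_le_mul_rpow (h : SubcriticalBound f η L S) (hf : ContinuousOn f (Ici 0))
    (hfeq : Feq f) (hs : S ≤ s) : Fint f s ≤ Fint f S * S ^ (-L) * s ^ L := by
  have hS0 : 0 < S := by linarith [h.one_le]
  have hs0 : 0 < s := hS0.trans_le hs
  have hanti := le_of_hasDerivAt_nonpos (f := fun x => Fint f x * x ^ (-L)) hs
    (((continuousOn_Fint hf).mono fun x hx => hS0.le.trans hx.1).mul
      (ContinuousOn.rpow_const continuousOn_id fun x hx => Or.inl (hS0.trans_le hx.1).ne'))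
    (fun x hx => (hasDerivAt_Fint_of_pos hf (hS0.trans hx.1)).mul
      (hasDerivAt_rpow_const (Or.inl (hS0.trans hx.1).ne'))) fun x hx => by
      have hx0 : 0 < x := hS0.trans hx.1
      have hsplit : x ^ (-L) = x ^ (-L - 1) * x := by rw [← rpow_add_one hx0.ne', sub_add_cancel]
      calc f x * x ^ (-L) + Fint f x * (-L * x ^ (-L - 1))
          = x ^ (-L - 1) * (f x * x - L * Fint f x) := by rw [hsplit]; ring
        _ ≤ 0 := mul_nonpos_of_nonneg_of_nonpos (by positivity)
            (sub_nonpos.2 (h.mul_le_mul_Fint hf hfeq hx.1.le))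
  rwa [rpow_neg hs0.le, ← div_eq_mul_inv, div_le_iff₀ (by positivity)] at hanti

theorem exists_fstar_le_mul_rpow (h : SubcriticalBound f η L S) (hf : ContinuousOn f (Ici 0))
    (hfeq : Feq f) : ∃ C, 0 < C ∧ ∀ s, S ≤ s → fstar f s ≤ C * s ^ (L - 1) := by
  have hS0 : 0 < S := by linarith [h.one_le]
  have hL := h.const_pos
  have hFS : 0 < Fint f S := pos_of_mul_pos_right ((mul_pos (h.fstar_pos S le_rfl) hS0).trans_le
    (h.fstar_mul_le_mul_Fint hf hfeq le_rfl)) hL.le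
  refine ⟨L * (Fint f S * S ^ (-L)), by positivity, fun s hs => ?_⟩
  have hs0 : 0 < s := hS0.trans_le hs
  refine le_of_mul_le_mul_right ?_ hs0
  calc fstar f s * s ≤ L * Fint f s := h.fstar_mul_le_mul_Fint hf hfeq hs
    _ ≤ L * (Fint f S * S ^ (-L) * s ^ L) :=
      mul_le_mul_of_nonneg_left (h.Fint_le_mul_rpow hf hfeq hs) hL.le
    _ = L * (Fint f S * S ^ (-L)) * s ^ (L - 1) * s := by
      rw [mul_assoc _ (s ^ (L - 1)), ← rpow_add_one hs0.ne', sub_add_cancel]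
      ring

theorem tendsto_rpow_mul_fstar_rpow (h : SubcriticalBound f η L S) (hf : ContinuousOn f (Ici 0))
    (hfeq : Feq f) {α β : ℝ} (hα : 0 < α) (hαβ : 0 < α + β * (L - 1)) :
    Tendsto (fun d => d ^ α * fstar f d ^ β) atTop atTop := by
  rcases le_total 0 β with hβ | hβ
  · refine tendsto_atTop_mono' _ ?_ ((tendsto_rpow_atTop hα).atTop_mul_const
      (rpow_pos_of_pos (h.fstar_pos S le_rfl) β))
    filter_upwards [eventually_ge_atTop S] with d hd
    exact mul_le_mul_of_nonneg_left (rpow_le_rpow (h.fstar_pos S le_rfl).le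
      (fstar_mono hf h.one_le hd) hβ) (rpow_nonneg (by linarith [h.one_le]) α)
  · obtain ⟨C, hC, hle⟩ := h.exists_fstar_le_mul_rpow hf hfeq
    refine tendsto_atTop_mono' _ ?_ ((tendsto_rpow_atTop hαβ).atTop_mul_const
      (rpow_pos_of_pos hC β))
    filter_upwards [eventually_ge_atTop S] with d hd
    have hd0 : 0 < d := by linarith [h.one_le]
    calc d ^ (α + β * (L - 1)) * C ^ β = d ^ α * (C * d ^ (L - 1)) ^ β := by
          rw [mul_rpow hC.le (by positivity), ← rpow_mul hd0.le, rpow_add hd0, mul_comm β]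
          ring
      _ ≤ d ^ α * fstar f d ^ β := mul_le_mul_of_nonneg_left
          (rpow_le_rpow_of_nonpos (h.fstar_pos d hd) (hle d hd) hβ) (by positivity)

end SubcriticalBound

section LargeData

variable {p q η L S B : ℝ} {n : ℕ} {R1 R2 D d r t : ℝ} {f u v : ℝ → ℝ}

theorem RadialSystem.pow_mul_le_of_subcritical (h : RadialSystem q n (trunc f D) 0 R2 d u v)
    (hpq : p.HolderConjugate q) (hf : ContinuousOn f (Ici 0)) (hfeq : Feq f)
    (hfzero : Fzero p f) (hD : 1 < D) (hdD : d ≤ D) (hb : SubcriticalBound f η L S) (hd : S ≤ d)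
    (hB0 : 0 ≤ B)
    (hB : ∀ s, 0 ≤ s → -B ≤ (n + 1) * Fint f s - (n + 1 - p) / p * (f s * s))
    (ht : t ∈ Ioc 0 R2) (hvt : v t = 0) (hut : u t < 1) (hr : r ∈ Icc 0 t)
    (hur : ∀ s ∈ Icc 0 r, u s ∈ Icc (η * d) d) (hud : ∀ s ∈ Icc r t, u s ≤ d) :
    r ^ (n + 1) * ((n + 1 - max ((n + 1 - p) / p) 0 * L) * Fint f (η * d)) ≤
      R2 ^ (n + 1) * ((n + 1) * Fint f 0 + B) := by
  have hg := admissibleNonlin_trunc hpq.lt hf hfeq hfzero hD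
  have hηd := hb.one_le_mul d hd
  set c := (n + 1 - max ((n + 1 - p) / p) 0 * L) * Fint f (η * d)
  have hup := h.pohozaev_add_le hg hpq le_rfl hr.1 (hr.2.trans ht.2) (c := c) fun x hx => by
    obtain ⟨hlow, hupp⟩ := hur x (Ioo_subset_Icc_self hx)
    rw [trunc_of_mem (by linarith) (hupp.trans hdD),
      Fint_trunc hD.le (by linarith) (hupp.trans hdD)]
    exact hb.mul_Fint_le_pohozaev hf hfeq (by positivity) hd ⟨hlow, hupp⟩
  have hdown := h.pohozaev_add_le hg hpq hr.1 hr.2 ht.2 (c := -B) fun x hx => by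
    have hxD := (hud x (Ioo_subset_Icc_self hx)).trans hdD
    rcases le_total (u x) 0 with hux | hux
    · rw [hg.eq_zero_of_nonpos _ hux, zero_mul, mul_zero, sub_zero]
      exact (neg_nonpos.2 hB0).trans (mul_nonneg (by positivity) (hg.Fint_nonneg _))
    · rw [trunc_of_mem hux hxD, Fint_trunc hD.le hux hxD]
      exact hB _ hux
  rw [h.pohozaev_zero, zero_pow n.succ_ne_zero, sub_zero, zero_add] at hup
  rw [pohozaev_of_v_eq_zero hpq.symm.lt hvt] at hdown
  have htR : t ^ (n + 1) ≤ R2 ^ (n + 1) := pow_le_pow_left₀ ht.1.le ht.2 _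
  have hend : t ^ (n + 1) * Fint (trunc f D) (u t) ≤ R2 ^ (n + 1) * Fint f 0 :=
    mul_le_mul htR
      ((hg.Fint_le_Fint_zero hut.le).trans_eq (Fint_trunc hD.le le_rfl (by linarith)))
      (hg.Fint_nonneg _) (pow_nonneg (ht.1.le.trans ht.2) _)
  have hsum : r ^ (n + 1) * (c / (n + 1)) ≤
      R2 ^ (n + 1) * Fint f 0 + R2 ^ (n + 1) * (B / (n + 1)) := by
    have hBt := mul_le_mul_of_nonneg_right htR (show 0 ≤ B / ((n : ℝ) + 1) by positivity)
    have hBr : 0 ≤ r ^ (n + 1) * (B / ((n : ℝ) + 1)) :=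
      mul_nonneg (pow_nonneg hr.1 _) (by positivity)
    rw [neg_div] at hdown
    linarith
  calc r ^ (n + 1) * c = (n + 1) * (r ^ (n + 1) * (c / (n + 1))) := by field_simp
    _ ≤ (n + 1) * (R2 ^ (n + 1) * Fint f 0 + R2 ^ (n + 1) * (B / (n + 1))) :=
      mul_le_mul_of_nonneg_left hsum (by positivity)
    _ = R2 ^ (n + 1) * ((n + 1) * Fint f 0 + B) := by field_simp

theorem SubcriticalBound.tendsto_pow_mul_Fint (hb : SubcriticalBound f η L S)
    (hpq : p.HolderConjugate q) (hf : ContinuousOn f (Ici 0)) (hfeq : Feq f)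
    (hL : ((n : ℝ) + 1 - p) / p * L < n + 1) :
    Tendsto (fun d => (((1 - η) * d / fstar f d ^ (q - 1)) ^ (1 / q)) ^ (n + 1) *
      Fint f (η * d)) atTop atTop := by
  have hp0 := hpq.pos
  have hq0 := hpq.symm.pos
  have hη := sub_pos.2 hb.eta_lt_one
  have hL0 := hb.const_pos
  have hexp : (q - 1) / q = 1 / p := by
    rw [sub_div, div_self hq0.ne', one_div, one_div, ← hpq.inv_add_inv_eq_one, add_sub_cancel_right]
  set α := 1 + ((n : ℝ) + 1) / q with hα
  set β := 1 - ((n : ℝ) + 1) / p with hβ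
  have hαβ : 0 < α + β * (L - 1) := by
    have hsum : ((n : ℝ) + 1) / q + (n + 1) / p = n + 1 := by
      rw [div_eq_mul_inv, div_eq_mul_inv, ← mul_add, add_comm q⁻¹, hpq.inv_add_inv_eq_one, mul_one]
    have hβL : β * L = -(((n : ℝ) + 1 - p) / p * L) := by
      rw [hβ]
      field_simp
      ring
    linarith
  have htends := (hb.tendsto_rpow_mul_fstar_rpow hf hfeq (α := α) (by positivity) hαβ)
    |>.const_mul_atTop (show 0 < ((1 - η) ^ (1 / q)) ^ (n + 1) / L by positivity)
  refine tendsto_atTop_mono' _ ?_ htends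
  filter_upwards [eventually_ge_atTop S] with d hd
  have hd0 : 0 < d := by linarith [hb.one_le]
  have hΛ := hb.fstar_pos d hd
  have hpow : (((1 - η) * d / fstar f d ^ (q - 1)) ^ (1 / q)) ^ (n + 1) =
      ((1 - η) ^ (1 / q)) ^ (n + 1) * d ^ (((n : ℝ) + 1) / q) *
        (fstar f d ^ (((n : ℝ) + 1) / p))⁻¹ := by
    rw [div_rpow (by positivity) (by positivity), mul_rpow hη.le hd0.le, ← rpow_mul hΛ.le,
      mul_one_div, hexp, div_pow, mul_pow, ← rpow_mul_natCast hd0.le, ← rpow_mul_natCast hΛ.le,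
      div_eq_mul_inv]
    push_cast
    rw [one_div_mul_eq_div, one_div_mul_eq_div]
  calc ((1 - η) ^ (1 / q)) ^ (n + 1) / L * (d ^ α * fstar f d ^ β)
      = (((1 - η) * d / fstar f d ^ (q - 1)) ^ (1 / q)) ^ (n + 1) * (fstar f d * d / L) := by
        rw [hpow, hα, hβ, rpow_add hd0, rpow_one, rpow_sub hΛ, rpow_one]
        field_simp
    _ ≤ (((1 - η) * d / fstar f d ^ (q - 1)) ^ (1 / q)) ^ (n + 1) * Fint f (η * d) :=
        mul_le_mul_of_nonneg_left ((div_le_iff₀' hL0).2 (hb.fstar_mul_le d hd)) (by positivity)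

theorem largeDataDecay_of_subc (hpq : p.HolderConjugate q) (hf : ContinuousOn f (Ici 0))
    (hfeq : Feq f) (hfzero : Fzero p f) (hs : Fsubc p (n + 1) f) :
    LargeDataDecay q n 0 R2 f := by
  refine largeDataDecay_of_turn hpq.lt hf hfeq hfzero ?_
  obtain ⟨η, hs⟩ := hs
  obtain ⟨L, S, hb, hL⟩ := hs.exists_subcriticalBound hpq.pos n.succ_pos hf hfeq
  push_cast at hL
  have hn : 0 < (n : ℝ) + 1 := by positivity
  obtain ⟨B, hB0, hB⟩ := hb.exists_neg_le_pohozaev hf hfeq hn.le hL.le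
  have hc : 0 < n + 1 - max (((n : ℝ) + 1 - p) / p) 0 * L := by
    rcases max_choice (((n : ℝ) + 1 - p) / p) 0 with hmax | hmax <;> rw [hmax] <;> linarith
  have hlim := (hb.tendsto_pow_mul_Fint hpq hf hfeq hL).const_mul_atTop hc
  filter_upwards [hlim.eventually_gt_atTop (R2 ^ (n + 1) * ((n + 1) * Fint f 0 + B)),
    eventually_ge_atTop S, eventually_gt_atTop 1] with d hd hdS hd1 D hD u v h t ht hvt hut hanti
  have hd0 : 0 < d := by linarith
  have hηd := hb.one_le_mul d hdS
  have hη := hb.eta_lt_one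
  obtain ⟨r, hr, hur, hus⟩ := h.exists_level ht hanti (mul_le_of_le_one_left hd0.le hη.le)
    (hut.le.trans hηd)
  have hfall := h.rpow_sub_div_le hpq (hb.fstar_pos d hdS) ⟨hr.1, hr.2.trans ht.2⟩
    (hur ▸ mul_le_of_le_one_left hd0.le hη.le) fun s hs => by
      obtain ⟨hlow, hupp⟩ := hus s hs
      rw [trunc_of_mem (by linarith) (hupp.trans hD)]
      exact le_fstar hf ⟨hηd.trans hlow, hupp⟩
  rw [hur, ← one_sub_mul] at hfall
  have hbase : 0 ≤ ((1 - η) * d / fstar f d ^ (q - 1)) ^ (1 / q) :=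
    rpow_nonneg (div_nonneg (mul_nonneg (by linarith) hd0.le)
      (rpow_nonneg (hb.fstar_pos d hdS).le _)) _
  refine absurd hd (not_lt.2 ?_)
  calc _ ≤ (n + 1 - max ((n + 1 - p) / p) 0 * L) * (r ^ (n + 1) * Fint f (η * d)) :=
        mul_le_mul_of_nonneg_left (mul_le_mul_of_nonneg_right (pow_le_pow_left₀ hbase hfall _)
          (Fint_nonneg_of_one_le hf hfeq hηd)) hc.le
    _ = r ^ (n + 1) * ((n + 1 - max ((n + 1 - p) / p) 0 * L) * Fint f (η * d)) := by ring
    _ ≤ _ := h.pow_mul_le_of_subcritical hpq hf hfeq hfzero (hd1.trans_le hD) hD hb hdS hB0 hB ht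
        hvt hut hr hus fun s hs => h.u_left ▸
          hanti ⟨le_rfl, ht.1.le⟩ ⟨hr.1.trans hs.1, hs.2⟩ (hr.1.trans hs.1)

theorem largeDataDecay (hpq : p.HolderConjugate q) (hR1 : 0 ≤ R1) (hf : ContinuousOn f (Ici 0))
    (hfeq : Feq f) (hfzero : Fzero p f) (hball : R1 = 0 → Fsubl p f ∨ Fsubc p (n + 1) f) :
    LargeDataDecay q n R1 R2 f := by
  by_cases hB : ∃ B, ∀ s, 1 ≤ s → Fint f s ≤ B
  · obtain ⟨B, hB⟩ := hB
    exact largeDataDecay_of_Fint_le hpq hf hfeq hfzero hB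
  have hF := tendsto_Fint_atTop hf hfeq hB
  rcases hR1.eq_or_lt with rfl | hpos
  · exact (hball rfl).elim (largeDataDecay_of_subl hpq hf hfeq hfzero hF)
      (largeDataDecay_of_subc hpq hf hfeq hfzero)
  · exact largeDataDecay_of_left_pos hpq hpos hf hfeq hfzero hF

end LargeData

section Annulus

variable {p q : ℝ} {n : ℕ} {g : ℝ → ℝ} {R1 R3 : ℝ}

theorem AdmissibleNonlin.exists_le_Fint (h : AdmissibleNonlin p g) {α : ℝ} (hα : 0 < α) :
    ∃ e > 0, ∀ x, α ≤ |x - 1| → e ≤ Fint g x := by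
  refine ⟨min (Fint g (1 + α)) (Fint g (1 - α)),
    lt_min (h.Fint_pos (by linarith)) (h.Fint_pos (by linarith)), fun x hx => ?_⟩
  rcases le_abs.1 hx with hx | hx
  · exact (min_le_left _ _).trans (h.Fint_mono (by linarith) (by linarith))
  · exact (min_le_right _ _).trans (h.Fint_anti (by linarith) (by linarith))

namespace RadialSystem

theorem abs_u_sub_left_le {T d C : ℝ} {u v : ℝ → ℝ} (h : RadialSystem q n g R1 T d u v)
    (hq : 1 < q) (hC : 0 ≤ C) (hg : ∀ s, |g s| ≤ C) (hT : T ∈ Icc R1 R3) :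
    |u T - d| ≤ (C * R3) ^ (q - 1) * (T - R1) := by
  have hspeed : ∀ r ∈ Icc R1 T, |phip q (v r / r ^ n)| ≤ (C * R3) ^ (q - 1) := fun r hr => by
    rw [abs_phip hq]
    exact rpow_le_rpow (abs_nonneg _) ((h.abs_v_div_pow_le hC hg hr).trans
      (mul_le_mul_of_nonneg_left (hr.2.trans hT.2) hC)) (by linarith)
  simpa only [h.u_left, abs_of_nonneg (sub_nonneg.2 hT.1)] using
    h.abs_u_sub_le hspeed (right_mem_Icc.2 hT.1) (left_mem_Icc.2 hT.1)

theorem exists_energy_lt (hg : Continuous g) (hq : 1 < q) (n : ℕ) {s e : ℝ} (hs : 0 < s)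
    (he : 0 < e) : ∃ ε > 0, ∀ T ≥ s, ∀ u v : ℝ → ℝ, |u T - 1| < ε → |v T| < ε →
      energy q n g u v T < e := by
  have hcont : Continuous fun z : ℝ × ℝ => |z.2 / s ^ n| ^ q / q + Fint g z.1 := by
    have habs : Continuous fun x : ℝ => |x| ^ q / q :=
      continuous_iff_continuousAt.2 fun x => (hasDerivAt_abs_rpow_div hq x).continuousAt
    exact (habs.comp (continuous_snd.div_const _)).add ((continuous_Fint hg).comp continuous_fst)
  have hnhds := (hcont.continuousAt (x := ((1 : ℝ), (0 : ℝ)))).eventually_lt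
    (continuousAt_const (y := e)) (by simpa [zero_rpow (show q ≠ 0 by linarith)] using he)
  obtain ⟨ε, hε, hball⟩ := Metric.eventually_nhds_iff.1 hnhds
  refine ⟨ε, hε, fun T hT u v hu hv => lt_of_le_of_lt ?_ (hball (y := (u T, v T)) ?_)⟩
  · have hquot : |v T / T ^ n| ≤ |v T / s ^ n| := by
      rw [abs_div, abs_div, abs_of_pos (pow_pos hs n), abs_of_pos (pow_pos (hs.trans_le hT) n)]
      gcongr
    unfold energy
    gcongr
  · simpa [Prod.dist_eq, Real.dist_eq] using ⟨hu, hv⟩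

theorem exists_le_energy (hg : AdmissibleNonlin p g) (hq : 1 < q) (n : ℕ) (hR1 : 0 ≤ R1)
    (hR : R1 < R3) {α : ℝ} (hα : 0 < α) :
    ∃ s > 0, ∃ e > 0, ∀ T ∈ Icc R1 R3, ∀ d u v, RadialSystem q n g R1 T d u v → α ≤ |d - 1| →
      α / 2 ≤ |u T - 1| ∨ s ≤ T ∧ e ≤ energy q n g u v T := by
  obtain ⟨C, hC, hgC⟩ := hg.bounded
  have hR3 : 0 < R3 := hR1.trans_lt hR
  obtain ⟨m, hm⟩ := exists_nat_ge (n * q)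
  obtain ⟨e, he, hfar⟩ := hg.exists_le_Fint (half_pos hα)
  set K := (C * R3) ^ (q - 1)
  have hK0 : 0 < K := rpow_pos_of_pos (mul_pos hC hR3) _
  set δ := α / (2 * K) with hδ
  have hKδ : K * δ = α / 2 := by rw [hδ]; field_simp
  have hδ0 : 0 < δ := by positivity
  have hstay : ∀ T ∈ Icc R1 R3, T ≤ R1 + δ → ∀ d u v, RadialSystem q n g R1 T d u v →
      α ≤ |d - 1| → α / 2 ≤ |u T - 1| := by
    intro T hT hTδ d u v h hd
    have hmove : K * (T - R1) ≤ α / 2 :=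
      (mul_le_mul_of_nonneg_left (by linarith) hK0.le).trans_eq hKδ
    have htri := abs_sub_le d (u T) 1
    rw [abs_sub_comm d (u T)] at htri
    linarith [h.abs_u_sub_left_le hq hC.le hgC hT]
  refine ⟨R1 + δ, by linarith, (R1 + δ) ^ (m + 1) * e / R3 ^ (m + 1), by positivity,
    fun T hT d u v h hd => ?_⟩
  rcases le_total T (R1 + δ) with hTδ | hTδ
  · exact .inl (hstay T hT hTδ d u v h hd)
  refine .inr ⟨hTδ, (div_le_iff₀ (pow_pos hR3 _)).2 ?_⟩
  have hstart : e ≤ energy q n g u v (R1 + δ) :=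
    (hfar _ (hstay _ ⟨by linarith, hTδ.trans hT.2⟩ le_rfl d u v (h.mono_right hTδ) hd)).trans
      (Fint_le_energy hq _)
  have hT0 : 0 ≤ energy q n g u v T := (hg.Fint_nonneg _).trans (Fint_le_energy hq T)
  calc (R1 + δ) ^ (m + 1) * e ≤ (R1 + δ) ^ (m + 1) * energy q n g u v (R1 + δ) := by gcongr
    _ ≤ T ^ (m + 1) * energy q n g u v T :=
        h.pow_mul_energy_mono hg hq hm (by linarith) hTδ le_rfl
    _ ≤ R3 ^ (m + 1) * energy q n g u v T :=
        mul_le_mul_of_nonneg_right (pow_le_pow_left₀ (hR1.trans hT.1) hT.2 _) hT0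
    _ = energy q n g u v T * R3 ^ (m + 1) := mul_comm _ _

theorem exists_sq_lt (hg : AdmissibleNonlin p g) (hq : 1 < q) (n : ℕ) (hR1 : 0 ≤ R1)
    (hR : R1 < R3) {α : ℝ} (hα : 0 < α) :
    ∃ ρ, 0 < ρ ∧ ρ < α ∧ ∀ T ∈ Icc R1 R3, ∀ d u v, RadialSystem q n g R1 T d u v →
      α ≤ |d - 1| → ρ ^ 2 < (u T - 1) ^ 2 + v T ^ 2 := by
  obtain ⟨s, hs, e, he, hfar⟩ := exists_le_energy hg hq n hR1 hR hα
  obtain ⟨ε, hε, hnear⟩ := exists_energy_lt hg.cont hq n hs he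
  have hρε := min_le_left (ε / 2) (α / 4)
  have hρα := min_le_right (ε / 2) (α / 4)
  have hρ : 0 < min (ε / 2) (α / 4) := by positivity
  refine ⟨min (ε / 2) (α / 4), hρ, by linarith, fun T hT d u v h hd => ?_⟩
  by_contra! hcon
  have hu : |u T - 1| ≤ _ := abs_le_of_sq_le_sq (by nlinarith only [hcon, sq_nonneg (v T)]) hρ.le
  have hv : |v T| ≤ _ := abs_le_of_sq_le_sq (by nlinarith only [hcon, sq_nonneg (u T - 1)]) hρ.le
  rcases hfar T hT d u v h hd with hT' | ⟨hsT, heT⟩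
  · linarith
  · exact (hnear T hsT u v (by linarith) (by linarith)).not_ge heT

theorem exists_lt_sq (hg : AdmissibleNonlin p g) (hq : 1 < q) (n : ℕ) (hR1 : 0 ≤ R1)
    (hR : R1 < R3) {β : ℝ} (hβ : 0 < β) :
    ∃ ρ, β < ρ ∧ ∀ T ∈ Icc R1 R3, ∀ d u v, RadialSystem q n g R1 T d u v →
      |d - 1| ≤ β → (u T - 1) ^ 2 + v T ^ 2 < ρ ^ 2 := by
  obtain ⟨C, hC, hgC⟩ := hg.bounded
  have hR3 : 0 < R3 := hR1.trans_lt hR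
  set A := β + (C * R3) ^ (q - 1) * (R3 - R1)
  set B := C * R3 ^ (n + 1)
  have hβA : β ≤ A := le_add_of_nonneg_right (mul_nonneg (by positivity) (by linarith))
  have hB : 0 < B := by positivity
  refine ⟨A + B, by linarith, fun T hT d u v h hd => ?_⟩
  have hu : |u T - 1| ≤ A := by
    have hmove : (C * R3) ^ (q - 1) * (T - R1) ≤ (C * R3) ^ (q - 1) * (R3 - R1) :=
      mul_le_mul_of_nonneg_left (sub_le_sub_right hT.2 _) (by positivity)
    linarith [abs_sub_le (u T) d 1, h.abs_u_sub_left_le hq hC.le hgC hT]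
  have hv : |v T| ≤ B := (abs_flux_le hR1 hC.le h.v_left hT.1 h.hasDerivAt_v fun _ _ => hgC _).trans
    (mul_le_mul_of_nonneg_left (pow_le_pow_left₀ (hR1.trans hT.1) hT.2 _) hC.le)
  have hu2 : (u T - 1) ^ 2 ≤ A ^ 2 := by rw [← sq_abs]; gcongr
  have hv2 : v T ^ 2 ≤ B ^ 2 := by rw [← sq_abs]; gcongr
  nlinarith only [hu2, hv2, mul_pos (hβ.trans_le hβA) hB]

end RadialSystem

end Annulus

section Polar

/-- The slope `v / r ^ n` of the flux clamped to `[-C r, C r]`, an interval it cannot leave along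
solutions; unlike the slope itself it is continuous up to `r = 0`. -/
noncomputable def clampedQuotient (n : ℕ) (C r v : ℝ) : ℝ :=
  max (-(C * r)) (min (v / r ^ n) (C * r))

theorem abs_clampedQuotient_le (n : ℕ) {C r : ℝ} (hC : 0 ≤ C) (hr : 0 ≤ r) (v : ℝ) :
    |clampedQuotient n C r v| ≤ C * r :=
  abs_le.2 ⟨le_max_left _ _,
    max_le (neg_le_self (mul_nonneg hC hr)) (min_le_right _ _)⟩

theorem clampedQuotient_eq {n : ℕ} {C r v : ℝ} (hC : 0 ≤ C) (hr : 0 ≤ r)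
    (hv : |v| ≤ C * r ^ (n + 1)) : clampedQuotient n C r v = v / r ^ n := by
  have hquot : |v / r ^ n| ≤ C * r := by
    rw [abs_div, abs_of_nonneg (pow_nonneg hr _)]
    refine div_le_of_le_mul₀ (by positivity) (by positivity) ?_
    rwa [mul_assoc, ← pow_succ']
  rw [abs_le] at hquot
  rw [clampedQuotient, min_eq_left hquot.2, max_eq_right hquot.1]

theorem continuousOn_clampedQuotient (n : ℕ) {C : ℝ} (hC : 0 ≤ C) :
    ContinuousOn (Function.uncurry (clampedQuotient n C)) (Ici 0 ×ˢ univ) := by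
  rintro ⟨r, v⟩ ⟨hr, -⟩
  have hbound : Continuous fun z : ℝ × ℝ => C * z.1 := by fun_prop
  rcases (mem_Ici.1 hr).eq_or_lt with rfl | hr0
  · have hval : clampedQuotient n C 0 v = 0 := by
      simpa only [mul_zero, abs_nonpos_iff] using abs_clampedQuotient_le n hC le_rfl v
    rw [ContinuousWithinAt, Function.uncurry_apply_pair, hval]
    refine squeeze_zero_norm' (a := fun z : ℝ × ℝ => C * z.1) ?_ ?_
    · filter_upwards [self_mem_nhdsWithin] with z hz
      exact abs_clampedQuotient_le n hC hz.1 _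
    · simpa only [mul_zero] using (hbound.tendsto (0, v)).mono_left nhdsWithin_le_nhds
  · have hquot : ContinuousAt (fun z : ℝ × ℝ => z.2 / z.1 ^ n) (r, v) :=
      continuousAt_snd.div (continuousAt_fst.pow _) (pow_pos hr0 _).ne'
    have hclamp : ContinuousAt (Function.uncurry (clampedQuotient n C)) (r, v) :=
      hbound.continuousAt.neg.max (hquot.min hbound.continuousAt)
    exact hclamp.continuousWithinAt

/-- Polar coordinates for the radial system around the equilibrium `(1, 0)`: the point `(u, v)` is
`(1 + σ e^ℓ cos θ, -σ e^ℓ sin θ)`. The sign `σ = ±1` is the side of `1` on which the datum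
`1 + σ m` lies, so that `θ` starts at `0` in both cases. -/
structure PolarSystem (σ q : ℝ) (n : ℕ) (g : ℝ → ℝ) (R1 T m : ℝ) (ℓ θ : ℝ → ℝ) : Prop where
  angle_left : θ R1 = 0
  system : RadialSystem q n g R1 T (1 + σ * m) (fun r => 1 + σ * (exp (ℓ r) * cos (θ r)))
    (fun r => -(σ * (exp (ℓ r) * sin (θ r))))
  hasDerivAt_angle : ∀ r ∈ Icc R1 T, HasDerivAt θ (σ * exp (-ℓ r) *
    (r ^ n * g (1 + σ * (exp (ℓ r) * cos (θ r))) * cos (θ r) -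
      phip q (-(σ * (exp (ℓ r) * sin (θ r))) / r ^ n) * sin (θ r))) r

/-- The vector field of the polar system in the variables `(ℓ, θ)`. The radius is clamped to
`[R1, R3]`, `ℓ` to `[ℓ0, ℓ1]` and the slope by `clampedQuotient`, which makes the field bounded and
continuous everywhere. -/
noncomputable def polarField (σ q : ℝ) (n : ℕ) (g : ℝ → ℝ) (C R1 R3 ℓ0 ℓ1 r : ℝ) (X : ℝ × ℝ) :
    ℝ × ℝ :=
  let r' := max R1 (min r R3)
  let ℓ := max ℓ0 (min X.1 ℓ1)
  let W := r' ^ n * g (1 + σ * (exp ℓ * cos X.2))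
  let G := phip q (clampedQuotient n C r' (-(σ * (exp ℓ * sin X.2))))
  (σ * exp (-ℓ) * (G * cos X.2 + W * sin X.2), σ * exp (-ℓ) * (W * cos X.2 - G * sin X.2))

variable {p q : ℝ} {n : ℕ} {g : ℝ → ℝ} {R1 R3 C σ ℓ0 ℓ1 : ℝ}

theorem continuous_polarField (σ ℓ0 ℓ1 : ℝ) (hg : Continuous g) (hq : 1 < q) (hC : 0 ≤ C)
    (hR1 : 0 ≤ R1) : Continuous (Function.uncurry (polarField σ q n g C R1 R3 ℓ0 ℓ1)) := by
  have hG : Continuous fun z : ℝ × ℝ × ℝ => phip q (clampedQuotient n C (max R1 (min z.1 R3))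
      (-(σ * (exp (max ℓ0 (min z.2.1 ℓ1)) * sin z.2.2)))) :=
    (continuous_phip hq).comp ((continuousOn_clampedQuotient n hC).comp_continuous
      (f := fun z : ℝ × ℝ × ℝ => (max R1 (min z.1 R3),
        (-(σ * (exp (max ℓ0 (min z.2.1 ℓ1)) * sin z.2.2))))) (by fun_prop)
      (fun z => ⟨hR1.trans (le_max_left _ _), mem_univ _⟩))
  have hW : Continuous fun z : ℝ × ℝ × ℝ => (max R1 (min z.1 R3)) ^ n *
      g (1 + σ * (exp (max ℓ0 (min z.2.1 ℓ1)) * cos z.2.2)) := by fun_prop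
  have hE : Continuous fun z : ℝ × ℝ × ℝ => σ * exp (-max ℓ0 (min z.2.1 ℓ1)) := by fun_prop
  have hc : Continuous fun z : ℝ × ℝ × ℝ => cos z.2.2 := by fun_prop
  have hs : Continuous fun z : ℝ × ℝ × ℝ => sin z.2.2 := by fun_prop
  exact (hE.mul ((hG.mul hc).add (hW.mul hs))).prodMk (hE.mul ((hW.mul hc).sub (hG.mul hs)))

theorem abs_mul_add_mul_le {a b c d A B : ℝ} (ha : |a| ≤ A) (hb : |b| ≤ B) (hc : |c| ≤ 1)
    (hd : |d| ≤ 1) : |a * c + b * d| ≤ A + B := by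
  refine (abs_add_le _ _).trans (add_le_add ?_ ?_) <;> rw [abs_mul]
  · exact (mul_le_of_le_one_right (abs_nonneg _) hc).trans ha
  · exact (mul_le_of_le_one_right (abs_nonneg _) hd).trans hb

theorem norm_polarField_le (hσ : |σ| = 1) (hq : 1 < q) (hC : 0 ≤ C) (hg : ∀ s, |g s| ≤ C)
    (hR1 : 0 ≤ R1) (hR : R1 ≤ R3) (ℓ0 ℓ1 r : ℝ) (X : ℝ × ℝ) :
    ‖polarField σ q n g C R1 R3 ℓ0 ℓ1 r X‖ ≤
      exp (-ℓ0) * ((C * R3) ^ (q - 1) + R3 ^ n * C) := by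
  have hr0 : 0 ≤ max R1 (min r R3) := hR1.trans (le_max_left _ _)
  have hrR : max R1 (min r R3) ≤ R3 := max_le hR (min_le_right _ _)
  have hE : |σ * exp (-max ℓ0 (min X.1 ℓ1))| ≤ exp (-ℓ0) := by
    rw [abs_mul, hσ, one_mul, abs_of_pos (exp_pos _)]
    exact exp_le_exp.2 (neg_le_neg (le_max_left _ _))
  have hW : ∀ s, |max R1 (min r R3) ^ n * g s| ≤ R3 ^ n * C := fun s => by
    rw [abs_mul, abs_of_nonneg (pow_nonneg hr0 _)]
    exact mul_le_mul (pow_le_pow_left₀ hr0 hrR n) (hg s) (abs_nonneg _)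
      (pow_nonneg (hR1.trans hR) n)
  have hG : ∀ v, |phip q (clampedQuotient n C (max R1 (min r R3)) v)| ≤ (C * R3) ^ (q - 1) :=
    fun v => by
      rw [abs_phip hq]
      exact rpow_le_rpow (abs_nonneg _) ((abs_clampedQuotient_le n hC hr0 v).trans
        (mul_le_mul_of_nonneg_left hrR hC)) (by linarith)
  have hprod : ∀ {a : ℝ}, |a| ≤ (C * R3) ^ (q - 1) + R3 ^ n * C →
      ‖σ * exp (-max ℓ0 (min X.1 ℓ1)) * a‖ ≤ exp (-ℓ0) * ((C * R3) ^ (q - 1) + R3 ^ n * C) :=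
    fun ha => by
      rw [Real.norm_eq_abs, abs_mul]
      exact mul_le_mul hE ha (abs_nonneg _) (exp_pos _).le
  refine norm_prod_le_iff.2 ⟨hprod (abs_mul_add_mul_le (hG _) (hW _) (abs_cos_le_one _)
    (abs_sin_le_one _)), hprod ?_⟩
  rw [sub_eq_neg_add, ← mul_neg]
  exact abs_mul_add_mul_le (hG _) (hW _) ((abs_neg _).trans_le (abs_sin_le_one _))
    (abs_cos_le_one _)

theorem sq_add_sq_polar (hσ : σ * σ = 1) (ℓ θ : ℝ) :
    (1 + σ * (exp ℓ * cos θ) - 1) ^ 2 + (-(σ * (exp ℓ * sin θ))) ^ 2 = exp ℓ ^ 2 := by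
  linear_combination (exp ℓ ^ 2 * (cos θ ^ 2 + sin θ ^ 2)) * hσ +
    exp ℓ ^ 2 * cos_sq_add_sin_sq θ

theorem hasDerivAt_exp_mul_cos {ℓ θ : ℝ → ℝ} {G W r : ℝ} (hσ : σ * σ = 1)
    (hℓ : HasDerivAt ℓ (σ * exp (-ℓ r) * (G * cos (θ r) + W * sin (θ r))) r)
    (hθ : HasDerivAt θ (σ * exp (-ℓ r) * (W * cos (θ r) - G * sin (θ r))) r) :
    HasDerivAt (fun r => 1 + σ * (exp (ℓ r) * cos (θ r))) G r := by
  have hexp : exp (ℓ r) * exp (-ℓ r) = 1 := by rw [← exp_add, add_neg_cancel, exp_zero]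
  refine (((hℓ.exp.mul hθ.cos).const_mul σ).const_add 1).congr_deriv ?_
  linear_combination (G * σ * σ * (cos (θ r) ^ 2 + sin (θ r) ^ 2)) * hexp +
    (G * (cos (θ r) ^ 2 + sin (θ r) ^ 2)) * hσ + G * cos_sq_add_sin_sq (θ r)

theorem hasDerivAt_neg_exp_mul_sin {ℓ θ : ℝ → ℝ} {G W r : ℝ} (hσ : σ * σ = 1)
    (hℓ : HasDerivAt ℓ (σ * exp (-ℓ r) * (G * cos (θ r) + W * sin (θ r))) r)
    (hθ : HasDerivAt θ (σ * exp (-ℓ r) * (W * cos (θ r) - G * sin (θ r))) r) :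
    HasDerivAt (fun r => -(σ * (exp (ℓ r) * sin (θ r)))) (-W) r := by
  have hexp : exp (ℓ r) * exp (-ℓ r) = 1 := by rw [← exp_add, add_neg_cancel, exp_zero]
  refine ((hℓ.exp.mul hθ.sin).const_mul σ).fun_neg.congr_deriv ?_
  linear_combination -(W * σ * σ * (cos (θ r) ^ 2 + sin (θ r) ^ 2)) * hexp -
    (W * (cos (θ r) ^ 2 + sin (θ r) ^ 2)) * hσ - W * cos_sq_add_sin_sq (θ r)

theorem PolarSystem.of_isCauchySolution (hσ : σ * σ = 1) (hC : 0 ≤ C) (hg : ∀ s, |g s| ≤ C)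
    (hR1 : 0 ≤ R1) {T m : ℝ} (hTR : T ≤ R3) (hm : 0 < m) {X : ℝ → ℝ × ℝ}
    (hX : IsCauchySolution (polarField σ q n g C R1 R3 ℓ0 ℓ1) R1 T (log m, 0) X)
    (hℓ : ∀ r ∈ Icc R1 T, (X r).1 ∈ Icc ℓ0 ℓ1) :
    PolarSystem σ q n g R1 T m (fun r => (X r).1) (fun r => (X r).2) := by
  let v : ℝ → ℝ := fun r => -(σ * (exp (X r).1 * sin (X r).2))
  let W : ℝ → ℝ := fun r => r ^ n * g (1 + σ * (exp (X r).1 * cos (X r).2))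
  let G : ℝ → ℝ := fun r => phip q (clampedQuotient n C r (v r))
  have hfield : ∀ r ∈ Icc R1 T, polarField σ q n g C R1 R3 ℓ0 ℓ1 r (X r) =
      (σ * exp (-(X r).1) * (G r * cos (X r).2 + W r * sin (X r).2),
        σ * exp (-(X r).1) * (W r * cos (X r).2 - G r * sin (X r).2)) := fun r hr => by
    simp only [polarField, min_eq_left (hr.2.trans hTR), max_eq_right hr.1,
      min_eq_left (hℓ r hr).2, max_eq_right (hℓ r hr).1, G, W, v]
  have hdX : ∀ r ∈ Icc R1 T, HasDerivAt X _ r := fun r hr => (hX.2 r hr).congr_deriv (hfield r hr)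
  have hdℓ : ∀ r ∈ Icc R1 T, HasDerivAt (fun r => (X r).1) _ r := fun r hr =>
    hasFDerivAt_fst.comp_hasDerivAt r (hdX r hr)
  have hdθ : ∀ r ∈ Icc R1 T, HasDerivAt (fun r => (X r).2) _ r := fun r hr =>
    hasFDerivAt_snd.comp_hasDerivAt r (hdX r hr)
  have hv0 : v R1 = 0 := by simp [v, hX.1]
  have hdv : ∀ r ∈ Icc R1 T, HasDerivAt v (-W r) r := fun r hr =>
    hasDerivAt_neg_exp_mul_sin hσ (hdℓ r hr) (hdθ r hr)
  have hdu : ∀ r ∈ Icc R1 T,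
      HasDerivAt (fun r => 1 + σ * (exp (X r).1 * cos (X r).2)) (G r) r := fun r hr =>
    hasDerivAt_exp_mul_cos hσ (hdℓ r hr) (hdθ r hr)
  have hG : ∀ r ∈ Icc R1 T, G r = phip q (v r / r ^ n) := fun r hr =>
    congrArg (phip q) (clampedQuotient_eq hC (hR1.trans hr.1)
      (abs_flux_le hR1 hC hv0 hr.1 (fun s hs => hdv s ⟨hs.1, hs.2.trans hr.2⟩) fun _ _ => hg _))
  refine ⟨congrArg Prod.snd hX.1, ⟨hR1, ?_, hv0, fun r hr => ?_, hdv⟩, fun r hr => ?_⟩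
  · simp [hX.1, exp_log hm]
  · rw [← hG r hr]; exact hdu r hr
  · rw [← hG r hr]; exact hdθ r hr

theorem PolarSystem.of_isCauchySolution_of_forall_lt (hσ : σ * σ = 1) (hC : 0 ≤ C)
    (hg : ∀ s, |g s| ≤ C) (hR1 : 0 ≤ R1) {ρ0 ρ1 m : ℝ} (hρ0 : 0 < ρ0) (hm : m ∈ Ioo ρ0 ρ1)
    (hρ : ∀ T ∈ Icc R1 R3, ∀ u v, RadialSystem q n g R1 T (1 + σ * m) u v →
      ρ0 ^ 2 < (u T - 1) ^ 2 + v T ^ 2 ∧ (u T - 1) ^ 2 + v T ^ 2 < ρ1 ^ 2)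
    {X : ℝ → ℝ × ℝ}
    (hX : IsCauchySolution (polarField σ q n g C R1 R3 (log ρ0) (log ρ1)) R1 R3 (log m, 0) X) :
    PolarSystem σ q n g R1 R3 m (fun r => (X r).1) (fun r => (X r).2) := by
  have hm0 : 0 < m := hρ0.trans hm.1
  have hρ1 : 0 < ρ1 := hm0.trans hm.2
  let f : ℝ → ℝ := fun r => max (log ρ0 - (X r).1) ((X r).1 - log ρ1)
  have hf : ∀ {r}, f r ≤ 0 ↔ (X r).1 ∈ Icc (log ρ0) (log ρ1) := by
    simp only [f, max_le_iff, sub_nonpos, mem_Icc, implies_true]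
  have hf' : ∀ {r}, f r < 0 ↔ log ρ0 < (X r).1 ∧ (X r).1 < log ρ1 := by
    simp only [f, max_lt_iff, sub_neg, implies_true]
  have hfcont : ContinuousOn f (Icc R1 R3) := by
    have hX1 : ContinuousOn (fun r => (X r).1) (Icc R1 R3) :=
      continuous_fst.comp_continuousOn (HasDerivAt.continuousOn hX.2)
    fun_prop
  have hinside : ∀ t ∈ Icc R1 R3, (∀ r ∈ Icc R1 t, f r ≤ 0) → f t < 0 := fun t ht hft => by
    have hP := of_isCauchySolution (T := t) hσ hC hg hR1 ht.2 hm0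
      ⟨hX.1, fun r hr => hX.2 r ⟨hr.1, hr.2.trans ht.2⟩⟩ fun r hr => hf.1 (hft r hr)
    have hsq := hρ t ht _ _ hP.system
    simp only [sq_add_sq_polar hσ, sq_lt_sq₀ hρ0.le (exp_pos _).le,
      sq_lt_sq₀ (exp_pos _).le hρ1.le] at hsq
    exact hf'.2 ⟨(log_lt_iff_lt_exp hρ0).2 hsq.1, (lt_log_iff_exp_lt hρ1).2 hsq.2⟩
  refine of_isCauchySolution hσ hC hg hR1 le_rfl hm0 hX fun b hb => hf.1 ?_
  by_contra! hfb
  obtain ⟨t, ht, ht0, htneg⟩ := exists_first_zero hb.1 (hfcont.mono (Icc_subset_Icc_right hb.2))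
    (hf'.2 (by rw [hX.1]; exact ⟨log_lt_log hρ0 hm.1, log_lt_log hm0 hm.2⟩)) hfb.le
  refine (hinside t ⟨ht.1.le, ht.2.trans hb.2⟩ fun r hr => ?_).ne ht0
  exact hr.2.eq_or_lt.elim (fun h => (h ▸ ht0).le) fun h => (htneg r ⟨hr.1, h⟩).le

theorem PolarSystem.exists_angle_eq (hσ : σ * σ = 1) (hg : AdmissibleNonlin p g) (hq : 1 < q)
    (hR1 : 0 ≤ R1) (hR : R1 < R3) {T : ℝ} (hT : T ∈ Icc R1 R3) {α β c : ℝ} (hα : 0 < α)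
    (hαβ : α ≤ β) (hcα : ∀ ℓ θ, PolarSystem σ q n g R1 R3 α ℓ θ → c < θ T)
    (hcβ : ∀ ℓ θ, PolarSystem σ q n g R1 R3 β ℓ θ → θ T < c) :
    ∃ m ∈ Icc α β, ∃ ℓ θ, PolarSystem σ q n g R1 R3 m ℓ θ ∧ θ T = c := by
  have hσ1 : |σ| = 1 := (abs_eq zero_le_one).2 (mul_self_eq_one_iff.1 hσ)
  obtain ⟨ρ0, hρ0, hρα, hlow⟩ := RadialSystem.exists_sq_lt hg hq n hR1 hR hα
  obtain ⟨ρ1, hβρ, hhigh⟩ := RadialSystem.exists_lt_sq hg hq n hR1 hR (hα.trans_le hαβ)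
  obtain ⟨C, hC, hgC⟩ := hg.bounded
  set H := polarField σ q n g C R1 R3 (log ρ0) (log ρ1)
  have hpolar : ∀ m ∈ Icc α β, ∀ X, IsCauchySolution H R1 R3 (log m, 0) X →
      PolarSystem σ q n g R1 R3 m (fun r => (X r).1) (fun r => (X r).2) := by
    intro m hm X hX
    have hdatum : |1 + σ * m - 1| = m := by
      rw [add_sub_cancel_left, abs_mul, hσ1, one_mul, abs_of_pos (hα.trans_le hm.1)]
    exact of_isCauchySolution_of_forall_lt hσ hC.le hgC hR1 hρ0
      ⟨hρα.trans_le hm.1, hm.2.trans_lt hβρ⟩ (fun T hT u v h =>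
        ⟨hlow T hT _ u v h (hm.1.trans_eq hdatum.symm), hhigh T hT _ u v h (hdatum.trans_le hm.2)⟩)
      hX
  have hdata : ContinuousOn (fun m : ℝ => (log m, (0 : ℝ))) (Icc α β) :=
    (continuousOn_log.mono fun m hm => (hα.trans_le hm.1).ne').prodMk continuousOn_const
  have hbound := norm_polarField_le (n := n) (R3 := R3) hσ1 hq hC.le hgC hR1 hR.le (log ρ0) (log ρ1)
  obtain ⟨_, ⟨m, hm, rfl⟩, X, hX, hXc⟩ := exists_isCauchySolution_eq
    (K := ⟨_, (norm_nonneg _).trans (hbound 0 0)⟩)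
    (continuous_polarField σ (log ρ0) (log ρ1) hg.cont hq hC.le hR1) hbound hT
    (isCompact_Icc.image_of_continuousOn hdata) (isPreconnected_Icc.image _ hdata)
    continuous_snd (c := c) (mem_image_of_mem _ (right_mem_Icc.2 hαβ))
    (mem_image_of_mem _ (left_mem_Icc.2 hαβ))
    (fun X hX => hcβ _ _ (hpolar β (right_mem_Icc.2 hαβ) X hX))
    (fun X hX => hcα _ _ (hpolar α (left_mem_Icc.2 hαβ) X hX))
  exact ⟨m, hm, _, _, hpolar m hm X hX, hXc⟩

end Polar

section Crossing

theorem lt_of_le_of_upcrossing {θ θ' : ℝ → ℝ} {a b c : ℝ}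
    (hθ : ∀ x ∈ Icc a b, HasDerivAt θ (θ' x) x) (hup : ∀ x ∈ Icc a b, θ x = c → 0 < θ' x)
    (ha : c ≤ θ a) (hab : a < b) : c < θ b := by
  have hle : ∀ y ∈ Icc a b, c ≤ θ y :=
    image_le_of_deriv_right_lt_deriv_boundary' (f := fun _ => c) (f' := fun _ => 0)
      continuousOn_const (fun x _ => hasDerivWithinAt_const x _ c) ha (HasDerivAt.continuousOn hθ)
      (fun x hx => (hθ x (Ico_subset_Icc_self hx)).hasDerivWithinAt)
      (fun x hx h => hup x (Ico_subset_Icc_self hx) h.symm)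
  have hb : b ∈ Icc a b := right_mem_Icc.2 hab.le
  refine (hle b hb).lt_of_ne fun hcb => (hup b hb hcb.symm).not_ge ?_
  refine le_of_tendsto ((hasDerivAt_iff_tendsto_slope.1 (hθ b hb)).mono_left
    (nhdsWithin_mono b fun y (hy : y ∈ Iio b) => ne_of_lt hy)) ?_
  filter_upwards [Ioo_mem_nhdsLT hab] with y hy
  rw [slope_def_field, ← hcb]
  exact div_nonpos_of_nonneg_of_nonpos (by linarith [hle y ⟨hy.1.le, hy.2.le⟩]) (by linarith [hy.2])

theorem cos_eq_zero_iff_eq_pi_div_two_add {x : ℝ} : cos x = 0 ↔ ∃ i : ℤ, x = π / 2 + i * π := by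
  rw [cos_eq_zero_iff]
  exact exists_congr fun i => by rw [show (2 * (i : ℝ) + 1) * π / 2 = π / 2 + i * π by ring]

end Crossing

namespace PolarSystem

variable {σ q : ℝ} {n : ℕ} {g : ℝ → ℝ} {R1 T m x y : ℝ} {ℓ θ : ℝ → ℝ}

theorem continuousOn_angle (h : PolarSystem σ q n g R1 T m ℓ θ) : ContinuousOn θ (Icc R1 T) :=
  HasDerivAt.continuousOn h.hasDerivAt_angle

theorem left_lt_of_cos_eq_zero (h : PolarSystem σ q n g R1 T m ℓ θ) (hx : x ∈ Icc R1 T)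
    (hc : cos (θ x) = 0) : R1 < x := by
  refine hx.1.lt_of_ne ?_
  rintro rfl
  rw [h.angle_left, cos_zero] at hc
  exact one_ne_zero hc

theorem angleDeriv_pos (hσ : σ * σ = 1) (hq : 1 < q) {r l t : ℝ} (G : ℝ) (hr : 0 < r)
    (hc : cos t = 0) :
    0 < σ * exp (-l) * (G * cos t - phip q (-(σ * (exp l * sin t)) / r ^ n) * sin t) := by
  have hsin : sin t ≠ 0 := fun hs => by
    simpa only [hc, hs, zero_pow two_ne_zero, add_zero, zero_ne_one] using cos_sq_add_sin_sq t
  set w := -(σ * (exp l * sin t)) / r ^ n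
  have hw0 : w ≠ 0 := div_ne_zero
    (neg_ne_zero.2 (mul_ne_zero (left_ne_zero_of_mul_eq_one hσ)
      (mul_ne_zero (exp_pos l).ne' hsin))) (pow_pos hr n).ne'
  have hwr : w * r ^ n = -(σ * (exp l * sin t)) := div_mul_cancel₀ _ (pow_pos hr n).ne'
  have hexp : exp (-l) * exp l = 1 := by rw [← exp_add, neg_add_cancel, exp_zero]
  have hfactor : σ * exp (-l) * (G * cos t - phip q w * sin t) =
      exp (-l) ^ 2 * r ^ n * (phip q w * w) := by
    rw [hc]
    linear_combination (exp (-l) * phip q w * σ * sin t) * hexp - exp (-l) ^ 2 * phip q w * hwr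
  rw [hfactor, phip_mul_self hq]
  have := abs_pos.2 hw0
  positivity

theorem lt_angle_of_le (h : PolarSystem σ q n g R1 T m ℓ θ) (hσ : σ * σ = 1) (hq : 1 < q)
    (i : ℤ) (hx : R1 ≤ x) (hxy : x < y) (hy : y ≤ T) (hi : π / 2 + i * π ≤ θ x) :
    π / 2 + i * π < θ y := by
  refine lt_of_le_of_upcrossing
    (fun t ht => h.hasDerivAt_angle t ⟨hx.trans ht.1, ht.2.trans hy⟩) (fun t ht htc => ?_) hi hxy
  have hc : cos (θ t) = 0 := cos_eq_zero_iff_eq_pi_div_two_add.2 ⟨i, htc⟩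
  exact angleDeriv_pos hσ hq _ (h.system.left_nonneg.trans_lt
    (h.left_lt_of_cos_eq_zero ⟨hx.trans ht.1, ht.2.trans hy⟩ hc)) hc

theorem neg_pi_div_two_lt_angle (h : PolarSystem σ q n g R1 T m ℓ θ) (hσ : σ * σ = 1) (hq : 1 < q)
    (hx : x ∈ Icc R1 T) : -(π / 2) < θ x := by
  have hpi := pi_pos
  rcases hx.1.eq_or_lt with rfl | hx1
  · rw [h.angle_left]
    linarith
  · have hlt := h.lt_angle_of_le hσ hq (-1) le_rfl hx1 hx.2 (by
      rw [h.angle_left]; push_cast; linarith)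
    push_cast at hlt
    linarith

theorem eq_of_angle_eq (h : PolarSystem σ q n g R1 T m ℓ θ) (hσ : σ * σ = 1) (hq : 1 < q) {i : ℤ}
    (hx : x ∈ Icc R1 T) (hy : y ∈ Icc R1 T) (hxi : θ x = π / 2 + i * π)
    (hyi : θ y = π / 2 + i * π) : x = y := by
  rcases lt_trichotomy x y with hxy | hxy | hxy
  · exact absurd hyi (h.lt_angle_of_le hσ hq i hx.1 hxy hy.2 hxi.ge).ne'
  · exact hxy
  · exact absurd hxi (h.lt_angle_of_le hσ hq i hy.1 hxy hx.2 hyi.ge).ne'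

theorem image_angle_cos_eq_zero (h : PolarSystem σ q n g R1 T m ℓ θ) (hσ : σ * σ = 1) (hq : 1 < q)
    {R2 : ℝ} (hR12 : R1 < R2) (hR2 : R2 ≤ T) {j : ℕ} (hj : θ R2 = j * π) :
    θ '' {x ∈ Ioo R1 R2 | cos (θ x) = 0} = (fun i : ℕ => π / 2 + i * π) '' Iio j := by
  have hpi := pi_pos
  ext t
  constructor
  · rintro ⟨x, ⟨hx, hc⟩, rfl⟩
    obtain ⟨i, hi⟩ := cos_eq_zero_iff_eq_pi_div_two_add.1 hc
    have hlow := h.neg_pi_div_two_lt_angle hσ hq (x := x) ⟨hx.1.le, hx.2.le.trans hR2⟩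
    have hhigh := h.lt_angle_of_le hσ hq i hx.1.le hx.2 hR2 hi.ge
    have hi0 : -1 < i := by exact_mod_cast show (-1 : ℝ) < i by rw [hi] at hlow; nlinarith
    have hij : i < j := by exact_mod_cast show (i : ℝ) < j by rw [hj] at hhigh; nlinarith
    lift i to ℕ using by omega
    exact ⟨i, by exact_mod_cast hij, hi.symm⟩
  · rintro ⟨i, hi, rfl⟩
    have hij : (i : ℝ) + 1 ≤ j := by exact_mod_cast hi
    obtain ⟨x, hx, hxi⟩ := intermediate_value_Ioo hR12.le
      (h.continuousOn_angle.mono (Icc_subset_Icc_right hR2))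
      (show π / 2 + i * π ∈ Ioo (θ R1) (θ R2) from
        ⟨by rw [h.angle_left]; positivity, by rw [hj]; nlinarith⟩)
    exact ⟨x, ⟨hx, cos_eq_zero_iff_eq_pi_div_two_add.2 ⟨i, hxi⟩⟩, hxi⟩

theorem encard_cos_eq_zero (h : PolarSystem σ q n g R1 T m ℓ θ) (hσ : σ * σ = 1) (hq : 1 < q)
    {R2 : ℝ} (hR12 : R1 < R2) (hR2 : R2 ≤ T) {j : ℕ} (hj : θ R2 = j * π) :
    {x ∈ Ioo R1 R2 | cos (θ x) = 0}.encard = j := by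
  have hinj : InjOn θ {x ∈ Ioo R1 R2 | cos (θ x) = 0} := fun x hx y hy hxy => by
    obtain ⟨i, hi⟩ := cos_eq_zero_iff_eq_pi_div_two_add.1 hx.2
    exact h.eq_of_angle_eq hσ hq ⟨hx.1.1.le, hx.1.2.le.trans hR2⟩ ⟨hy.1.1.le, hy.1.2.le.trans hR2⟩
      hi (hxy.symm.trans hi)
  have hlevel : Function.Injective fun i : ℕ => π / 2 + i * π := fun a b hab =>
    Nat.cast_injective (mul_right_cancel₀ pi_ne_zero (add_left_cancel hab))
  rw [← hinj.encard_image, h.image_angle_cos_eq_zero hσ hq hR12 hR2 hj, hlevel.encard_image,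
    ← Finset.coe_range, encard_coe_eq_coe_finsetCard, Finset.card_range]

end PolarSystem

section Sturm

/-- A solution on `[a, b]` of the flux form `v = A φ_p(u')`, `v' = -A h` of the equation
`(A φ_p(u'))' + A h = 0`; at `a`, where the weight `A` may vanish, `u` and its flux `v` are only
required to be continuous. -/
structure FluxEquation (p : ℝ) (A h : ℝ → ℝ) (a b : ℝ) (u v : ℝ → ℝ) : Prop where
  continuousOn_fun : ContinuousOn u (Icc a b)
  continuousOn_flux : ContinuousOn v (Icc a b)
  exists_hasDerivAt : ∀ r ∈ Ioc a b, ∃ u', HasDerivAt u u' r ∧ v r = A r * phip p u'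
  hasDerivAt_flux : ∀ r ∈ Ioc a b, HasDerivAt v (-(A r * h r)) r

/-- The function whose derivative is given by Picone's identity for the pairs `(z, v)` and
`(w, W)` of a function and its flux. -/
noncomputable def picone (p : ℝ) (z v w W : ℝ → ℝ) (r : ℝ) : ℝ :=
  w r * W r - |w r / z r| ^ p * (z r * v r)

variable {p lam a b r : ℝ} {A G z v w W : ℝ → ℝ}

theorem FluxEquation.mono {a' b' : ℝ} (h : FluxEquation p A G a b z v) (ha : a ≤ a')
    (hb : b' ≤ b) : FluxEquation p A G a' b' z v where
  continuousOn_fun := h.continuousOn_fun.mono (Icc_subset_Icc ha hb)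
  continuousOn_flux := h.continuousOn_flux.mono (Icc_subset_Icc ha hb)
  exists_hasDerivAt r hr := h.exists_hasDerivAt r (Ioc_subset_Ioc ha hb hr)
  hasDerivAt_flux r hr := h.hasDerivAt_flux r (Ioc_subset_Ioc ha hb hr)

theorem hasDerivAt_abs_div_rpow (hp : 1 < p) {z' w' : ℝ} (hz : HasDerivAt z z' r)
    (hw : HasDerivAt w w' r) (hz0 : z r ≠ 0) :
    HasDerivAt (fun s => |w s / z s| ^ p)
      (p * (phip p (w r / z r) * ((w' - w r / z r * z') / z r))) r := by
  have hp0 : p ≠ 0 := (zero_lt_one.trans hp).ne'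
  have hcomp := ((hasDerivAt_abs_rpow_div hp (w r / z r)).comp r (hw.div hz hz0)).const_mul p
  refine (hcomp.congr_of_eventuallyEq (Eventually.of_forall fun s => ?_)).congr_deriv ?_
  · exact (mul_div_cancel₀ _ hp0).symm
  · congr 2
    field_simp

theorem picone_deriv_pos (hp : 1 < p) {α z z' w w' g : ℝ} (hα : 0 < α) (hz : z ≠ 0) (hw : w ≠ 0)
    (hg : lam * |z| ^ p < g * z) :
    0 < α * (|w'| ^ p - lam * |w| ^ p + |w / z| ^ p * (g * z + (p - 1) * |z'| ^ p) -
      p * (w' * phip p (w / z) * phip p z')) := by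
  have hyoung := mul_phip_le hp w' (w / z * z')
  rw [phip_mul, abs_mul, mul_rpow (abs_nonneg _) (abs_nonneg _)] at hyoung
  have hwz : |w| ^ p = |w / z| ^ p * |z| ^ p := by
    rw [← mul_rpow (abs_nonneg _) (abs_nonneg _), ← abs_mul, div_mul_cancel₀ _ hz]
  have hgap := mul_pos (rpow_pos_of_pos (abs_pos.2 (div_ne_zero hw hz)) p) (sub_pos.2 hg)
  rw [hwz]
  exact mul_pos hα (by linarith)

theorem exists_hasDerivAt_picone (hp : 1 < p) (hz : FluxEquation p A G a b z v)
    (hw : FluxEquation p A (fun r => lam * phip p (w r)) a b w W) (hr : r ∈ Ioc a b)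
    (hA : 0 < A r) (hz0 : z r ≠ 0) (hw0 : w r ≠ 0) (hG : lam * |z r| ^ p < G r * z r) :
    ∃ d > 0, HasDerivAt (picone p z v w W) d r := by
  obtain ⟨z', hz', hvz⟩ := hz.exists_hasDerivAt r hr
  obtain ⟨w', hw', hWw⟩ := hw.exists_hasDerivAt r hr
  refine ⟨_, ?_, (hw'.mul (hw.hasDerivAt_flux r hr)).sub
    ((hasDerivAt_abs_div_rpow hp hz' hw' hz0).mul (hz'.mul (hz.hasDerivAt_flux r hr)))⟩
  refine (picone_deriv_pos hp (z' := z') (w' := w') hA hz0 hw0 hG).trans_eq ?_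
  have hcancel : (w' - w r / z r * z') / z r * z r = w' - w r / z r * z' := div_mul_cancel₀ _ hz0
  rw [hvz, hWw, ← phip_mul_self hp w', ← phip_mul_self hp (w r), ← phip_mul_self hp z',
    ← phip_mul_self hp (w r / z r)]
  linear_combination p * phip p (w r / z r) * A r * phip p z' * hcancel

theorem strictMonoOn_picone (hp : 1 < p) (hz : FluxEquation p A G a b z v)
    (hw : FluxEquation p A (fun r => lam * phip p (w r)) a b w W) (hA : ∀ r ∈ Ioo a b, 0 < A r)
    (hz0 : ∀ r ∈ Ico a b, z r ≠ 0) (hw0 : ∀ r ∈ Ioo a b, w r ≠ 0)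
    (hG : ∀ r ∈ Ioo a b, lam * |z r| ^ p < G r * z r) :
    StrictMonoOn (picone p z v w W) (Ico a b) := by
  have hzc := hz.continuousOn_fun.mono Ico_subset_Icc_self
  have hvc := hz.continuousOn_flux.mono Ico_subset_Icc_self
  have hwc := hw.continuousOn_fun.mono Ico_subset_Icc_self
  have hWc := hw.continuousOn_flux.mono Ico_subset_Icc_self
  have hcont : ContinuousOn (picone p z v w W) (Ico a b) := (hwc.mul hWc).sub
    (((hwc.div hzc hz0).abs.rpow_const fun _ _ => Or.inr (zero_lt_one.trans hp).le).mul
      (hzc.mul hvc))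
  refine strictMonoOn_of_deriv_pos (convex_Ico a b) hcont fun r hr => ?_
  rw [interior_Ico] at hr
  obtain ⟨d, hd, hder⟩ := exists_hasDerivAt_picone hp hz hw (Ioo_subset_Ioc_self hr) (hA r hr)
    (hz0 r (Ioo_subset_Ico_self hr)) (hw0 r hr) (hG r hr)
  exact hd.trans_eq hder.deriv.symm

theorem exists_tendsto_div_of_eq_zero {z' w' : ℝ} (hz : HasDerivAt z z' b) (hw : HasDerivAt w w' b)
    (hwb : w b = 0) (hzb : z b ≠ 0 ∨ z' ≠ 0) :
    ∃ L, Tendsto (fun r => w r / z r) (𝓝[<] b) (𝓝 L) ∧ (L = 0 ∨ z b = 0) := by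
  by_cases hzb0 : z b = 0
  · have hslope : ∀ {φ : ℝ → ℝ} {φ' : ℝ}, HasDerivAt φ φ' b →
        Tendsto (slope φ b) (𝓝[<] b) (𝓝 φ') := fun hφ =>
      (hasDerivAt_iff_tendsto_slope.1 hφ).mono_left
        (nhdsWithin_mono b fun y (hy : y ∈ Iio b) => ne_of_lt hy)
    refine ⟨_, ((hslope hw).div (hslope hz) (hzb.resolve_left (not_not.2 hzb0))).congr' ?_,
      Or.inr hzb0⟩
    filter_upwards [self_mem_nhdsWithin] with y hy
    rw [Pi.div_apply, slope_def_field, slope_def_field, hwb, hzb0, sub_zero, sub_zero,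
      div_div_div_cancel_right₀ (sub_neg.2 hy).ne]
  · refine ⟨0, ?_, Or.inl rfl⟩
    have hdiv := (hw.continuousAt.tendsto.div hz.continuousAt.tendsto hzb0).mono_left
      (nhdsWithin_le_nhds (s := Iio b))
    rwa [hwb, zero_div] at hdiv

theorem exists_tendsto_picone_nonpos (hp : 1 < p) (hz : FluxEquation p A G a b z v)
    (hw : FluxEquation p A (fun r => lam * phip p (w r)) a b w W) (hab : a < b)
    (hb : w b = 0 ∧ (z b ≠ 0 ∨ v b ≠ 0) ∨ W b = 0 ∧ z b ≠ 0 ∧ 0 ≤ z b * v b) :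
    ∃ l ≤ 0, Tendsto (picone p z v w W) (𝓝[<] b) (𝓝 l) := by
  have hbI := right_mem_Ioc.2 hab
  obtain ⟨z', hz', hvz⟩ := hz.exists_hasDerivAt b hbI
  obtain ⟨w', hw', -⟩ := hw.exists_hasDerivAt b hbI
  have hp0 := zero_lt_one.trans hp
  have hleft : ∀ {φ : ℝ → ℝ} {φ' : ℝ}, HasDerivAt φ φ' b → Tendsto φ (𝓝[<] b) (𝓝 (φ b)) :=
    fun hφ => hφ.continuousAt.tendsto.mono_left nhdsWithin_le_nhds
  have hlim : ∀ L, Tendsto (fun r => w r / z r) (𝓝[<] b) (𝓝 L) →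
      Tendsto (picone p z v w W) (𝓝[<] b) (𝓝 (w b * W b - |L| ^ p * (z b * v b))) := fun L hL =>
    ((hleft hw').mul (hleft (hw.hasDerivAt_flux b hbI))).sub
      ((hL.abs.rpow_const (Or.inr hp0.le)).mul
        ((hleft hz').mul (hleft (hz.hasDerivAt_flux b hbI))))
  rcases hb with ⟨hwb, hzv⟩ | ⟨hWb, hzb, hzv⟩
  · have hz'0 : v b ≠ 0 → z' ≠ 0 := by
      rintro hvb rfl
      rw [phip_zero, mul_zero] at hvz
      exact hvb hvz
    obtain ⟨L, hL, hL0⟩ := exists_tendsto_div_of_eq_zero hz' hw' hwb (hzv.imp_right hz'0)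
    refine ⟨_, le_of_eq ?_, hlim L hL⟩
    rcases hL0 with rfl | hzb
    · rw [hwb, abs_zero, zero_rpow hp0.ne', zero_mul, zero_mul, sub_zero]
    · rw [hwb, hzb, zero_mul, zero_mul, mul_zero, sub_zero]
  · refine ⟨_, ?_, hlim _ ((hleft hw').div (hleft hz') hzb)⟩
    rw [hWb, mul_zero, zero_sub, neg_nonpos]
    exact mul_nonneg (rpow_nonneg (abs_nonneg _) p) hzv

theorem FluxEquation.exists_eq_zero (hp : 1 < p) (hz : FluxEquation p A G a b z v)
    (hw : FluxEquation p A (fun r => lam * phip p (w r)) a b w W) (hab : a < b)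
    (hA : ∀ r ∈ Ioo a b, 0 < A r) (hw0 : ∀ r ∈ Ioo a b, w r ≠ 0)
    (hG : ∀ r ∈ Ioo a b, z r ≠ 0 → lam * |z r| ^ p < G r * z r)
    (ha : w a = 0 ∨ W a = 0 ∧ v a = 0)
    (hb : w b = 0 ∧ (z b ≠ 0 ∨ v b ≠ 0) ∨ W b = 0 ∧ z b ≠ 0 ∧ 0 ≤ z b * v b) :
    ∃ r ∈ Ico a b, z r = 0 := by
  by_contra! hz0
  have hmono := strictMonoOn_picone hp hz hw hA hz0 hw0 fun r hr =>
    hG r hr (hz0 r (Ioo_subset_Ico_self hr))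
  have hleft : picone p z v w W a = 0 := by
    unfold picone
    rcases ha with hwa | ⟨hWa, hva⟩
    · rw [hwa, zero_div, abs_zero, zero_rpow (zero_lt_one.trans hp).ne', zero_mul, zero_mul,
        sub_zero]
    · rw [hWa, hva, mul_zero, mul_zero, mul_zero, sub_zero]
  obtain ⟨l, hl, hlim⟩ := exists_tendsto_picone_nonpos hp hz hw hab hb
  obtain ⟨m, ham, hmb⟩ := exists_between hab
  have hm : m ∈ Ico a b := ⟨ham.le, hmb⟩
  have hpos : 0 < picone p z v w W m := hleft.symm.trans_lt (hmono (left_mem_Ico.2 hab) hm ham)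
  refine (hpos.trans_le (ge_of_tendsto hlim ?_)).not_ge hl
  filter_upwards [Ioo_mem_nhdsLT hmb] with r hr
  exact (hmono hm ⟨ham.le.trans hr.1.le, hr.2⟩ hr.1).le

end Sturm

/-- `w` is a radial Neumann eigenfunction of the `p`-Laplacian in dimension `n + 1` on the annulus
`R1 < |x| < R2`, with eigenvalue `lam`. -/
structure NeumannEigen (p : ℝ) (n : ℕ) (R1 R2 lam : ℝ) (w : ℝ → ℝ) : Prop where
  differentiableAt : ∀ x ∈ Icc R1 R2, DifferentiableAt ℝ w x
  deriv_left : deriv w R1 = 0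
  deriv_right : deriv w R2 = 0
  continuousOn_flux : ContinuousOn (fun x => x ^ n * phip p (deriv w x)) (Icc R1 R2)
  hasDerivAt_flux : ∀ x ∈ Ioc R1 R2, HasDerivAt (fun t => t ^ n * phip p (deriv w t))
    (-(lam * x ^ n * phip p (w x))) x

section Comparison

variable {p q σ : ℝ} {n : ℕ} {g : ℝ → ℝ} {R1 R2 T d m lam a b : ℝ} {u v w ℓ θ : ℝ → ℝ} {S : Set ℝ}

theorem NeumannEigen.fluxEquation (hw : NeumannEigen p n R1 R2 lam w) :
    FluxEquation p (· ^ n) (fun r => lam * phip p (w r)) R1 R2 w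
      (fun r => r ^ n * phip p (deriv w r)) where
  continuousOn_fun r hr := (hw.differentiableAt r hr).continuousAt.continuousWithinAt
  continuousOn_flux := hw.continuousOn_flux
  exists_hasDerivAt r hr :=
    ⟨_, (hw.differentiableAt r (Ioc_subset_Icc_self hr)).hasDerivAt, rfl⟩
  hasDerivAt_flux r hr := (hw.hasDerivAt_flux r hr).congr_deriv (by ring)

theorem RadialSystem.fluxEquation (h : RadialSystem q n g R1 T d u v) (hpq : p.HolderConjugate q) :
    FluxEquation p (· ^ n) (fun r => g (u r)) R1 T (fun r => u r - 1) v where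
  continuousOn_fun := h.continuousOn_u.sub continuousOn_const
  continuousOn_flux := h.continuousOn_v
  exists_hasDerivAt r hr := by
    refine ⟨_, (h.hasDerivAt_u r (Ioc_subset_Icc_self hr)).sub_const 1, ?_⟩
    rw [phip_phip hpq, mul_div_cancel₀ _ (pow_pos (h.left_nonneg.trans_lt hr.1) n).ne']
  hasDerivAt_flux r hr := h.hasDerivAt_v r (Ioc_subset_Icc_self hr)

theorem RadialSystem.exists_eq_one (h : RadialSystem q n g R1 T d u v) (hpq : p.HolderConjugate q)
    (hw : NeumannEigen p n R1 R2 lam w) (hR2 : R2 ≤ T)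
    (hG : ∀ s ∈ S, s ≠ 1 → lam * |s - 1| ^ p < g s * (s - 1)) (hS : ∀ r ∈ Icc R1 R2, u r ∈ S)
    (ha : R1 ≤ a) (hab : a < b) (hb : b ≤ R2) (hw0 : ∀ r ∈ Ioo a b, w r ≠ 0)
    (hwa : w a = 0 ∨ a = R1)
    (hwb : w b = 0 ∧ (u b ≠ 1 ∨ v b ≠ 0) ∨ b = R2 ∧ u b ≠ 1 ∧ 0 ≤ (u b - 1) * v b) :
    ∃ r ∈ Ico a b, u r = 1 := by
  have hflux : ∀ {r}, deriv w r = 0 → r ^ n * phip p (deriv w r) = 0 := fun h0 => by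
    rw [h0, phip_zero, mul_zero]
  have hleft : w a = 0 ∨ a ^ n * phip p (deriv w a) = 0 ∧ v a = 0 := by
    rcases hwa with hwa | rfl
    exacts [Or.inl hwa, Or.inr ⟨hflux hw.deriv_left, h.v_left⟩]
  have hright : w b = 0 ∧ (u b - 1 ≠ 0 ∨ v b ≠ 0) ∨
      b ^ n * phip p (deriv w b) = 0 ∧ u b - 1 ≠ 0 ∧ 0 ≤ (u b - 1) * v b := by
    rw [sub_ne_zero]
    refine hwb.imp_right ?_
    rintro ⟨rfl, hub⟩
    exact ⟨hflux hw.deriv_right, hub⟩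
  obtain ⟨r, hr, hr0⟩ := ((h.fluxEquation hpq).mono ha (hb.trans hR2)).exists_eq_zero hpq.lt
    (hw.fluxEquation.mono ha hb) hab
    (fun r hr => pow_pos ((h.left_nonneg.trans ha).trans_lt hr.1) n) hw0
    (fun r hr hr1 => hG _ (hS r ⟨ha.trans hr.1.le, hr.2.le.trans hb⟩) (sub_ne_zero.1 hr1))
    hleft hright
  exact ⟨r, hr, sub_eq_zero.1 hr0⟩

theorem cos_ne_zero_of_mem_Ioo {t : ℝ} {i : ℤ}
    (ht : t ∈ Ioo (π / 2 + (i - 1) * π) (π / 2 + i * π)) : cos t ≠ 0 := by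
  intro hc
  obtain ⟨j, rfl⟩ := cos_eq_zero_iff_eq_pi_div_two_add.1 hc
  have hij : i - 1 < j := by
    exact_mod_cast show (i : ℝ) - 1 < j from lt_of_mul_lt_mul_right (by linarith [ht.1]) pi_pos.le
  have hji : j < i := by
    exact_mod_cast show (j : ℝ) < i from lt_of_mul_lt_mul_right (by linarith [ht.2]) pi_pos.le
  omega

namespace PolarSystem

theorem lt_angle_of_lt (h : PolarSystem σ q n g R1 T m ℓ θ) (hσ : σ * σ = 1) (hq : 1 < q) {i : ℤ}
    (ha : R1 ≤ a) (hab : a ≤ b) (hb : b ≤ T) (hθa : π / 2 + (i - 1) * π < θ a) :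
    π / 2 + (i - 1) * π < θ b := by
  rcases hab.eq_or_lt with rfl | hab
  · exact hθa
  · exact_mod_cast h.lt_angle_of_le hσ hq (i - 1) ha hab hb (by exact_mod_cast hθa.le)

theorem cos_ne_zero_of_lt_angle (h : PolarSystem σ q n g R1 T m ℓ θ) (hσ : σ * σ = 1) (hq : 1 < q)
    {i : ℤ} (ha : R1 ≤ a) (hb : b ≤ T) (hθa : π / 2 + (i - 1) * π < θ a)
    (hθb : θ b ≤ π / 2 + i * π) {r : ℝ} (hr : r ∈ Ico a b) : cos (θ r) ≠ 0 :=
  cos_ne_zero_of_mem_Ioo ⟨h.lt_angle_of_lt hσ hq ha hr.1 (hr.2.le.trans hb) hθa,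
    lt_of_not_ge fun hi => (h.lt_angle_of_le hσ hq i (ha.trans hr.1) hr.2 hb hi).not_ge hθb⟩

theorem mul_flux_nonneg (hσ : σ * σ = 1) (l : ℝ) {t : ℝ} {i : ℤ} (hlow : π / 2 + (i - 1) * π ≤ t)
    (hhigh : t ≤ i * π) :
    0 ≤ (1 + σ * (exp l * cos t) - 1) * -(σ * (exp l * sin t)) := by
  have hsin : sin (2 * t) ≤ 0 := by
    rw [← sin_sub_int_mul_two_pi _ i]
    exact sin_nonpos_of_nonpos_of_neg_pi_le (by linarith) (by linarith)
  have hsplit : (1 + σ * (exp l * cos t) - 1) * -(σ * (exp l * sin t)) =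
      exp l ^ 2 * (-sin (2 * t) / 2) := by
    rw [sin_two_mul]
    linear_combination -(exp l ^ 2 * sin t * cos t) * hσ
  rw [hsplit]
  exact mul_nonneg (sq_nonneg _) (by linarith)

theorem eq_one_iff (hσ : σ * σ = 1) (l t : ℝ) : 1 + σ * (exp l * cos t) = 1 ↔ cos t = 0 := by
  rw [add_eq_left, mul_eq_zero, mul_eq_zero, or_iff_right (left_ne_zero_of_mul_eq_one hσ),
    or_iff_right (exp_ne_zero l)]

theorem ne_one_or_flux_ne_zero (hσ : σ * σ = 1) (l t : ℝ) :
    1 + σ * (exp l * cos t) ≠ 1 ∨ -(σ * (exp l * sin t)) ≠ 0 := by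
  rw [Ne, eq_one_iff hσ, ← imp_iff_not_or]
  intro hc
  exact neg_ne_zero.2 (mul_ne_zero (left_ne_zero_of_mul_eq_one hσ) (mul_ne_zero (exp_ne_zero l)
    fun hs => by simpa [hc, hs] using cos_sq_add_sin_sq t))

theorem lt_angle_of_eigen_eq_zero (h : PolarSystem σ q n g R1 T m ℓ θ) (hσ : σ * σ = 1)
    (hpq : p.HolderConjugate q) (hw : NeumannEigen p n R1 R2 lam w) (hR2 : R2 ≤ T)
    (hG : ∀ s ∈ S, s ≠ 1 → lam * |s - 1| ^ p < g s * (s - 1))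
    (hS : ∀ r ∈ Icc R1 R2, 1 + σ * (exp (ℓ r) * cos (θ r)) ∈ S) {i : ℤ}
    (ha : R1 ≤ a) (hab : a < b) (hb : b ≤ R2) (hw0 : ∀ r ∈ Ioo a b, w r ≠ 0)
    (hwa : w a = 0 ∨ a = R1) (hθa : π / 2 + (i - 1) * π < θ a) (hwb : w b = 0) :
    π / 2 + i * π < θ b := by
  by_contra! hθb
  obtain ⟨r, hr, hr1⟩ := h.system.exists_eq_one hpq hw hR2 hG hS ha hab hb hw0 hwa
    (Or.inl ⟨hwb, ne_one_or_flux_ne_zero hσ _ _⟩)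
  exact h.cos_ne_zero_of_lt_angle hσ hpq.symm.lt ha (hb.trans hR2) hθa hθb hr
    ((eq_one_iff hσ _ _).1 hr1)

theorem lt_angle_of_eigen_right (h : PolarSystem σ q n g R1 T m ℓ θ) (hσ : σ * σ = 1)
    (hpq : p.HolderConjugate q) (hw : NeumannEigen p n R1 R2 lam w) (hR2 : R2 ≤ T)
    (hG : ∀ s ∈ S, s ≠ 1 → lam * |s - 1| ^ p < g s * (s - 1))
    (hS : ∀ r ∈ Icc R1 R2, 1 + σ * (exp (ℓ r) * cos (θ r)) ∈ S) {i : ℤ}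
    (ha : R1 ≤ a) (haR : a < R2) (hw0 : ∀ r ∈ Ioo a R2, w r ≠ 0)
    (hwa : w a = 0 ∨ a = R1) (hθa : π / 2 + (i - 1) * π < θ a) : i * π < θ R2 := by
  by_contra! hθb
  have hpi := pi_pos
  have hq := hpq.symm.lt
  have hθR := h.lt_angle_of_lt hσ hq ha haR.le hR2 hθa
  have hcosR : cos (θ R2) ≠ 0 := cos_ne_zero_of_mem_Ioo ⟨hθR, by linarith⟩
  obtain ⟨r, hr, hr1⟩ := h.system.exists_eq_one hpq hw hR2 hG hS ha haR le_rfl hw0 hwa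
    (Or.inr ⟨rfl, mt (eq_one_iff hσ _ _).1 hcosR, mul_flux_nonneg hσ _ hθR.le hθb⟩)
  exact h.cos_ne_zero_of_lt_angle hσ hq ha hR2 hθa (hθb.trans (by linarith)) hr
    ((eq_one_iff hσ _ _).1 hr1)

end PolarSystem

theorem exists_last_eq_zero {i : ℕ} (hcard : {r ∈ Ioo a b | w r = 0}.encard = (i + 1 : ℕ)) :
    ∃ c ∈ Ioo a b, w c = 0 ∧ (∀ r ∈ Ioo c b, w r ≠ 0) ∧
      {r ∈ Ioo a c | w r = 0}.encard = i := by
  set s := {r ∈ Ioo a b | w r = 0}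
  obtain ⟨c, hc, hmax⟩ := (finite_of_encard_eq_coe hcard).exists_maximal (nonempty_of_encard_ne_zero
    (by rw [hcard]; exact Nat.cast_ne_zero.2 i.succ_ne_zero))
  have hle : ∀ r ∈ s, r ≤ c := fun r hr => (le_total r c).elim id (hmax hr)
  have hdiff : {r ∈ Ioo a c | w r = 0} = s \ {c} := by
    ext r
    exact ⟨fun hr => ⟨⟨⟨hr.1.1, hr.1.2.trans hc.1.2⟩, hr.2⟩, hr.1.2.ne⟩,
      fun hr => ⟨⟨hr.1.1.1, (hle r hr.1).lt_of_ne hr.2⟩, hr.1.2⟩⟩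
  refine ⟨c, hc.1, hc.2, fun r hr hr0 =>
    (hle r ⟨⟨hc.1.1.trans hr.1, hr.2⟩, hr0⟩).not_gt hr.1, ?_⟩
  rw [hdiff, encard_sdiff_singleton_of_mem hc, hcard, Nat.cast_add_one,
    (ENat.addLECancellable_of_ne_top ENat.one_ne_top).add_tsub_cancel_right]

theorem forall_ne_zero_of_encard_eq_zero (hcard : {r ∈ Ioo a b | w r = 0}.encard = (0 : ℕ)) :
    ∀ r ∈ Ioo a b, w r ≠ 0 := by
  rw [Nat.cast_zero, encard_eq_zero] at hcard
  exact fun r hr hr0 => eq_empty_iff_forall_notMem.1 hcard r ⟨hr, hr0⟩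

namespace PolarSystem

theorem lt_angle_of_encard_eigen_eq_zero (h : PolarSystem σ q n g R1 T m ℓ θ) (hσ : σ * σ = 1)
    (hpq : p.HolderConjugate q) (hw : NeumannEigen p n R1 R2 lam w) (hR2 : R2 ≤ T)
    (hG : ∀ s ∈ S, s ≠ 1 → lam * |s - 1| ^ p < g s * (s - 1))
    (hS : ∀ r ∈ Icc R1 R2, 1 + σ * (exp (ℓ r) * cos (θ r)) ∈ S) (i : ℕ) (hb : b ∈ Ioo R1 R2)
    (hwb : w b = 0) (hcard : {r ∈ Ioo R1 b | w r = 0}.encard = i) :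
    π / 2 + i * π < θ b := by
  induction i generalizing b with
  | zero =>
    exact_mod_cast h.lt_angle_of_eigen_eq_zero (i := 0) hσ hpq hw hR2 hG hS le_rfl hb.1 hb.2.le
      (forall_ne_zero_of_encard_eq_zero hcard) (Or.inr rfl)
      (by rw [h.angle_left]; push_cast; linarith [pi_pos]) hwb
  | succ i ih =>
    obtain ⟨c, hc, hwc, hw0, hci⟩ := exists_last_eq_zero hcard
    have hθc := ih ⟨hc.1, hc.2.trans hb.2⟩ hwc hci
    exact_mod_cast h.lt_angle_of_eigen_eq_zero (i := (i + 1 : ℕ)) hσ hpq hw hR2 hG hS hc.1.le hc.2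
      hb.2.le hw0 (Or.inl hwc) (by push_cast; linarith) hwb

theorem nat_mul_pi_lt_angle (h : PolarSystem σ q n g R1 T m ℓ θ) (hσ : σ * σ = 1)
    (hpq : p.HolderConjugate q) (hw : NeumannEigen p n R1 R2 lam w) (hR12 : R1 < R2) (hR2 : R2 ≤ T)
    (hG : ∀ s ∈ S, s ≠ 1 → lam * |s - 1| ^ p < g s * (s - 1))
    (hS : ∀ r ∈ Icc R1 R2, 1 + σ * (exp (ℓ r) * cos (θ r)) ∈ S) {k : ℕ}
    (hcard : {r ∈ Ioo R1 R2 | w r = 0}.encard = k) : k * π < θ R2 := by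
  cases k with
  | zero =>
    exact_mod_cast h.lt_angle_of_eigen_right (i := 0) hσ hpq hw hR2 hG hS le_rfl hR12
      (forall_ne_zero_of_encard_eq_zero hcard) (Or.inr rfl)
      (by rw [h.angle_left]; push_cast; linarith [pi_pos])
  | succ k =>
    obtain ⟨c, hc, hwc, hw0, hck⟩ := exists_last_eq_zero hcard
    have hθc := h.lt_angle_of_encard_eigen_eq_zero hσ hpq hw hR2 hG hS k hc hwc hck
    exact_mod_cast h.lt_angle_of_eigen_right (i := (k + 1 : ℕ)) hσ hpq hw hR2 hG hS hc.1.le hc.2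
      hw0 (Or.inl hwc) (by push_cast; linarith)

end PolarSystem

end Comparison

section NeumannProblem

variable {p q σ : ℝ} {n : ℕ} {R1 R2 R3 T d d₁ m β lam D : ℝ} {f g u v w ℓ θ : ℝ → ℝ} {j k : ℕ}

theorem RadialSystem.neumannSol (h : RadialSystem q n (trunc f D) R1 T d u v)
    (hg : AdmissibleNonlin p (trunc f D)) (hpq : p.HolderConjugate q) (hR12 : R1 < R2)
    (hT : R2 < T) (hd : 0 < d) (hv : v R2 = 0) (hD : ∀ r ∈ Icc R1 R2, u r ≤ D) :
    NeumannSol p (n + 1) R1 R2 f u := by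
  have h' := h.mono_right hT.le
  have hpos : ∀ r ∈ Icc R1 R2, 0 < u r := fun r hr => h'.u_pos_of_v_right_eq_zero hg hpq hd hv hr
  have hderiv : ∀ x ∈ Icc R1 T, deriv u x = phip q (v x / x ^ n) := fun x hx =>
    (h.hasDerivAt_u x hx).deriv
  have hflux : ∀ x ∈ Icc R1 T, x ^ n * phip p (deriv u x) = v x := by
    intro x hx
    rw [hderiv x hx, phip_phip hpq]
    rcases hx.1.eq_or_lt with rfl | hx1
    · rw [h.v_left, zero_div, mul_zero]
    · exact mul_div_cancel₀ _ (pow_pos (h.left_nonneg.trans_lt hx1) _).ne'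
  have hsub : Icc R1 R2 ⊆ Icc R1 T := Icc_subset_Icc_right hT.le
  rw [NeumannSol, Nat.add_sub_cancel]
  refine ⟨fun x hx => (h'.hasDerivAt_u x hx).differentiableAt, ?_, hpos, ?_, ?_, ?_,
    fun x hx => ?_⟩
  · exact ((continuous_phip hpq.symm.lt).comp_continuousOn
      (h'.continuousOn_v_div_pow hg.bounded)).congr fun x hx => hderiv x (hsub hx)
  · rw [hderiv R1 ⟨le_rfl, (hR12.trans hT).le⟩, h.v_left, zero_div, phip_zero]
  · rw [hderiv R2 ⟨hR12.le, hT.le⟩, hv, zero_div, phip_zero]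
  · exact h'.continuousOn_v.congr fun x hx => hflux x (hsub hx)
  · have hx' : x ∈ Icc R1 R2 := ⟨hx.1.le, hx.2⟩
    have hderiv_v := h'.hasDerivAt_v x hx'
    rw [trunc_of_mem (hpos x hx').le (hD x hx'), ← neg_mul] at hderiv_v
    refine hderiv_v.congr_of_eventuallyEq ?_
    filter_upwards [Icc_mem_nhds hx.1 (hx.2.trans_lt hT)] with y hy using hflux y hy

theorem Fint_trunc_le_max (hp : 1 < p) (hf : ContinuousOn f (Ici 0)) (hfeq : Feq f)
    (hfzero : Fzero p f) (hd₁ : 1 < d₁) (hD : d₁ ≤ D) (hd : d ∈ Icc 0 d₁) :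
    Fint (trunc f D) d ≤ max (Fint f 0) (Fint f d₁) := by
  have hg := admissibleNonlin_trunc hp hf hfeq hfzero (hd₁.trans_le hD)
  rcases le_total 1 d with hd1 | hd1
  · refine le_max_of_le_right ?_
    rw [← Fint_trunc (by linarith) (by linarith) hD]
    exact hg.Fint_mono hd1 hd.2
  · refine le_max_of_le_left ?_
    rw [← Fint_trunc (D := D) (by linarith) le_rfl (by linarith)]
    exact hg.Fint_anti hd1 hd.1

theorem exists_forall_radialSystem_trunc_le (hpq : p.HolderConjugate q) (hR12 : R1 ≤ R2)
    (hf : ContinuousOn f (Ici 0)) (hfeq : Feq f) (hfzero : Fzero p f) (hd₁ : 1 < d₁) :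
    ∃ D ≥ d₁, ∀ d ∈ Icc 0 d₁, ∀ u v, RadialSystem q n (trunc f D) R1 R2 d u v →
      ∀ r ∈ Icc R1 R2, u r ≤ D := by
  set E := max (Fint f 0) (Fint f d₁)
  have hE : 0 ≤ E := ((admissibleNonlin_trunc hpq.lt hf hfeq hfzero hd₁).Fint_nonneg d₁).trans
    (Fint_trunc_le_max hpq.lt hf hfeq hfzero hd₁ le_rfl ⟨by linarith, le_rfl⟩)
  set K := (q * E) ^ (1 / p)
  have hK : 0 ≤ K := rpow_nonneg (mul_nonneg hpq.symm.nonneg hE) _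
  set D := d₁ + K * (R2 - R1)
  have hD : d₁ ≤ D := le_add_of_nonneg_right (mul_nonneg hK (sub_nonneg.2 hR12))
  refine ⟨D, hD, fun d hd u v h r hr => ?_⟩
  have hg := admissibleNonlin_trunc hpq.lt hf hfeq hfzero (hd₁.trans_le hD)
  have hspeed : ∀ r ∈ Icc R1 R2, |phip q (v r / r ^ n)| ≤ K := fun r hr =>
    (h.abs_phip_v_div_pow_le hg hpq hr).trans <|
      rpow_le_rpow (mul_nonneg hpq.symm.nonneg (hg.Fint_nonneg d))
        (mul_le_mul_of_nonneg_left (Fint_trunc_le_max hpq.lt hf hfeq hfzero hd₁ hD hd)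
          hpq.symm.nonneg) (one_div_nonneg.2 hpq.nonneg)
  calc u r ≤ d + |u r - u R1| := by rw [h.u_left]; linarith [le_abs_self (u r - d)]
    _ ≤ d + K * |r - R1| := by gcongr; exact h.abs_u_sub_le hspeed hr ⟨le_rfl, hR12⟩
    _ ≤ D := by
      rw [abs_of_nonneg (sub_nonneg.2 hr.1)]
      exact add_le_add hd.2 (mul_le_mul_of_nonneg_left (sub_le_sub_right hr.2 R1) hK)

theorem AdmissibleNonlin.exists_forall_radialSystem_abs_sub_one_lt (hg : AdmissibleNonlin p g)
    (hq : 1 < q) {ε : ℝ} (hε : 0 < ε) :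
    ∃ δ > 0, ∀ d, |d - 1| < δ → ∀ u v, RadialSystem q n g R1 T d u v →
      ∀ r ∈ Icc R1 T, |u r - 1| < ε := by
  obtain ⟨e, he, hfar⟩ := hg.exists_le_Fint hε
  obtain ⟨δ, hδ, hnear⟩ := Metric.eventually_nhds_iff.1
    (((continuous_Fint hg.cont).continuousAt (x := 1)).eventually_lt
      (continuousAt_const (y := e)) (by rwa [Fint_one]))
  refine ⟨δ, hδ, fun d hd u v h r hr => ?_⟩
  by_contra! hcon
  exact ((hfar _ hcon).trans (h.Fint_le_Fint_left hg hq hr)).not_gt (hnear hd)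

theorem exists_forall_nat_mul_pi_lt_angle (hg : AdmissibleNonlin p g) (hpq : p.HolderConjugate q)
    (hR12 : R1 < R2) (hR23 : R2 ≤ R3)
    (hlam : ∀ᶠ s in 𝓝[≠] 1, lam * |s - 1| ^ p < g s * (s - 1))
    (hw : NeumannEigen p n R1 R2 lam w) (hcard : {x ∈ Ioo R1 R2 | w x = 0}.encard = k) :
    ∃ m₀ > 0, ∀ m, 0 < m → m ≤ m₀ → ∀ σ : ℝ, σ * σ = 1 → ∀ ℓ θ,
      PolarSystem σ q n g R1 R3 m ℓ θ → k * π < θ R2 := by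
  obtain ⟨ε, hε, hball⟩ := Metric.eventually_nhds_iff_ball.1 (eventually_nhdsWithin_iff.1 hlam)
  obtain ⟨δ, hδ, hnear⟩ :=
    hg.exists_forall_radialSystem_abs_sub_one_lt (n := n) (R1 := R1) (T := R3) hpq.symm.lt hε
  refine ⟨δ / 2, half_pos hδ, fun m hm hmδ σ hσ ℓ θ h => ?_⟩
  have hσ1 : |σ| = 1 := by rcases mul_self_eq_one_iff.1 hσ with rfl | rfl <;> simp
  have hstart : |1 + σ * m - 1| < δ := by
    rw [add_sub_cancel_left, abs_mul, hσ1, one_mul, abs_of_pos hm]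
    linarith
  exact h.nat_mul_pi_lt_angle hσ hpq hw hR12 hR23 hball
    (fun r hr => hnear _ hstart _ _ h.system r ⟨hr.1, hr.2.trans hR23⟩) hcard

theorem PolarSystem.angle_lt_pi_of_forall_ne (h : PolarSystem σ q n g R1 T m ℓ θ) (hR12 : R1 ≤ R2)
    (hT : R2 ≤ T) (hne : ∀ r ∈ Ioc R1 R2, θ r ≠ π) : θ R2 < π := by
  by_contra! hcon
  obtain ⟨x, hx, hxθ⟩ := intermediate_value_Icc hR12
    (h.continuousOn_angle.mono (Icc_subset_Icc_right hT))
    (show π ∈ Icc (θ R1) (θ R2) from ⟨h.angle_left.trans_le pi_pos.le, hcon⟩)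
  refine hne x ⟨hx.1.lt_of_ne ?_, hx.2⟩ hxθ
  rintro rfl
  exact pi_pos.ne (h.angle_left.symm.trans hxθ)

theorem PolarSystem.angle_lt_pi_of_flux_neg (h : PolarSystem 1 q n g R1 T m ℓ θ) (hR12 : R1 ≤ R2)
    (hT : R2 ≤ T) (hv : ∀ r ∈ Ioc R1 R2, -(1 * (exp (ℓ r) * sin (θ r))) < 0) : θ R2 < π :=
  h.angle_lt_pi_of_forall_ne hR12 hT fun r hr hθ => by simpa [hθ] using hv r hr

theorem PolarSystem.angle_lt_pi_of_nonpos (h : PolarSystem (-1) q n g R1 T m ℓ θ)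
    (hR12 : R1 ≤ R2) (hT : R2 ≤ T)
    (hu : ∀ r ∈ Ioc R1 R2, 1 + -1 * (exp (ℓ r) * cos (θ r)) ≤ 0) : θ R2 < π :=
  h.angle_lt_pi_of_forall_ne hR12 hT fun r hr hθ => by
    have hur := hu r hr
    rw [hθ, cos_pi] at hur
    linarith [exp_pos (ℓ r)]

theorem eventually_lt_mul_of_tendsto (hp : 1 < p) {C1 : EReal}
    (hC1 : Tendsto (fun s : ℝ => ((f s / (|s - 1| ^ (p - 2) * (s - 1)) : ℝ) : EReal))
      (𝓝[≠] (1 : ℝ)) (𝓝 C1)) (hlam : (lam : EReal) < C1) :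
    ∀ᶠ s in 𝓝[≠] 1, lam * |s - 1| ^ p < f s * (s - 1) := by
  filter_upwards [hC1.eventually (eventually_gt_nhds hlam), self_mem_nhdsWithin] with s hs hs1
  have hquot : lam < f s / phip p (s - 1) := EReal.coe_lt_coe_iff.1 hs
  have hpow : 0 < |s - 1| ^ p := rpow_pos_of_pos (abs_pos.2 (sub_ne_zero.2 hs1)) p
  have hphip : phip p (s - 1) * (s - 1) = |s - 1| ^ p := phip_mul_self hp (s - 1)
  have hphip0 : phip p (s - 1) ≠ 0 := left_ne_zero_of_mul (hphip.trans_ne hpow.ne')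
  calc lam * |s - 1| ^ p < f s / phip p (s - 1) * |s - 1| ^ p :=
        mul_lt_mul_of_pos_right hquot hpow
    _ = f s * (s - 1) := by rw [← hphip, ← mul_assoc, div_mul_cancel₀ _ hphip0]

theorem eventually_trunc_eq (f : ℝ → ℝ) (hD : 1 < D) : ∀ᶠ s in 𝓝 1, trunc f D s = f s := by
  filter_upwards [Ioo_mem_nhds one_pos hD] with s hs using trunc_of_mem hs.1.le hs.2.le

theorem exists_neumannSol_of_angle (hg : AdmissibleNonlin p (trunc f D))
    (hpq : p.HolderConjugate q) (hR1 : 0 ≤ R1) (hR12 : R1 < R2) (hR23 : R2 < R3) (hσ : σ * σ = 1)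
    (hβ : ∀ ℓ θ, PolarSystem σ q n (trunc f D) R1 R3 β ℓ θ → θ R2 < π)
    (hpos : ∀ m ∈ Ioo 0 β, 0 < 1 + σ * m)
    (hD : ∀ m ∈ Ioo 0 β, ∀ u v, RadialSystem q n (trunc f D) R1 R2 (1 + σ * m) u v →
      ∀ r ∈ Icc R1 R2, u r ≤ D) (hm : m ∈ Ioc 0 β)
    (hk : ∀ ℓ θ, PolarSystem σ q n (trunc f D) R1 R3 m ℓ θ → k * π < θ R2)
    (hj : 1 ≤ j) (hjk : j ≤ k) :
    ∃ u, NeumannSol p (n + 1) R1 R2 f u ∧ 0 < σ * (u R1 - 1) ∧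
      {x ∈ Ioo R1 R2 | u x = 1}.encard = j := by
  have hpij : π ≤ j * π := le_mul_of_one_le_left pi_pos.le (Nat.one_le_cast.2 hj)
  have hjkπ : (j : ℝ) * π ≤ k * π := mul_le_mul_of_nonneg_right (Nat.cast_le.2 hjk) pi_pos.le
  obtain ⟨μ, hμ, ℓ, θ, h, hθ⟩ := PolarSystem.exists_angle_eq hσ hg hpq.symm.lt hR1
    (hR12.trans hR23) ⟨hR12.le, hR23.le⟩ hm.1 hm.2 (fun ℓ θ h => hjkπ.trans_lt (hk ℓ θ h))
    fun ℓ θ h => (hβ ℓ θ h).trans_le hpij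
  have hμβ : μ ∈ Ioo 0 β := by
    refine ⟨hm.1.trans_le hμ.1, hμ.2.lt_of_ne ?_⟩
    rintro rfl
    exact (hθ ▸ hβ ℓ θ h).not_ge hpij
  have hflux : -(σ * (exp (ℓ R2) * sin (θ R2))) = 0 := by
    rw [hθ, sin_nat_mul_pi, mul_zero, mul_zero, neg_zero]
  refine ⟨_, h.system.neumannSol hg hpq hR12 hR23 (hpos μ hμβ) hflux
    (hD μ hμβ _ _ (h.system.mono_right hR23.le)), ?_, ?_⟩
  · rw [h.system.u_left, add_sub_cancel_left, ← mul_assoc, hσ, one_mul]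
    exact hμβ.1
  · simp only [PolarSystem.eq_one_iff hσ]
    exact h.encard_cos_eq_zero hσ hpq.symm.lt hR12 hR23.le hθ

theorem exists_neumannSol_encard_eq (hp : 1 < p) (hR1 : 0 ≤ R1) (hR12 : R1 < R2)
    (hf : ContinuousOn f (Ici 0)) (hfeq : Feq f) (hfzero : Fzero p f)
    (hball : R1 = 0 → Fsubl p f ∨ Fsubc p (n + 1) f)
    (hlam : ∀ᶠ s in 𝓝[≠] 1, lam * |s - 1| ^ p < f s * (s - 1))
    (hw : NeumannEigen p n R1 R2 lam w) (hcard : {x ∈ Ioo R1 R2 | w x = 0}.encard = k)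
    (hσ : σ = 1 ∨ σ = -1) (hj : 1 ≤ j) (hjk : j ≤ k) :
    ∃ u, NeumannSol p (n + 1) R1 R2 f u ∧ 0 < σ * (u R1 - 1) ∧
      {x ∈ Ioo R1 R2 | u x = 1}.encard = j := by
  have hpq := Real.HolderConjugate.conjExponent hp
  obtain ⟨d₁, hdecay, hd₁⟩ := ((largeDataDecay (R2 := R2) hpq hR1 hf hfeq hfzero hball).and
    (eventually_gt_atTop 1)).exists
  obtain ⟨D, hD, hbound⟩ := exists_forall_radialSystem_trunc_le hpq hR12.le hf hfeq hfzero hd₁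
  have hg := admissibleNonlin_trunc hp hf hfeq hfzero (hd₁.trans_le hD)
  have hR23 : R2 < R2 + 1 := lt_add_one R2
  have hlamD : ∀ᶠ s in 𝓝[≠] 1, lam * |s - 1| ^ p < trunc f D s * (s - 1) := by
    filter_upwards [hlam, nhdsWithin_le_nhds (eventually_trunc_eq f (hd₁.trans_le hD))]
      with s hs hsD using hsD ▸ hs
  obtain ⟨m₀, hm₀, hangle⟩ := exists_forall_nat_mul_pi_lt_angle hg hpq hR12 hR23.le hlamD hw hcard
  suffices ∃ β > 0, (∀ m ∈ Ioo 0 β, 1 + σ * m ∈ Ioc 0 d₁) ∧ ∀ ℓ θ,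
      PolarSystem σ p.conjExponent n (trunc f D) R1 (R2 + 1) β ℓ θ → θ R2 < π by
    obtain ⟨β, hβ, hrange, hβπ⟩ := this
    have hσσ : σ * σ = 1 := mul_self_eq_one_iff.2 hσ
    have hmin : 0 < min m₀ β := lt_min hm₀ hβ
    exact exists_neumannSol_of_angle hg hpq hR1 hR12 hR23 hσσ hβπ (fun m hm => (hrange m hm).1)
      (fun m hm => hbound _ (Ioc_subset_Icc_self (hrange m hm))) ⟨hmin, min_le_right _ _⟩
      (hangle _ hmin (min_le_left _ _) σ hσσ) hj hjk
  rcases hσ with rfl | rfl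
  · refine ⟨d₁ - 1, sub_pos.2 hd₁, fun m hm => ⟨by linarith [hm.1], by linarith [hm.2]⟩,
      fun ℓ θ h => ?_⟩
    have hsys := h.system.mono_right hR23.le
    rw [one_mul, add_sub_cancel] at hsys
    exact h.angle_lt_pi_of_flux_neg hR12.le hR23.le (hdecay D hD _ _ hsys)
  · refine ⟨1, one_pos, fun m hm => ⟨by linarith [hm.2], by linarith [hm.1]⟩, fun ℓ θ h => ?_⟩
    exact h.angle_lt_pi_of_nonpos hR12.le hR23.le fun r hr =>
      (h.system.mono_right hR23.le).u_nonpos hg hpq (by norm_num) (Ioc_subset_Icc_self hr)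

end NeumannProblem

section Family

variable {R1 R2 : ℝ} {u v : ℝ → ℝ} {i j k : ℕ}

theorem nonConstOn_of_encard_eq_one_pos (hR12 : R1 ≤ R2) (hu : u R1 ≠ 1)
    (hcard : 0 < {x ∈ Ioo R1 R2 | u x = 1}.encard) : NonConstOn R1 R2 u := by
  obtain ⟨x, hx, hx1⟩ := encard_pos.1 hcard
  exact ⟨R1, left_mem_Icc.2 hR12, x, Ioo_subset_Icc_self hx, hx1.symm ▸ hu⟩

theorem eqOn_of_not_distinctOn (h : ¬DistinctOn R1 R2 u v) : EqOn u v (Icc R1 R2) := by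
  simpa only [DistinctOn, EqOn, not_exists, not_and, not_not] using h

theorem encard_eq_one_congr (h : EqOn u v (Icc R1 R2)) :
    {x ∈ Ioo R1 R2 | u x = 1}.encard = {x ∈ Ioo R1 R2 | v x = 1}.encard :=
  congrArg encard <| ext fun _ => and_congr_right fun hx => by rw [h (Ioo_subset_Icc_self hx)]

theorem eq_of_mod_eq_of_lt_iff_lt (hi : i < 2 * k) (hj : j < 2 * k) (hmod : i % k = j % k)
    (hlt : i < k ↔ j < k) : i = j := by
  have hdiv : ∀ a < 2 * k, a / k = if a < k then 0 else 1 := fun a ha => by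
    split_ifs with h
    · exact Nat.div_eq_of_lt h
    · exact Nat.div_eq_of_lt_le (by omega) (by omega)
  rw [← Nat.mod_add_div i k, ← Nat.mod_add_div j k, hmod, hdiv i hi, hdiv j hj]
  simp only [hlt]

end Family

theorem stmt1_general {p : ℝ} (hp : 1 < p) {N : ℕ} (hN : 1 ≤ N) {R1 R2 : ℝ} (hR1 : 0 ≤ R1)
    (hR12 : R1 < R2) {f : ℝ → ℝ} (hf : ContinuousOn f (Ici 0)) (hfeq : Feq f) (hfzero : Fzero p f)
    (hball : R1 = 0 → Fsubl p f ∨ Fsubc p N f) {lam : ℝ}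
    (hlam : ∀ᶠ s in 𝓝[≠] 1, lam * |s - 1| ^ p < f s * (s - 1)) {w : ℝ → ℝ}
    (hw : NeumannEigen p (N - 1) R1 R2 lam w) {k : ℕ}
    (hcard : {x ∈ Ioo R1 R2 | w x = 0}.encard = k) :
    ∃ u : Fin (2 * k) → ℝ → ℝ,
      (∀ j, NeumannSol p N R1 R2 f (u j)) ∧
      (∀ j, NonConstOn R1 R2 (u j)) ∧
      (∀ i j, i ≠ j → DistinctOn R1 R2 (u i) (u j)) ∧
      (∀ j : Fin (2 * k), (j : ℕ) < k → 1 < u j R1) ∧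
      (∀ j : Fin (2 * k), k ≤ (j : ℕ) → u j R1 < 1) ∧
      (∀ j : Fin (2 * k),
        {x ∈ Ioo R1 R2 | u j x = 1}.encard = (((j : ℕ) % k + 1 : ℕ) : ℕ∞)) := by
  obtain ⟨n, rfl⟩ := Nat.exists_eq_add_of_le' hN
  choose u hu hside hcross using fun j : Fin (2 * k) =>
    exists_neumannSol_encard_eq (σ := if (j : ℕ) < k then 1 else -1) (j := (j : ℕ) % k + 1)
      hp hR1 hR12 hf hfeq hfzero hball hlam hw hcard (by split_ifs <;> simp)
      (Nat.le_add_left 1 _) (Nat.mod_lt _ (by have := j.2; omega))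
  have hgt (j : Fin (2 * k)) (hj : (j : ℕ) < k) : 1 < u j R1 := by
    simpa [hj] using hside j
  have hlt (j : Fin (2 * k)) (hj : k ≤ (j : ℕ)) : u j R1 < 1 := by
    simpa [hj.not_gt] using hside j
  have hne (j : Fin (2 * k)) : u j R1 ≠ 1 :=
    (lt_or_ge (j : ℕ) k).elim (fun hj => (hgt j hj).ne') fun hj => (hlt j hj).ne
  have hlt_iff (j : Fin (2 * k)) : (j : ℕ) < k ↔ 1 < u j R1 :=
    ⟨hgt j, fun h => lt_of_not_ge fun hj => h.not_gt (hlt j hj)⟩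
  have hpos (j : Fin (2 * k)) : 0 < {x ∈ Ioo R1 R2 | u j x = 1}.encard := by
    rw [hcross j]
    exact_mod_cast Nat.succ_pos _
  refine ⟨u, hu, fun j => nonConstOn_of_encard_eq_one_pos hR12.le (hne j) (hpos j),
    fun i j hij => ?_, hgt, hlt, hcross⟩
  by_contra hcon
  have heq := eqOn_of_not_distinctOn hcon
  have hmod : (i : ℕ) % k + 1 = (j : ℕ) % k + 1 := by
    exact_mod_cast (hcross i).symm.trans ((encard_eq_one_congr heq).trans (hcross j))
  refine hij (Fin.ext (eq_of_mod_eq_of_lt_iff_lt i.2 j.2 (Nat.succ_injective hmod) ?_))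
  rw [hlt_iff, hlt_iff, heq (left_mem_Icc.2 hR12.le)]

theorem stmt1 (p : ℝ) (hp : 1 < p) (N : ℕ) (hN : 1 ≤ N)
    (R1 R2 : ℝ) (hR1 : 0 ≤ R1) (hR12 : R1 < R2)
    (f : ℝ → ℝ) (hreg : Freg f) (heq : Feq f) (h0 : Fzero p f)
    (hball : R1 = 0 → Fsubl p f ∨ Fsubc p N f)
    (C1 : EReal) (hC1pos : 0 ≤ C1)
    (hC1 : Tendsto (fun s : ℝ => ((f s / (|s - 1| ^ (p - 2) * (s - 1)) : ℝ) : EReal))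
      (𝓝[≠] (1:ℝ)) (𝓝 C1))
    (k : ℕ) (hk : 1 ≤ k)
    (lam : ℝ) (hlam0 : 0 ≤ lam) (hlamC1 : (lam : EReal) < C1)
    (w : ℝ → ℝ)
    (hw_nonzero : ∃ x ∈ Icc R1 R2, w x ≠ 0)
    (hw_diff : ∀ x ∈ Icc R1 R2, DifferentiableAt ℝ w x)
    (hw_cont : ContinuousOn (deriv w) (Icc R1 R2))
    (hw_bc1 : deriv w R1 = 0) (hw_bc2 : deriv w R2 = 0)
    (hw_vcont : ContinuousOn (fun x => x ^ (N - 1) * phip p (deriv w x)) (Icc R1 R2))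
    (hw_ode : ∀ x ∈ Ioc R1 R2,
      HasDerivAt (fun t => t ^ (N - 1) * phip p (deriv w t))
        (-(lam * x ^ (N - 1) * phip p (w x))) x)
    (hw_zeros : {x ∈ Ioo R1 R2 | w x = 0}.encard = (k : ℕ∞)) :
    ∃ u : Fin (2 * k) → ℝ → ℝ,
      (∀ j, NeumannSol p N R1 R2 f (u j)) ∧
      (∀ j, NonConstOn R1 R2 (u j)) ∧
      (∀ i j, i ≠ j → DistinctOn R1 R2 (u i) (u j)) ∧
      (∀ j : Fin (2 * k), (j : ℕ) < k → 1 < u j R1) ∧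
      (∀ j : Fin (2 * k), k ≤ (j : ℕ) → u j R1 < 1) ∧
      (∀ j : Fin (2 * k),
        {x ∈ Ioo R1 R2 | u j x = 1}.encard = (((j : ℕ) % k + 1 : ℕ) : ℕ∞)) := by
  exact stmt1_general hp hN hR1 hR12 hreg.1 heq h0 hball
    (eventually_lt_mul_of_tendsto hp hC1 hlamC1)
    ⟨hw_diff, hw_bc1, hw_bc2, hw_vcont, hw_ode⟩ hw_zeros
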